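/- Let Q be an extended Dynkin quiver with minimal positive imaginary root δ, let λ ∈ K^I satisfy λ·δ = 0, and let 0 be an extending vertex (so δ_0 = 1). Then the ring of invariants K[μ_δ^{-1}(λ)]^{G(δ)} is generated, as a K-algebra, by the trace functions tr_p for oriented cycles p in Q̄ which start and end at the vertex 0. -/

import Mathlib

open scoped BigOperators

noncomputable section

/-- A quiver with a finite vertex set `I` and a finite arrow set `A`;
`h a` and `t a` are the head and the tail of the arrow `a`. -/
structure FinQuiver where
  I : Type
  [fintypeI : Fintype I]
  [decEqI : DecidableEq I]
  A : Type
  [fintypeA : Fintype A]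
  h : A → I
  t : A → I

attribute [instance] FinQuiver.fintypeI FinQuiver.decEqI FinQuiver.fintypeA

namespace FinQuiver

variable (Q : FinQuiver)

/-- Arrows of the double quiver `Q̄` : every arrow `a : i → j` of `Q` (as `Sum.inl a`)
together with a reverse arrow `a* : j → i` (as `Sum.inr a`). -/
@[reducible] def DA : Type := Q.A ⊕ Q.A

instance : Fintype Q.DA := inferInstanceAs (Fintype (Q.A ⊕ Q.A))

/-- Head of an arrow of the double quiver. -/
@[reducible] def dh : Q.DA → Q.I := fun a => match a with
  | Sum.inl a => Q.h a
  | Sum.inr a => Q.t a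

/-- Tail of an arrow of the double quiver. -/
@[reducible] def dt : Q.DA → Q.I := fun a => match a with
  | Sum.inl a => Q.t a
  | Sum.inr a => Q.h a

/-- The symmetric bilinear form
`(α,β) = ∑_{i∈I} 2 α_i β_i − ∑_{a∈Q̄} α_{h(a)} β_{t(a)}` on `ℤ^I`. -/
def bil (α β : Q.I → ℤ) : ℤ :=
  (∑ i, 2 * α i * β i) - ∑ a : Q.DA, α (Q.dh a) * β (Q.dt a)

/-- `p(α) = 1 − q(α) = 1 − α·α + ∑_{a ∈ Q} α_{t(a)} α_{h(a)}`. -/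
def pp (α : Q.I → ℤ) : ℤ :=
  1 - (∑ i, α i * α i) + ∑ a : Q.A, α (Q.t a) * α (Q.h a)

/-- The coordinate vector `ε_i` at a vertex `i`. -/
def ev (i : Q.I) : Q.I → ℤ := fun j => if j = i then 1 else 0

/-- The coordinate vector of a vertex, as a vector of natural numbers. -/
def evN (i : Q.I) : Q.I → ℕ := fun j => if j = i then 1 else 0

/-- A vertex is loopfree if no arrow has both its head and its tail there. -/
def Loopfree (i : Q.I) : Prop := ∀ a : Q.A, ¬ (Q.h a = i ∧ Q.t a = i)

/-- The reflection `s_i(α) = α − (α,ε_i) ε_i` at a (loopfree) vertex `i`. -/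
def refl (i : Q.I) (α : Q.I → ℤ) : Q.I → ℤ := α - Q.bil α (Q.ev i) • Q.ev i

/-- Two vertices are joined by some arrow. -/
def Adj (i j : Q.I) : Prop :=
  ∃ a : Q.A, (Q.h a = i ∧ Q.t a = j) ∨ (Q.h a = j ∧ Q.t a = i)

/-- The quiver is connected. -/
def Connected : Prop := ∀ i j : Q.I, Relation.ReflTransGen Q.Adj i j

/-- The support of the vector `α` is connected in `Q`. -/
def SuppConnected (α : Q.I → ℤ) : Prop :=
  ∀ i j : Q.I, α i ≠ 0 → α j ≠ 0 →
    Relation.ReflTransGen (fun x y => α x ≠ 0 ∧ α y ≠ 0 ∧ Q.Adj x y) i j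

/-- The fundamental region: nonzero nonnegative vectors with connected support
such that `(α, ε_i) ≤ 0` for every vertex `i`. -/
def InFund (α : Q.I → ℤ) : Prop :=
  α ≠ 0 ∧ (∀ i, 0 ≤ α i) ∧ Q.SuppConnected α ∧ ∀ i, Q.bil α (Q.ev i) ≤ 0

/-- The roots of the Kac root system attached to `Q` : the real roots form the orbit
of the simple roots (coordinate vectors at loopfree vertices) under the reflections at
loopfree vertices, and the imaginary roots form the orbit of `±(fundamental region)`
under these reflections. -/
inductive IsRoot : (Q.I → ℤ) → Prop
  | simple (i : Q.I) (hi : Q.Loopfree i) : IsRoot (Q.ev i)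
  | fund (α : Q.I → ℤ) (hα : Q.InFund α) : IsRoot α
  | neg_fund (α : Q.I → ℤ) (hα : Q.InFund α) : IsRoot (-α)
  | reflect (i : Q.I) (hi : Q.Loopfree i) (α : Q.I → ℤ) (hα : IsRoot α) :
      IsRoot (Q.refl i α)

/-- Positive roots: roots all of whose components are nonnegative. -/
def IsPosRoot (α : Q.I → ℤ) : Prop := Q.IsRoot α ∧ (∀ i, 0 ≤ α i) ∧ α ≠ 0

/-- The Tits form is positive semidefinite. -/
def PosSemidef : Prop := ∀ α : Q.I → ℤ, 0 ≤ Q.bil α α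

/-- The Tits form is positive definite. -/
def PosDef : Prop := Q.PosSemidef ∧ ∀ α : Q.I → ℤ, Q.bil α α = 0 → α = 0

/-- Dynkin quivers: connected, with positive definite Tits form. -/
def IsDynkin : Prop := Q.Connected ∧ Q.PosDef

/-- Extended Dynkin quivers: connected, with positive semidefinite but not
positive definite Tits form. -/
def IsExtDynkin : Prop := Q.Connected ∧ Q.PosSemidef ∧ ¬ Q.PosDef

/-- `δ` is the minimal positive imaginary root of an extended Dynkin quiver:
the minimal nonzero nonnegative vector in the radical of the Tits form. -/
def IsMinImag (δ : Q.I → ℤ) : Prop :=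
  (∀ i, 0 ≤ δ i) ∧ δ ≠ 0 ∧ (∀ i, Q.bil δ (Q.ev i) = 0) ∧
    ∀ β : Q.I → ℤ, (∀ i, 0 ≤ β i) → β ≠ 0 → (∀ i, Q.bil β (Q.ev i) = 0) →
      ∀ i, δ i ≤ β i

/-- The subquiver of `Q` on a subset `S` of vertices and a subset `B` of arrows. -/
def restrict (S : Set Q.I) (B : Set Q.A) (hh : ∀ a ∈ B, Q.h a ∈ S)
    (ht : ∀ a ∈ B, Q.t a ∈ S) : FinQuiver :=
  { I := S
    fintypeI := Fintype.ofFinite S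
    decEqI := Classical.decEq _
    A := B
    fintypeA := Fintype.ofFinite B
    h := fun a => ⟨Q.h a.1, hh a.1 a.2⟩
    t := fun a => ⟨Q.t a.1, ht a.1 a.2⟩ }

/-- The support quiver of a vector: the full subquiver on the support of `β`. -/
def suppQuiver (β : Q.I → ℤ) : FinQuiver :=
  Q.restrict {i | β i ≠ 0} {a | β (Q.h a) ≠ 0 ∧ β (Q.t a) ≠ 0}
    (fun _ ha => ha.1) (fun _ ha => ha.2)

/-- A dimension vector (of natural numbers), viewed in `ℤ^I`. -/
def toZ (α : Q.I → ℕ) : Q.I → ℤ := fun i => (α i : ℤ)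

/-- An oriented cycle in the double quiver `Q̄`, consisting of `n+1` arrows,
the tail of each arrow being the head of the (cyclically) next one. -/
structure Cyc (Q' : FinQuiver) where
  n : ℕ
  ar : Fin (n + 1) → Q'.DA
  compat : ∀ i : Fin (n + 1), Q'.dt (ar i) = Q'.dh (ar (i + 1))

section WithField

variable (K : Type) [Field K]

/-- `λ·α = ∑_i λ_i α_i`. -/
def pair (l : Q.I → K) (α : Q.I → ℤ) : K := ∑ i, l i * (α i : K)

/-- `R_λ^+`, the set of positive roots `α` with `λ·α = 0`. -/
def Rplus (l : Q.I → K) : Set (Q.I → ℤ) :=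
  {α | Q.IsPosRoot α ∧ Q.pair K l α = 0}

/-- `ℕ R_λ^+`, the set of sums (including the empty sum `0`) of elements of `R_λ^+`. -/
def NRplus (l : Q.I → K) : Set (Q.I → ℤ) :=
  (AddSubmonoid.closure (Q.Rplus K l) : AddSubmonoid (Q.I → ℤ))

/-- `Σ_λ` : the elements `α ∈ R_λ^+` with `p(α) > ∑ p(β⁽ᵗ⁾)` for every decomposition
of `α` as a sum of at least two elements `β⁽ᵗ⁾` of `R_λ^+`. -/
def SigmaSet (l : Q.I → K) : Set (Q.I → ℤ) :=
  {α | α ∈ Q.Rplus K l ∧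
    ∀ (n : ℕ) (β : Fin n → (Q.I → ℤ)), 2 ≤ n → (∀ j, β j ∈ Q.Rplus K l) →
      α = ∑ j, β j → (∑ j, Q.pp (β j)) < Q.pp α}

/-- The dual reflection `r_i(λ)_j = λ_j − (ε_i,ε_j) λ_i`. -/
def coRefl (i : Q.I) (l : Q.I → K) : Q.I → K :=
  fun j => l j - (Q.bil (Q.ev i) (Q.ev j) : ℤ) * l i

/-- A single admissible reflection applied to the pair `(λ, α)`:
a reflection at a loopfree vertex `i` with `λ_i ≠ 0`. -/
def AdmStep (x y : (Q.I → K) × (Q.I → ℤ)) : Prop :=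
  ∃ i : Q.I, Q.Loopfree i ∧ x.1 i ≠ 0 ∧ y.1 = Q.coRefl K i x.1 ∧ y.2 = Q.refl i x.2

/-- `(ν,β)` is obtained from `(λ,α)` by a sequence of admissible reflections:
the two pairs lie in the same class of the equivalence relation generated by
admissible reflections. -/
def AdmEquiv (x y : (Q.I → K) × (Q.I → ℤ)) : Prop :=
  Relation.EqvGen (Q.AdmStep K) x y

/-- The space `Rep(Q̄,α)` of representations of the double quiver. -/
def Rep (α : Q.I → ℕ) : Type :=
  ∀ a : Q.DA, Matrix (Fin (α (Q.dh a))) (Fin (α (Q.dt a))) K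

/-- The moment map
`μ_α(x)_i = ∑_{a∈Q, h(a)=i} x_a x_{a*} − ∑_{a∈Q, t(a)=i} x_{a*} x_a`. -/
def moment (α : Q.I → ℕ) (x : Q.Rep K α) (i : Q.I) :
    Matrix (Fin (α i)) (Fin (α i)) K :=
  (∑ a : Q.A, if h : Q.h a = i then
      (x (Sum.inl a) * x (Sum.inr a)).submatrix
        (Fin.cast (congrArg α h).symm) (Fin.cast (congrArg α h).symm)
    else 0)
  - ∑ a : Q.A, if h : Q.t a = i then
      (x (Sum.inr a) * x (Sum.inl a)).submatrix
        (Fin.cast (congrArg α h).symm) (Fin.cast (congrArg α h).symm)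
    else 0

/-- The fibre `μ_α^{-1}(λ)` of the moment map over (the central element
corresponding to) `λ`. -/
def MomentFiber (l : Q.I → K) (α : Q.I → ℕ) : Set (Q.Rep K α) :=
  {x | ∀ i : Q.I, Q.moment K α x i = l i • (1 : Matrix (Fin (α i)) (Fin (α i)) K)}

/-- The group `∏_i GL(α_i,K)`; it acts on `Rep(Q̄,α)` by conjugation, with the same
orbits and the same invariant functions as `G(α) = (∏_i GL(α_i,K))/K^*`. -/
def Gl (α : Q.I → ℕ) : Type := ∀ i : Q.I, Matrix.GeneralLinearGroup (Fin (α i)) K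

/-- The conjugation action of `∏_i GL(α_i,K)` on `Rep(Q̄,α)`. -/
def glAct (α : Q.I → ℕ) (g : Q.Gl K α) (x : Q.Rep K α) : Q.Rep K α :=
  fun a => (g (Q.dh a) : Matrix (Fin (α (Q.dh a))) (Fin (α (Q.dh a))) K) * x a *
    (((g (Q.dt a))⁻¹ : Matrix.GeneralLinearGroup (Fin (α (Q.dt a))) K) :
      Matrix (Fin (α (Q.dt a))) (Fin (α (Q.dt a))) K)

/-- Coordinates on `Rep(Q̄,α)`: matrix entries. -/
def Coords (α : Q.I → ℕ) : Type :=
  Σ a : Q.DA, Fin (α (Q.dh a)) × Fin (α (Q.dt a))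

/-- The coordinate ring `K[V]` of a subset `V` of `Rep(Q̄,α)` : the algebra of
`K`-valued functions on `V` which are restrictions of polynomial functions. -/
def fnRing (α : Q.I → ℕ) (V : Set (Q.Rep K α)) : Subalgebra K (↥V → K) :=
  (MvPolynomial.aeval
    (fun c : Q.Coords α => fun v : ↥V => v.1 c.1 c.2.1 c.2.2) :
    MvPolynomial (Q.Coords α) K →ₐ[K] (↥V → K)).range

end WithField

end FinQuiver

/-- The subalgebra of functions invariant under a relation (e.g. the orbit
relation of a group action). -/
def relInv (K : Type) [Field K] {V : Type} (R : V → V → Prop) :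
    Subalgebra K (V → K) where
  carrier := {f | ∀ x y : V, R x y → f x = f y}
  mul_mem' := by
    intro f g hf hg x y hxy
    simp only [Pi.mul_apply, hf x y hxy, hg x y hxy]
  one_mem' := fun x y _ => rfl
  add_mem' := by
    intro f g hf hg x y hxy
    simp only [Pi.add_apply, hf x y hxy, hg x y hxy]
  zero_mem' := fun x y _ => rfl
  algebraMap_mem' := fun c x y _ => rfl

namespace FinQuiver

variable (Q : FinQuiver) (K : Type) [Field K]

/-- The coordinate ring of the Marsden–Weinstein reduction
`N(λ,α) = μ_α^{-1}(λ) ⫽ G(α)` : the `G(α)`-invariant functions in the coordinate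
ring of `μ_α^{-1}(λ)`.  Two such reductions are isomorphic as (affine) varieties
exactly when these `K`-algebras are isomorphic. -/
def InvRing (l : Q.I → K) (α : Q.I → ℕ) :
    Subalgebra K (↥(Q.MomentFiber K l α) → K) :=
  Q.fnRing K α (Q.MomentFiber K l α) ⊓
    relInv K (fun x y : ↥(Q.MomentFiber K l α) =>
      ∃ g : Q.Gl K α, y.1 = Q.glAct K α g x.1)

/-- Index type for a product `∏_t X_t^{m_t}`. -/
@[reducible] def SymIdx (s : ℕ) (m : Fin s → ℕ) : Type := Σ t : Fin s, Fin (m t)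

/-- The product `∏_{t} Rep(Q̄, d_t)^{m_t}` of representation spaces. -/
def SymRep (s : ℕ) (m : Fin s → ℕ) (d : Fin s → (Q.I → ℕ)) : Type :=
  ∀ p : SymIdx s m, Q.Rep K (d p.1)

/-- The product `∏_t μ_{d_t}^{-1}(λ)^{m_t}` of moment map fibres. -/
def SymFiber (s : ℕ) (m : Fin s → ℕ) (d : Fin s → (Q.I → ℕ)) (l : Q.I → K) :
    Set (Q.SymRep K s m d) :=
  {x | ∀ p : SymIdx s m, x p ∈ Q.MomentFiber K l (d p.1)}

/-- Polynomial functions on the product of fibres. -/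
def symFnRing (s : ℕ) (m : Fin s → ℕ) (d : Fin s → (Q.I → ℕ)) (l : Q.I → K) :
    Subalgebra K (↥(Q.SymFiber K s m d l) → K) :=
  (MvPolynomial.aeval
    (fun c : Σ p : SymIdx s m, Q.Coords (d p.1) =>
      fun v : ↥(Q.SymFiber K s m d l) => v.1 c.1 c.2.1 c.2.2.1 c.2.2.2) :
    MvPolynomial (Σ p : SymIdx s m, Q.Coords (d p.1)) K →ₐ[K]
      (↥(Q.SymFiber K s m d l) → K)).range

/-- The componentwise action of the product of the groups `∏ GL(d_t)^{m_t}`. -/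
def symGlAct (s : ℕ) (m : Fin s → ℕ) (d : Fin s → (Q.I → ℕ))
    (g : ∀ p : SymIdx s m, Q.Gl K (d p.1)) (x : Q.SymRep K s m d) :
    Q.SymRep K s m d :=
  fun p => Q.glAct K (d p.1) (g p) (x p)

/-- The action of `∏_t S_{m_t}` permuting the factors of each `X_t^{m_t}`. -/
def symPermAct (s : ℕ) (m : Fin s → ℕ) (d : Fin s → (Q.I → ℕ))
    (π : ∀ t : Fin s, Equiv.Perm (Fin (m t))) (x : Q.SymRep K s m d) :
    Q.SymRep K s m d :=
  fun p => x ⟨p.1, π p.1 p.2⟩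

/-- The coordinate ring of the product of symmetric products
`∏_t S^{m_t} N(λ, d_t)` of Marsden–Weinstein reductions: functions on
`∏_t μ_{d_t}^{-1}(λ)^{m_t}` which are polynomial, invariant under all the groups
`G(d_t)` acting on the separate factors, and symmetric under permutations of the
`m_t` factors of each type `t`. -/
def SymInvRing (s : ℕ) (m : Fin s → ℕ) (d : Fin s → (Q.I → ℕ)) (l : Q.I → K) :
    Subalgebra K (↥(Q.SymFiber K s m d l) → K) :=
  Q.symFnRing K s m d l ⊓
    relInv K (fun x y : ↥(Q.SymFiber K s m d l) =>
      ∃ g : ∀ p : SymIdx s m, Q.Gl K (d p.1), y.1 = Q.symGlAct K s m d g x.1) ⊓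
    relInv K (fun x y : ↥(Q.SymFiber K s m d l) =>
      ∃ π : ∀ t : Fin s, Equiv.Perm (Fin (m t)), y.1 = Q.symPermAct K s m d π x.1)

/-- The trace function `tr_p` of an oriented cycle `p` in `Q̄` :
`tr_p(x) = tr(x_{a_1} ⋯ x_{a_ℓ})`, written out via matrix entries. -/
def cycTr (α : Q.I → ℕ) (p : Q.Cyc) (x : Q.Rep K α) : K :=
  ∑ c : ∀ i : Fin (p.n + 1), Fin (α (Q.dh (p.ar i))),
    ∏ i : Fin (p.n + 1),
      x (p.ar i) (c i) (Fin.cast (congrArg α (p.compat i)).symm (c (i + 1)))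

/-- `U` is a subrepresentation of the `Π^λ`-module given by the point
`x ∈ Rep(Q̄,α)` : a collection of subspaces stable under all the maps `x_a`. -/
def SubRep (α : Q.I → ℕ) (x : Q.Rep K α)
    (U : ∀ i : Q.I, Submodule K (Fin (α i) → K)) : Prop :=
  ∀ a : Q.DA, ∀ v ∈ U (Q.dt a), (x a).mulVec v ∈ U (Q.dh a)

/-- The module given by `x` has the simple module `S_{i₀}` (dimension vector
`ε_{i₀}`, all arrows acting as zero) as a composition factor: it has a subquotient
of dimension vector `ε_{i₀}` on which all arrows act as zero. -/
def HasSFactor (α : Q.I → ℕ) (i0 : Q.I) (x : Q.Rep K α) : Prop :=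
  ∃ U W : ∀ i : Q.I, Submodule K (Fin (α i) → K),
    Q.SubRep K α x U ∧ Q.SubRep K α x W ∧ (∀ i, U i ≤ W i) ∧
    (∀ i, Module.finrank K (W i) =
      Module.finrank K (U i) + (if i = i0 then 1 else 0)) ∧
    (∀ a : Q.DA, Q.dh a = i0 → Q.dt a = i0 →
      ∀ v ∈ W (Q.dt a), (x a).mulVec v ∈ U (Q.dh a))

/-- `W/U` is a simple subquotient of the module given by `x`; the simple
subquotients of a module are, up to isomorphism, exactly its composition factors. -/
def SimpleSubquot (α : Q.I → ℕ) (x : Q.Rep K α)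
    (U W : ∀ i : Q.I, Submodule K (Fin (α i) → K)) : Prop :=
  Q.SubRep K α x U ∧ Q.SubRep K α x W ∧ (∀ i, U i ≤ W i) ∧ U ≠ W ∧
    ∀ V : ∀ i : Q.I, Submodule K (Fin (α i) → K),
      Q.SubRep K α x V → (∀ i, U i ≤ V i) → (∀ i, V i ≤ W i) → V = U ∨ V = W

/-- The direct sum map `∏_{j=1}^m Rep(Q̄,δ) → Rep(Q̄,mδ)` (block diagonal). -/
def dsMap (δ : Q.I → ℕ) (m : ℕ) (y : Fin m → Q.Rep K δ) :
    Q.Rep K (fun i => m * δ i) :=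
  fun a => Matrix.of fun r c =>
    if (finProdFinEquiv.symm r).1 = (finProdFinEquiv.symm c).1 then
      y (finProdFinEquiv.symm r).1 a (finProdFinEquiv.symm r).2
        (finProdFinEquiv.symm c).2
    else 0

end FinQuiver



namespace NCRed

abbrev Wd := List Bool
abbrev Po := List (ℤ × Wd)

def addT (c : ℤ) (w : Wd) : Po → Po
  | [] => [(c, w)]
  | (d, v) :: t => if v = w then (d + c, v) :: t else (d, v) :: addT c w t

def merge : Po → Po
  | [] => []
  | (c, w) :: t => addT c w (merge t)

def isZ (p : Po) : Bool := (merge p).all (fun t => t.1 == 0)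

def matchPre : Wd → Wd → Option Wd
  | [], w => some w
  | _ :: _, [] => none
  | a :: l, b :: w => if a = b then matchPre l w else none

def rmul (p : Po) (v : Wd) : Po := p.map (fun t => (t.1, t.2 ++ v))
def lmul (u : Wd) (p : Po) : Po := p.map (fun t => (t.1, u ++ t.2))
def smulP (c : ℤ) (p : Po) : Po := p.map (fun t => (c * t.1, t.2))

def redHead : List (Wd × Po) → Wd → Option Po
  | [], _ => none
  | r :: rs, w => match matchPre r.1 w with
    | some v => some (rmul r.2 v)
    | none => redHead rs w

def red1 (rs : List (Wd × Po)) : Wd → Option Po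
  | [] => none
  | g :: w => match redHead rs (g :: w) with
    | some p => some p
    | none => match red1 rs w with
      | some p => some (lmul [g] p)
      | none => none

def pass (rs : List (Wd × Po)) : Po → Po
  | [] => []
  | (c, w) :: t => (match red1 rs w with
    | some p => smulP c p
    | none => [(c, w)]) ++ pass rs t

def iter (rs : List (Wd × Po)) : ℕ → Po → Po
  | 0, p => p
  | n + 1, p => iter rs n ((merge (pass rs p)).filter (fun t => t.1 != 0))

def rot : Wd → Wd
  | [] => []
  | g :: w => w ++ [g]

section eval
variable {B : Type*} [Ring B] (x y : B)

def evW (w : Wd) : B := (w.map (fun b => if b then x else y)).prod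
def ev (p : Po) : B := (p.map (fun t => t.1 • evW x y t.2)).sum

@[simp] lemma evW_append (u v : Wd) : evW x y (u ++ v) = evW x y u * evW x y v := by
  simp [evW]
@[simp] lemma ev_nil : ev x y [] = 0 := rfl
@[simp] lemma ev_cons (t : ℤ × Wd) (p : Po) : ev x y (t :: p) = t.1 • evW x y t.2 + ev x y p := by
  simp [ev]
@[simp] lemma ev_append (p q : Po) : ev x y (p ++ q) = ev x y p + ev x y q := by
  simp [ev]
lemma ev_addT (c : ℤ) (w : Wd) (p : Po) : ev x y (addT c w p) = c • evW x y w + ev x y p := by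
  induction p with
  | nil => simp [addT]
  | cons t p ih =>
    obtain ⟨d, v⟩ := t
    simp only [addT]
    split_ifs with h
    · subst h; simp [add_smul]; abel
    · simp [ih]; abel
lemma ev_merge (p : Po) : ev x y (merge p) = ev x y p := by
  induction p with
  | nil => rfl
  | cons t p ih => obtain ⟨d, v⟩ := t; simp [merge, ev_addT, ih]
lemma ev_filter (p : Po) : ev x y (p.filter (fun t => t.1 != 0)) = ev x y p := by
  induction p with
  | nil => rfl
  | cons t p ih =>
    rw [List.filter_cons]
    split_ifs with h
    · simp [ih]
    · simp at h; simp [ih, h]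
lemma ev_isZ {p : Po} (h : isZ p = true) : ev x y p = 0 := by
  rw [← ev_merge]
  unfold isZ at h
  generalize merge p = q at h
  induction q with
  | nil => rfl
  | cons t p ih =>
    simp only [List.all_cons, Bool.and_eq_true, beq_iff_eq] at h
    simp [ih h.2, h.1]
@[simp] lemma ev_rmul (p : Po) (v : Wd) : ev x y (rmul p v) = ev x y p * evW x y v := by
  induction p with
  | nil => simp [rmul]
  | cons t p ih => simp only [rmul, List.map_cons, ev_cons] at *; rw [ih, evW_append, add_mul, smul_mul_assoc]
@[simp] lemma ev_lmul (p : Po) (v : Wd) : ev x y (lmul v p) = evW x y v * ev x y p := by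
  induction p with
  | nil => simp [lmul]
  | cons t p ih => simp only [lmul, List.map_cons, ev_cons] at *; rw [ih, evW_append, mul_add, mul_smul_comm]
@[simp] lemma ev_smulP (p : Po) (c : ℤ) : ev x y (smulP c p) = c • ev x y p := by
  induction p with
  | nil => simp [smulP]
  | cons t p ih =>
    simp only [smulP, List.map_cons, ev_cons] at *; rw [ih]; simp [mul_assoc]
lemma matchPre_eq {l w v : Wd} (h : matchPre l w = some v) : w = l ++ v := by
  induction l generalizing w with
  | nil => simp [matchPre] at h; simp [h]
  | cons a l ih =>
    cases w with
    | nil => simp [matchPre] at h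
    | cons b w =>
      simp only [matchPre] at h
      split_ifs at h with hab
      subst hab; rw [ih h]; rfl

variable {rs : List (Wd × Po)} (hr : ∀ r ∈ rs, evW x y r.1 = ev x y r.2)
include hr

lemma ev_redHead {w : Wd} {p : Po} (h : redHead rs w = some p) : ev x y p = evW x y w := by
  induction rs with
  | nil => simp [redHead] at h
  | cons r rs ih =>
    simp only [redHead] at h
    split at h
    · rename_i v hv
      rw [matchPre_eq hv]; simp at h; subst h; simp [hr r (by simp)]
    · exact ih (fun r h => hr r (by simp [h])) h

lemma ev_red1 {w : Wd} {p : Po} (h : red1 rs w = some p) : ev x y p = evW x y w := by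
  induction w generalizing p with
  | nil => simp [red1] at h
  | cons g w ih =>
    simp only [red1] at h
    split at h
    · rename_i q hq
      simp at h; subst h; exact ev_redHead x y hr hq
    · split at h
      · rename_i q hq
        simp at h; subst h; rw [ev_lmul, ih hq, ← evW_append]; rfl
      · simp at h

lemma ev_pass (p : Po) : ev x y (pass rs p) = ev x y p := by
  induction p with
  | nil => rfl
  | cons t p ih =>
    obtain ⟨c, w⟩ := t
    simp only [pass]
    split
    · rename_i q hq
      simp [ih, ev_red1 x y hr hq]
    · simp [ih]

lemma ev_iter (n : ℕ) (p : Po) : ev x y (iter rs n p) = ev x y p := by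
  induction n generalizing p with
  | zero => rfl
  | succ n ih => rw [iter, ih, ev_filter, ev_merge, ev_pass x y hr]

/-- Derive a new rule from an overlap of two rules. -/
lemma newRule (r1 r2 : Wd × Po) (h1 : r1 ∈ rs) (h2 : r2 ∈ rs) (u v : Wd) (s : ℤ) (r : Wd × Po)
    (n : ℕ) (e : r1.1 ++ v = u ++ r2.1)
    (h : isZ (iter rs n (smulP s (rmul r1.2 v ++ smulP (-1) (lmul u r2.2)) ++ (1, r.1) ::
      smulP (-1) r.2)) = true) :
    evW x y r.1 = ev x y r.2 := by
  have := ev_isZ x y h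
  rw [ev_iter x y hr] at this
  have e' := congrArg (evW x y) e
  simp only [evW_append, hr _ h1, hr _ h2] at e'
  simp only [ev_append, ev_smulP, ev_rmul, ev_lmul, ev_cons] at this
  rw [e'] at this
  simp at this
  exact add_neg_eq_zero.mp this

def relP (cs : List (ℤ × Wd)) : Po :=
  match cs with
  | [] => []
  | (c, w) :: t => (c, w) :: (-c, rot w) :: relP t
def zerP (Zs : List Po) (cs : List (ℤ × ℕ)) : Po :=
  match cs with
  | [] => []
  | (c, i) :: t => smulP c (Zs.getD i []) ++ zerP Zs t

def chkClosed (rs : List (Wd × Po)) (n : ℕ) (N : List Wd) : Bool :=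
  N.contains [true] && N.contains [false] && N.all (fun w =>
    [true, false].all (fun g => (iter rs n [(1, w ++ [g])]).all (fun t => N.contains t.2)))

abbrev Cert := Wd × ℤ × List (ℤ × Wd) × List (ℤ × ℕ)

def chkCert (rs : List (Wd × Po)) (n : ℕ) (Zs : List Po) (C : Cert) : Bool :=
  C.2.1 != 0 && isZ (iter rs n ((-C.2.1, C.1) :: relP C.2.2.1 ++ zerP Zs C.2.2.2))

lemma closed_mem (n : ℕ) (N : List Wd) (h : chkClosed rs n N = true) (w : Wd) (hw : w ≠ []) :
    evW x y w ∈ AddSubgroup.closure {b | ∃ v ∈ N, b = evW x y v} := by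
  simp only [chkClosed, Bool.and_eq_true, List.contains_iff_mem, List.all_eq_true] at h
  obtain ⟨⟨h1, h2⟩, h3⟩ := h
  have key : ∀ v ∈ N, ∀ g : Bool, evW x y (v ++ [g]) ∈
      AddSubgroup.closure {b | ∃ v ∈ N, b = evW x y v} := by
    intro v hv g
    have hg := h3 v hv g (by cases g <;> simp)
    have e : ev x y (iter rs n [(1, v ++ [g])]) = evW x y (v ++ [g]) := by
      rw [ev_iter x y hr]; simp [-evW_append]
    rw [← e]
    generalize iter rs n [(1, v ++ [g])] = q at hg
    clear e
    induction q with
    | nil => simp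
    | cons t q ih =>
      rw [ev_cons]
      refine add_mem ?_ (ih fun z hz => hg z (by simp [hz]))
      exact zsmul_mem (AddSubgroup.subset_closure (by exact ⟨t.2, hg t (by simp), rfl⟩)) _
  induction w using List.reverseRecOn with
  | nil => exact absurd rfl hw
  | append_singleton w g ih =>
    by_cases hw' : w = []
    · subst hw'
      refine AddSubgroup.subset_closure ⟨[g], ?_, rfl⟩
      cases g <;> assumption
    · have := ih hw'
      rw [evW_append]
      generalize evW x y w = a0 at this
      induction this using AddSubgroup.closure_induction with
      | mem a ha => obtain ⟨v, hv, rfl⟩ := ha; rw [← evW_append]; exact key v hv g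
      | zero => simp
      | add a b _ _ ha hb => rw [add_mul]; exact add_mem ha hb
      | neg a _ ha => rw [neg_mul]; exact neg_mem ha

omit hr in
lemma f_relP {K : Type*} [Field K] (f : B →+ K) (hf : ∀ a b, f (a * b) = f (b * a))
    (cs : List (ℤ × Wd)) : f (ev x y (relP cs)) = 0 := by
  have hrot : ∀ w : Wd, f (evW x y (rot w)) = f (evW x y w) := by
    intro w
    cases w with
    | nil => rfl
    | cons g w => rw [rot, evW_append, hf, ← evW_append]; rfl
  induction cs with
  | nil => simp [relP]
  | cons t cs ih => simp [relP, ih, hrot, -zsmul_eq_mul]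

theorem trace_zero {K : Type*} [Field K] [CharZero K] (f : B →+ K)
    (hf : ∀ a b, f (a * b) = f (b * a)) (n : ℕ) (N : List Wd) (h : chkClosed rs n N = true)
    (Zs : List Po) (hZ : ∀ z ∈ Zs, f (ev x y z) = 0)
    (C : List Cert) (hC : C.all (chkCert rs n Zs) = true)
    (hN : N.all (fun w => (C.map (·.1)).contains w) = true)
    (w : Wd) (hw : w ≠ []) : f (evW x y w) = 0 := by
  have hz : ∀ cs, f (ev x y (zerP Zs cs)) = 0 := by
    intro cs
    induction cs with
    | nil => simp [zerP]
    | cons t cs ih =>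
      have : f (ev x y (Zs.getD t.2 [])) = 0 := by
        by_cases ht : t.2 < Zs.length
        · rw [List.getD_eq_getElem _ _ ht]; exact hZ _ (List.getElem_mem ht)
        · rw [List.getD_eq_default _ _ (by omega)]; simp
      simp [zerP, ih, this, -zsmul_eq_mul, -List.getD_eq_getElem?_getD]
  have hc : ∀ c ∈ C, f (evW x y c.1) = 0 := by
    intro c hc
    rw [List.all_eq_true] at hC
    have := hC c hc
    simp only [chkCert, Bool.and_eq_true, bne_iff_ne] at this
    obtain ⟨h0, h1⟩ := this
    have h2 := ev_isZ x y h1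
    rw [ev_iter x y hr] at h2
    have h3 := congrArg f h2
    simp [f_relP x y f hf, hz, -zsmul_eq_mul] at h3
    exact (h3.resolve_right h0)
  have hn : ∀ v ∈ N, f (evW x y v) = 0 := by
    intro v hv
    rw [List.all_eq_true] at hN
    have := hN v hv
    simp only [List.contains_iff_mem, List.mem_map] at this
    obtain ⟨c, hcC, rfl⟩ := this
    exact hc c hcC
  have := closed_mem x y hr n N h w hw
  generalize evW x y w = a0 at this
  induction this using AddSubgroup.closure_induction with
  | mem a ha => obtain ⟨v, hv, rfl⟩ := ha; exact hn v hv
  | zero => simp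
  | add a b _ _ ha hb => simp [ha, hb]
  | neg a _ ha => simp [ha]

end eval
end NCRed


namespace NCRed

/-- decode a word: digit 1 is the first letter, digit 2 the second one. -/
def wdAux : ℕ → ℕ → Wd → Wd
  | 0, _, acc => acc
  | k + 1, n, acc => if n = 0 then acc else wdAux k (n / 10) ((n % 10 == 1) :: acc)
def wd (n : ℕ) : Wd := wdAux 20 n []

def mkPo (l : List (ℤ × ℕ)) : Po := l.map (fun t => (t.1, wd t.2))
def mkRule (w : ℕ) (l : List (ℤ × ℕ)) : Wd × Po := (wd w, mkPo l)
def mkCert (w : ℕ) (d : ℤ) (l : List (ℤ × ℕ)) (m : List (ℤ × ℕ)) : Cert := (wd w, d, mkPo l, m)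

def zs : List Po := [mkPo [(1, 1)], mkPo [(1, 2)], mkPo [(1, 22)], mkPo [(1, 1), (1, 2)], mkPo
    [(1, 11), (1, 12), (1, 21), (1, 22)], mkPo [(1, 111), (1, 112), (1, 121), (1, 122), (1, 211),
    (1, 212), (1, 221), (1, 222)], mkPo [(1, 1111), (1, 1112), (1, 1121), (1, 1122), (1, 1211),
    (1, 1212), (1, 1221), (1, 1222), (1, 2111), (1, 2112), (1, 2121), (1, 2122), (1, 2211), (1,
    2212), (1, 2221), (1, 2222)]]
def rl30 : Wd × Po := mkRule 11 []
def rl31 : Wd × Po := mkRule 222 []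
def rl32 : Wd × Po := mkRule 121 [(-1, 122), (-1, 212), (-1, 221)]
def rl33 : Wd × Po := mkRule 1221 [(1, 2122), (1, 2212)]
def crt3 : List Cert := [mkCert 1 1 [] [(1, 0)], mkCert 2 1 [] [(1, 1)], mkCert 12 2 [(1, 12)]
    [(-1, 2), (1, 4)], mkCert 21 2 [(-1, 12)] [(-1, 2), (1, 4)], mkCert 22 1 [] [(1, 2)], mkCert
    122 3 [(1, 122), (-1, 212), (1, 112)] [], mkCert 212 3 [(1, 122), (2, 212), (1, 112)] [],
    mkCert 221 3 [(-2, 122), (-1, 212), (1, 112)] [], mkCert 2122 1 [(1, 2122)] [], mkCert 2212 1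
    [(1, 2122), (1, 2212)] [], mkCert 22122 1 [(1, 22122)] []]
def rl40 : Wd × Po := mkRule 11 []
def rl41 : Wd × Po := mkRule 222 []
def rl42 : Wd × Po := mkRule 1212 [(-1, 1221), (-1, 2121), (-1, 2122), (-1, 2212)]
def rl43 : Wd × Po := mkRule 122122 [(1, 212212), (-1, 221221)]
def crt4 : List Cert := [mkCert 1 1 [] [(1, 0)], mkCert 2 1 [] [(1, 1)], mkCert 12 2 [(1, 12)]
    [(-1, 2), (1, 4)], mkCert 21 2 [(-1, 12)] [(-1, 2), (1, 4)], mkCert 22 1 [] [(1, 2)], mkCert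
    121 1 [(1, 121)] [], mkCert 122 3 [(-1, 121), (1, 122), (-1, 212)] [(1, 5)], mkCert 212 3
    [(-1, 121), (1, 122), (2, 212)] [(1, 5)], mkCert 221 3 [(-1, 121), (-2, 122), (-1, 212)] [(1,
    5)], mkCert 1221 1 [(1, 1221)] [], mkCert 2121 2 [(-1, 1221), (1, 2121), (-2, 2122), (-1,
    2212)] [], mkCert 2122 1 [(1, 2122)] [], mkCert 2212 1 [(1, 2122), (1, 2212)] [], mkCert 12212
    3 [(2, 12212), (-1, 21221), (1, 22121), (-1, 22122)] [], mkCert 21221 3 [(2, 12212), (2,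
    21221), (1, 22121), (-1, 22122)] [], mkCert 22121 3 [(-1, 12212), (-1, 21221), (1, 22121),
    (-1, 22122)] [], mkCert 22122 1 [(1, 22122)] [], mkCert 122121 1 [(1, 122121)] [], mkCert
    212212 1 [(1, 212212), (-1, 221221)] [], mkCert 221221 1 [(1, 212212)] [], mkCert 2122121 2
    [(1, 2122121)] [], mkCert 2212212 1 [(-1, 2221221)] [], mkCert 22122121 2 [(1, 22122121)] []]
def rl50 : Wd × Po := mkRule 11 []
def rl51 : Wd × Po := mkRule 222 []
def rl52 : Wd × Po := mkRule 12121 [(-1, 12122), (-1, 12212), (-1, 21212), (-1, 21221), (-1,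
    22121), (-1, 22122)]
def rl53 : Wd × Po := mkRule 121221 [(-1, 122121), (1, 212122), (1, 212212), (1, 221212)]
def rl54 : Wd × Po := mkRule 1221221212 [(-1, 1221221221), (-1, 2122122121), (-1, 2122122122),
    (-1, 2212212212)]
def rl55 : Wd × Po := mkRule 122122122122 [(1, 212212212212), (-1, 221221221221)]
def crt5 : List Cert := [mkCert 1 1 [] [(1, 0)], mkCert 2 1 [] [(1, 1)], mkCert 12 2 [(1, 12)]
    [(-1, 2), (1, 4)], mkCert 21 2 [(-1, 12)] [(-1, 2), (1, 4)], mkCert 22 1 [] [(1, 2)], mkCert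
    121 1 [(1, 121)] [], mkCert 122 3 [(-1, 121), (1, 122), (-1, 212)] [(1, 5)], mkCert 212 3
    [(-1, 121), (1, 122), (2, 212)] [(1, 5)], mkCert 221 3 [(-1, 121), (-2, 122), (-1, 212)] [(1,
    5)], mkCert 1212 2 [(1, 1212), (-1, 1221), (-2, 2122), (-1, 2212)] [(1, 6)], mkCert 1221 1
    [(1, 1221)] [], mkCert 2121 2 [(-1, 1212), (-1, 1221), (-2, 2122), (-1, 2212)] [(1, 6)],
    mkCert 2122 1 [(1, 2122)] [], mkCert 2212 1 [(1, 2122), (1, 2212)] [], mkCert 12122 5 [(3,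
    12122), (1, 12212), (-1, 21212), (2, 21221), (-1, 22122), (1, 11212)] [], mkCert 12212 5 [(-2,
    12122), (1, 12212), (-1, 21212), (-3, 21221), (-1, 22122), (1, 11212)] [], mkCert 21212 5 [(3,
    12122), (1, 12212), (4, 21212), (2, 21221), (-1, 22122), (1, 11212)] [], mkCert 21221 5 [(-2,
    12122), (1, 12212), (-1, 21212), (2, 21221), (-1, 22122), (1, 11212)] [], mkCert 22121 5 [(-2,
    12122), (-4, 12212), (-1, 21212), (-3, 21221), (-1, 22122), (1, 11212)] [], mkCert 22122 1
    [(1, 22122)] [], mkCert 122121 1 [(1, 122121)] [], mkCert 122122 1 [(1, 122121), (-2, 212122),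
    (-1, 212212), (-1, 221212), (-1, 112122)] [], mkCert 212122 1 [(1, 212122)] [], mkCert 212212
    1 [(1, 122121), (-2, 212122), (-1, 221212), (-1, 112122)] [], mkCert 221212 1 [(1, 212122),
    (1, 221212)] [], mkCert 221221 1 [(1, 122121), (-1, 122122), (-2, 212122), (-1, 212212), (-1,
    221212), (-1, 112122)] [], mkCert 1221212 1 [(1, 1221212), (-1, 2122122), (-1, 2212122), (-1,
    2212212)] [], mkCert 1221221 1 [(1, 1221221)] [], mkCert 2122121 1 [(1, 1221212), (1,
    2122121), (-1, 2122122), (-1, 2212122), (-1, 2212212)] [], mkCert 2122122 1 [(1, 2122122)] [],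
    mkCert 2212122 1 [(1, 2212122)] [], mkCert 2212212 1 [(1, 2122122), (1, 2212212)] [], mkCert
    12212122 2 [(1, 12212122), (-1, 21221212), (-1, 22122121)] [], mkCert 12212212 2 [(1,
    12212122), (2, 12212212), (1, 21221212), (1, 22122121)] [], mkCert 21221212 2 [(1, 12212122),
    (1, 21221212), (-1, 22122121)] [], mkCert 21221221 2 [(1, 12212122), (2, 12212212), (1,
    21221212), (2, 21221221), (1, 22122121)] [], mkCert 22122121 2 [(1, 12212122), (1, 21221212),
    (1, 22122121)] [], mkCert 22122122 1 [(1, 22122122)] [], mkCert 122122121 1 [(1, 122122121)]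
    [], mkCert 122122122 3 [(-2, 212212212), (1, 221221212), (1, 121221212)] [], mkCert 212212122
    1 [(1, 212212122)] [], mkCert 212212212 3 [(1, 212212212), (1, 221221212), (1, 121221212)] [],
    mkCert 221221212 1 [(1, 212212122), (1, 221221212)] [], mkCert 221221221 3 [(-3, 122122122),
    (-2, 212212212), (1, 221221212), (1, 121221212)] [], mkCert 1221221221 1 [(1, 1221221221)] [],
    mkCert 2122122121 2 [(-1, 1221221221), (1, 2122122121), (-2, 2122122122), (-1, 2212212212)]
    [], mkCert 2122122122 1 [(1, 2122122122)] [], mkCert 2212212122 1 [(1, 2212212122)] [], mkCert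
    2212212212 1 [(1, 2122122122), (1, 2212212212)] [], mkCert 12212212212 3 [(2, 12212212212),
    (-1, 21221221221), (1, 22122122121), (-1, 22122122122)] [], mkCert 21221221221 3 [(2,
    12212212212), (2, 21221221221), (1, 22122122121), (-1, 22122122122)] [], mkCert 22122122121 3
    [(-1, 12212212212), (-1, 21221221221), (1, 22122122121), (-1, 22122122122)] [], mkCert
    22122122122 1 [(1, 22122122122)] [], mkCert 122122122121 1 [(1, 122122122121)] [], mkCert
    212212212212 1 [(1, 212212212212), (-1, 221221221221)] [], mkCert 221221221221 1 [(1,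
    212212212212)] [], mkCert 2122122122121 2 [(1, 2122122122121)] [], mkCert 2212212212212 1
    [(-1, 2221221221221)] [], mkCert 22122122122121 2 [(1, 22122122122121)] []]

end NCRed


namespace NCRed

section
variable {B : Type*} [Ring B] {K : Type*} [Field K] [CharZero K] (f : B →+ K)
  (hf : ∀ a b, f (a * b) = f (b * a)) (x y : B)

lemma zs_zero (hx : f x = 0) (hy : ∀ k, 1 ≤ k → f (y ^ k) = 0)
    (hz : ∀ k, 1 ≤ k → f ((x + y) ^ k) = 0) : ∀ z ∈ zs, f (ev x y z) = 0 := by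
  have h1 := hy 1 le_rfl
  have h2 := hy 2 (by norm_num)
  have e1 := hz 1 le_rfl
  have e2 := hz 2 (by norm_num)
  have e3 := hz 3 (by norm_num)
  have e4 := hz 4 (by norm_num)
  rw [pow_one] at h1
  intro z hz
  fin_cases hz
  · simpa [ev, evW, mkPo, wd, wdAux] using hx
  · simpa [ev, evW, mkPo, wd, wdAux] using h1
  · simpa [ev, evW, mkPo, wd, wdAux, pow_two] using h2
  · rw [← e1]; congr 1; simp [ev, evW, mkPo, wd, wdAux]
  · rw [← e2]; congr 1; simp [ev, evW, mkPo, wd, wdAux]; noncomm_ring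
  · rw [← e3]; congr 1; simp [ev, evW, mkPo, wd, wdAux]; noncomm_ring
  · rw [← e4]; congr 1; simp [ev, evW, mkPo, wd, wdAux]; noncomm_ring

lemma chk3 : chkClosed [rl30, rl31, rl32, rl33] 40 (crt3.map (·.1)) = true := by decide +kernel
lemma chk4 : chkClosed [rl40, rl41, rl42, rl43] 60 (crt4.map (·.1)) = true := by decide +kernel
lemma chk5 : chkClosed [rl50, rl51, rl52, rl53, rl54, rl55] 200 (crt5.map (·.1)) = true := by
  decide +kernel
lemma cc3 : crt3.all (chkCert [rl30, rl31, rl32, rl33] 40 zs) = true := by decide +kernel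
lemma cc4 : crt4.all (chkCert [rl40, rl41, rl42, rl43] 60 zs) = true := by decide +kernel
lemma cc5 : crt5.all (chkCert [rl50, rl51, rl52, rl53, rl54, rl55] 200 zs) = true := by
  decide +kernel
lemma cN3 : (crt3.map (·.1)).all (fun w => (crt3.map (·.1)).contains w) = true := by decide +kernel
lemma cN4 : (crt4.map (·.1)).all (fun w => (crt4.map (·.1)).contains w) = true := by decide +kernel
lemma cN5 : (crt5.map (·.1)).all (fun w => (crt5.map (·.1)).contains w) = true := by decide +kernel

include hf

theorem tr3 (hx : x ^ 2 = 0) (hy : y ^ 3 = 0) (hz : (x + y) ^ 3 = 0) (fx : f x = 0)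
    (fy : ∀ k, 1 ≤ k → f (y ^ k) = 0) (fz : ∀ k, 1 ≤ k → f ((x + y) ^ k) = 0) (w : Wd)
    (hw : w ≠ []) : f (evW x y w) = 0 := by
  have r0 : evW x y rl30.1 = ev x y rl30.2 := by
    rw [pow_two] at hx; simpa [ev, evW, rl30, mkRule, mkPo, wd, wdAux] using hx
  have r1 : evW x y rl31.1 = ev x y rl31.2 := by
    rw [pow_three] at hy; simpa [ev, evW, rl31, mkRule, mkPo, wd, wdAux] using hy
  have r2 : evW x y rl32.1 = ev x y rl32.2 := by
    simp only [ev, evW, rl32, mkRule, mkPo, wd, wdAux]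
    simp
    have : x * x = 0 := by rw [← pow_two, hx]
    linear_combination (norm := noncomm_ring) hz - hy - this * x - this * y - y * this
  have r3 : evW x y rl33.1 = ev x y rl33.2 := by
    refine newRule x y (rs := [rl30, rl31, rl32]) (by simp [r0, r1, r2]) rl30 rl32 (by simp)
      (by simp) (wd 1) (wd 21) (-1) rl33 40 (by decide +kernel) (by decide +kernel)
  exact trace_zero x y (rs := [rl30, rl31, rl32, rl33]) (by simp [r0, r1, r2, r3]) f hf 40 _ chk3 zs
    (zs_zero f x y fx fy fz) crt3 cc3 cN3 w hw

theorem tr4 (hx : x ^ 2 = 0) (hy : y ^ 3 = 0) (hz : (x + y) ^ 4 = 0) (fx : f x = 0)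
    (fy : ∀ k, 1 ≤ k → f (y ^ k) = 0) (fz : ∀ k, 1 ≤ k → f ((x + y) ^ k) = 0) (w : Wd)
    (hw : w ≠ []) : f (evW x y w) = 0 := by
  have r0 : evW x y rl40.1 = ev x y rl40.2 := by
    rw [pow_two] at hx; simpa [ev, evW, rl40, mkRule, mkPo, wd, wdAux] using hx
  have r1 : evW x y rl41.1 = ev x y rl41.2 := by
    rw [pow_three] at hy; simpa [ev, evW, rl41, mkRule, mkPo, wd, wdAux] using hy
  have r2 : evW x y rl42.1 = ev x y rl42.2 := by
    simp only [ev, evW, rl42, mkRule, mkPo, wd, wdAux]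
    simp
    have h2 : x * x = 0 := by rw [← pow_two, hx]
    linear_combination (norm := noncomm_ring) hz - y * hy - x * hy - hy * x
      - (h2 * x * x + h2 * x * y + h2 * y * x + h2 * y * y + x * y * h2
        + y * h2 * x + y * h2 * y + y * y * h2)
  have r3 : evW x y rl43.1 = ev x y rl43.2 := by
    refine newRule x y (rs := [rl40, rl41, rl42]) (by simp [r0, r1, r2]) rl42 rl42 (by simp)
      (by simp) (wd 12) (wd 12) (-1) rl43 40 (by decide +kernel) (by decide +kernel)
  exact trace_zero x y (rs := [rl40, rl41, rl42, rl43]) (by simp [r0, r1, r2, r3]) f hf 60 _ chk4 zs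
    (zs_zero f x y fx fy fz) crt4 cc4 cN4 w hw

theorem tr5 (hx : x ^ 2 = 0) (hy : y ^ 3 = 0) (hz : (x + y) ^ 5 = 0) (fx : f x = 0)
    (fy : ∀ k, 1 ≤ k → f (y ^ k) = 0) (fz : ∀ k, 1 ≤ k → f ((x + y) ^ k) = 0) (w : Wd)
    (hw : w ≠ []) : f (evW x y w) = 0 := by
  have r0 : evW x y rl50.1 = ev x y rl50.2 := by
    rw [pow_two] at hx; simpa [ev, evW, rl50, mkRule, mkPo, wd, wdAux] using hx
  have r1 : evW x y rl51.1 = ev x y rl51.2 := by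
    rw [pow_three] at hy; simpa [ev, evW, rl51, mkRule, mkPo, wd, wdAux] using hy
  have r2 : evW x y rl52.1 = ev x y rl52.2 := by
    simp only [ev, evW, rl52, mkRule, mkPo, wd, wdAux]
    simp
    have h2 : x * x = 0 := by rw [← pow_two, hx]
    have q : (x + y) ^ 2 = x * y + y * x + y ^ 2 := by
      linear_combination (norm := noncomm_ring) h2
    have q4 : (x + y) ^ 4 = x*y*x*y + x*y*y*x + y*x*y*x + y*x*y*y + y*y*x*y := by
      rw [show (4 : ℕ) = 2 + 2 from rfl, pow_add, q]
      linear_combination (norm := noncomm_ring) y * h2 * y + x * hy + y * hy + hy * x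
    rw [pow_succ, q4] at hz
    linear_combination (norm := noncomm_ring) hz - (x * y * y + y * x * y) * h2 - y * x * hy
  have r3 : evW x y rl53.1 = ev x y rl53.2 := by
    refine newRule x y (rs := [rl50, rl51, rl52]) (by simp [r0, r1, r2]) rl50 rl52 (by simp)
      (by simp) (wd 1) (wd 2121) (-1) rl53 40 (by decide +kernel) (by decide +kernel)
  have r4 : evW x y rl54.1 = ev x y rl54.2 := by
    refine newRule x y (rs := [rl50, rl51, rl52, rl53]) (by simp [r0, r1, r2, r3]) rl53 rl52
      (by simp) (by simp) (wd 12122) (wd 2121) (-1) rl54 100 (by decide +kernel) (by decide +kernel)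
  have r5 : evW x y rl55.1 = ev x y rl55.2 := by
    refine newRule x y (rs := [rl50, rl51, rl52, rl53, rl54]) (by simp [r0, r1, r2, r3, r4])
      rl53 rl54 (by simp) (by simp) (wd 12) (wd 221212) (-1) rl55 100
      (by decide +kernel) (by decide +kernel)
  exact trace_zero x y (rs := [rl50, rl51, rl52, rl53, rl54, rl55])
    (by simp [r0, r1, r2, r3, r4, r5]) f hf 200 _ chk5 zs
    (zs_zero f x y fx fy fz) crt5 cc5 cN5 w hw

end
end NCRed


section center
variable {K B : Type*} [Field K] [CharZero K] [Ring B] [Algebra K B] (f : B →ₗ[K] K)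

/-- `f` vanishes on nonempty products of elements of `S` iff it vanishes on the nonunital
subalgebra generated by `S`. -/
lemma van_of_words {S : Set B} (h : ∀ l : List B, l ≠ [] → (∀ b ∈ l, b ∈ S) → f l.prod = 0) :
    ∀ b ∈ NonUnitalAlgebra.adjoin K S, f b = 0 := by
  intro b hb
  have hb' : b ∈ (NonUnitalAlgebra.adjoin K S).toSubmodule := hb
  rw [NonUnitalAlgebra.adjoin_eq_span] at hb'
  clear hb
  have key : ∀ c ∈ Subsemigroup.closure S, ∃ l : List B, l ≠ [] ∧ (∀ b ∈ l, b ∈ S) ∧ l.prod = c := by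
    intro c hc
    induction hc using Subsemigroup.closure_induction with
    | mem x hx => exact ⟨[x], by simp, by simpa using hx, by simp⟩
    | mul x y _ _ hx hy =>
      obtain ⟨l, h1, h2, rfl⟩ := hx
      obtain ⟨m, h3, h4, rfl⟩ := hy
      refine ⟨l ++ m, by simp [h1], ?_, by simp⟩
      intro b hb
      rcases List.mem_append.1 hb with hb | hb
      · exact h2 b hb
      · exact h4 b hb
  induction hb' using Submodule.span_induction with
  | mem x hx => obtain ⟨l, h1, h2, rfl⟩ := key x hx; exact h l h1 h2
  | zero => simp
  | add x y _ _ hx hy => simp_all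
  | smul c x _ hx => simp_all

lemma prod_mem_adjoin {S : Set B} (M : NonUnitalSubalgebra K B) (hS : S ⊆ M) (l : List B) (hl : l ≠ [])
    (h : ∀ b ∈ l, b ∈ S) : l.prod ∈ M := by
  induction l with
  | nil => exact absurd rfl hl
  | cons a l ih =>
    by_cases hl' : l = []
    · subst hl'; simpa using hS (h a (by simp))
    · rw [List.prod_cons]
      exact mul_mem (hS (h a (by simp))) (ih hl' fun b hb => h b (by simp [hb]))

lemma van_of_evW (x y : B) (h : ∀ w : NCRed.Wd, w ≠ [] → f (NCRed.evW x y w) = 0) :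
    ∀ b ∈ NonUnitalAlgebra.adjoin K ({x, y} : Set B), f b = 0 := by
  refine van_of_words f ?_
  intro l hl hS
  have : ∃ w : NCRed.Wd, w.length = l.length ∧ NCRed.evW x y w = l.prod := by
    clear hl
    induction l with
    | nil => exact ⟨[], rfl, rfl⟩
    | cons a l ih =>
      obtain ⟨w, h1, h2⟩ := ih fun b hb => hS b (by simp [hb])
      have := hS a (by simp)
      rcases this with rfl | rfl
      · exact ⟨true :: w, by simp [h1], by simp [NCRed.evW] at h2 ⊢; rw [h2]⟩
      · exact ⟨false :: w, by simp [h1], by simp [NCRed.evW] at h2 ⊢; rw [h2]⟩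
  obtain ⟨w, h1, h2⟩ := this
  rw [← h2]
  refine h w ?_
  rintro rfl
  simp at h1
  exact hl (List.length_eq_zero_iff.1 h1.symm)

lemma adjoin3_le {x y z : B} (hxyz : x + y + z = 0) {b : B}
    (hb : b ∈ NonUnitalAlgebra.adjoin K ({x, y, z} : Set B)) :
    b ∈ NonUnitalAlgebra.adjoin K ({x, y} : Set B) := by
  refine NonUnitalAlgebra.adjoin_le ?_ hb
  have hx : x ∈ NonUnitalAlgebra.adjoin K ({x, y} : Set B) :=
    NonUnitalAlgebra.subset_adjoin K (by simp)
  have hy : y ∈ NonUnitalAlgebra.adjoin K ({x, y} : Set B) :=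
    NonUnitalAlgebra.subset_adjoin K (by simp)
  rintro a (rfl | rfl | rfl)
  · exact hx
  · exact hy
  · have : a = -(x + y) := eq_neg_of_add_eq_zero_right hxyz
    rw [this]; exact neg_mem (add_mem hx hy)

variable (hf : ∀ a b, f (a * b) = f (b * a))
include hf

theorem center_E (x y z : B) (hxyz : x + y + z = 0) (r : ℕ) (hr : r = 3 ∨ r = 4 ∨ r = 5)
    (hx : x ^ 2 = 0) (hy : y ^ 3 = 0) (hz : z ^ r = 0) (fx : ∀ k, 1 ≤ k → f (x ^ k) = 0)
    (fy : ∀ k, 1 ≤ k → f (y ^ k) = 0) (fz : ∀ k, 1 ≤ k → f (z ^ k) = 0) :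
    ∀ b ∈ NonUnitalAlgebra.adjoin K ({x, y, z} : Set B), f b = 0 := by
  intro b hb
  have hb := adjoin3_le hxyz hb
  have e : x + y = -z := eq_neg_of_add_eq_zero_left hxyz
  have fz' : ∀ k, 1 ≤ k → f ((x + y) ^ k) = 0 := by
    intro k hk
    rw [e, neg_pow, ← Int.cast_one, ← Int.cast_neg, ← Int.cast_pow, ← zsmul_eq_mul, map_zsmul, fz k hk,
      smul_zero]
  have hz' : (x + y) ^ r = 0 := by rw [e, neg_pow, hz, mul_zero]
  have fx' : f x = 0 := by simpa using fx 1 le_rfl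
  refine van_of_evW f x y ?_ b hb
  intro w hw
  rcases hr with rfl | rfl | rfl
  · exact NCRed.tr3 f.toAddMonoidHom hf x y hx hy hz' fx' fy fz' w hw
  · exact NCRed.tr4 f.toAddMonoidHom hf x y hx hy hz' fx' fy fz' w hw
  · exact NCRed.tr5 f.toAddMonoidHom hf x y hx hy hz' fx' fy fz' w hw

theorem center_D (x y z : B) (hxyz : x + y + z = 0) (hx : x ^ 2 = 0) (hy : y ^ 2 = 0)
    (fx : ∀ k, 1 ≤ k → f (x ^ k) = 0)
    (fy : ∀ k, 1 ≤ k → f (y ^ k) = 0) (fz : ∀ k, 1 ≤ k → f (z ^ k) = 0) :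
    ∀ b ∈ NonUnitalAlgebra.adjoin K ({x, y, z} : Set B), f b = 0 := by
  intro b hb
  have hb := adjoin3_le hxyz hb
  have e : x + y = -z := eq_neg_of_add_eq_zero_left hxyz
  have fz' : ∀ k, 1 ≤ k → f ((x + y) ^ k) = 0 := by
    intro k hk
    rw [e, neg_pow, ← Int.cast_one, ← Int.cast_neg, ← Int.cast_pow, ← zsmul_eq_mul, map_zsmul, fz k hk,
      smul_zero]
  have fx' : f x = 0 := by simpa using fx 1 le_rfl
  have fy' : f y = 0 := by simpa using fy 1 le_rfl
  have xx : x * x = 0 := by rw [← pow_two, hx]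
  have yy : y * y = 0 := by rw [← pow_two, hy]
  have xyx : ∀ k, x * (x * y) ^ (k + 1) = 0 := by
    intro k; rw [pow_succ', ← mul_assoc, ← mul_assoc, xx]; simp
  have yyx : ∀ k, y * (y * x) ^ (k + 1) = 0 := by
    intro k; rw [pow_succ', ← mul_assoc, ← mul_assoc, yy]; simp
  have xyy : ∀ k, (x * y) ^ (k + 1) * y = 0 := by
    intro k; rw [pow_succ, mul_assoc, mul_assoc, yy]; simp
  have yxx : ∀ k, (y * x) ^ (k + 1) * x = 0 := by
    intro k; rw [pow_succ, mul_assoc, mul_assoc, xx]; simp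
  have sh : ∀ k, (x * y) ^ k * x = x * (y * x) ^ k := by
    intro k
    induction k with
    | zero => simp
    | succ k ih => rw [pow_succ', mul_assoc, ih, pow_succ']; simp [mul_assoc]
  have sh' : ∀ k, (y * x) ^ k * y = y * (x * y) ^ k := by
    intro k
    induction k with
    | zero => simp
    | succ k ih => rw [pow_succ', mul_assoc, ih, pow_succ']; simp [mul_assoc]
  have sq : ∀ k, (x + y) ^ (2 * (k + 1)) = (x * y) ^ (k + 1) + (y * x) ^ (k + 1) := by
    intro k
    induction k with
    | zero => simp [pow_two, mul_add, add_mul, xx, yy, add_comm]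
    | succ k ih =>
      rw [show 2 * (k + 1 + 1) = 2 * (k + 1) + 2 by ring, pow_add, ih, pow_two]
      have : (x + y) * (x + y) = x * y + y * x := by simp [mul_add, add_mul, xx, yy, add_comm]
      rw [this, add_mul, mul_add, mul_add, ← mul_assoc, ← mul_assoc, ← mul_assoc, ← mul_assoc, xyy, yxx,
        pow_succ (x * y) (k + 1), pow_succ (y * x) (k + 1)]
      simp [mul_assoc]
  have cy : ∀ k, f ((x * y) ^ (k + 1)) = f ((y * x) ^ (k + 1)) := by
    intro k
    rw [pow_succ', mul_assoc, hf, mul_assoc, sh, pow_succ', mul_assoc]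
  have f1 : ∀ k, f ((x * y) ^ (k + 1)) = 0 := by
    intro k
    have := fz' (2 * (k + 1)) (by omega)
    rw [sq, map_add, ← cy, ← two_mul] at this
    simpa using this
  have f3 : ∀ k, f ((x * y) ^ k * x) = 0 := by
    intro k
    cases k with
    | zero => simpa using fx'
    | succ k => rw [hf, xyx, map_zero]
  have f4 : ∀ k, f ((y * x) ^ k * y) = 0 := by
    intro k
    cases k with
    | zero => simpa using fy'
    | succ k => rw [hf, yyx, map_zero]
  refine van_of_words f ?_ b hb
  intro l hl hS
  have : l.prod = 0 ∨ (∃ k, l.prod = (x * y) ^ (k + 1)) ∨ (∃ k, l.prod = (y * x) ^ (k + 1)) ∨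
      (∃ k, l.prod = (x * y) ^ k * x) ∨ (∃ k, l.prod = (y * x) ^ k * y) := by
    induction l using List.reverseRecOn with
    | nil => exact absurd rfl hl
    | append_singleton l a ih =>
      have ha := hS a (by simp)
      rw [List.prod_append, List.prod_singleton]
      by_cases hl' : l = []
      · subst hl'
        rcases ha with rfl | rfl
        · right; right; right; left; exact ⟨0, by simp⟩
        · right; right; right; right; exact ⟨0, by simp⟩
      have ih := ih hl' fun b hb => hS b (by simp [hb])
      rcases ih with h | ⟨k, h⟩ | ⟨k, h⟩ | ⟨k, h⟩ | ⟨k, h⟩ <;> rw [h]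
      · simp
      · rcases ha with rfl | rfl
        · right; right; right; left; exact ⟨k + 1, rfl⟩
        · left; exact xyy k
      · rcases ha with rfl | rfl
        · left; exact yxx k
        · right; right; right; right; exact ⟨k + 1, rfl⟩
      · rcases ha with rfl | rfl
        · left; rw [mul_assoc, xx, mul_zero]
        · right; left; exact ⟨k, by rw [pow_succ, mul_assoc]⟩
      · rcases ha with rfl | rfl
        · right; right; left; exact ⟨k, by rw [pow_succ, mul_assoc]⟩
        · left; rw [mul_assoc, yy, mul_zero]
  rcases this with h | ⟨k, h⟩ | ⟨k, h⟩ | ⟨k, h⟩ | ⟨k, h⟩ <;> rw [h]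
  · simp
  · exact f1 k
  · rw [← cy]; exact f1 k
  · exact f3 k
  · exact f4 k

theorem center_A (x y : B) (hxy : x + y = 0)
    (fx : ∀ k, 1 ≤ k → f (x ^ k) = 0) :
    ∀ b ∈ NonUnitalAlgebra.adjoin K ({x, y} : Set B), f b = 0 := by
  refine van_of_words f ?_
  intro l hl hS
  have e : y = -x := by rw [eq_neg_iff_add_eq_zero, add_comm]; exact hxy
  have : ∃ c : ℤ, l.prod = c • x ^ l.length := by
    clear hl
    induction l with
    | nil => exact ⟨1, by simp⟩
    | cons a l ih =>
      obtain ⟨c, hc⟩ := ih fun b hb => hS b (by simp [hb])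
      rcases hS a (by simp) with rfl | rfl
      · exact ⟨c, by rw [List.prod_cons, hc, List.length_cons, pow_succ', mul_smul_comm]⟩
      · exact ⟨-c, by rw [List.prod_cons, hc, List.length_cons, pow_succ', e, mul_smul_comm]; simp⟩
  obtain ⟨c, hc⟩ := this
  rw [hc, map_zsmul, fx _ (List.length_pos_iff.2 hl), smul_zero]

/-- The elimination step on words. -/
theorem van_step (S : Set B) (hS : ∀ b ∈ NonUnitalAlgebra.adjoin K S, f b = 0) (p q y0 : B) (c0 : K)
    (hy0 : y0 ∈ S) (hpq : p * q = c0 • y0) (pS : ∀ g ∈ S, p * g = 0) (Sq : ∀ g ∈ S, g * q = 0)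
    (pp : p * p = 0) (qq : q * q = 0) (fp : f p = 0) (fq : f q = 0) :
    ∀ b ∈ NonUnitalAlgebra.adjoin K (S ∪ {p, q}), f b = 0 := by
  refine van_of_words f ?_
  have fS : ∀ l : List B, l ≠ [] → (∀ b ∈ l, b ∈ S) → f l.prod = 0 := fun l hl h =>
    hS _ (prod_mem_adjoin _ (NonUnitalAlgebra.subset_adjoin K) l hl h)
  have lq : ∀ l : List B, l ≠ [] → (∀ b ∈ l, b ∈ S) → l.prod * q = 0 := by
    intro l hl h
    obtain ⟨m, a, rfl⟩ := List.eq_nil_or_concat' l |>.resolve_left hl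
    rw [List.prod_append, List.prod_singleton, mul_assoc, Sq a (h a (by simp)), mul_zero]
  have pl : ∀ l : List B, l ≠ [] → (∀ b ∈ l, b ∈ S) → p * l.prod = 0 := by
    intro l hl h
    obtain ⟨a, m, rfl⟩ := List.exists_cons_of_ne_nil hl
    rw [List.prod_cons, ← mul_assoc, pS a (h a (by simp)), zero_mul]
  have form : ∀ w : List B, w ≠ [] → (∀ b ∈ w, b ∈ S ∪ {p, q}) →
      w.prod = 0 ∨ ∃ c : K, ∃ l : List B, (∀ b ∈ l, b ∈ S) ∧
        ((l ≠ [] ∧ w.prod = c • l.prod) ∨ w.prod = c • (q * l.prod) ∨ w.prod = c • (l.prod * p) ∨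
          w.prod = c • (q * l.prod * p)) := by
    intro w hw h
    induction w using List.reverseRecOn with
    | nil => exact absurd rfl hw
    | append_singleton w a ih =>
      have ha := h a (by simp)
      rw [List.prod_append, List.prod_singleton]
      by_cases hw' : w = []
      · subst hw'
        right
        rcases ha with ha | rfl | rfl
        · exact ⟨1, [a], by simpa using ha, Or.inl ⟨by simp, by simp⟩⟩
        · exact ⟨1, [], by simp, Or.inr (Or.inr (Or.inl (by simp)))⟩
        · exact ⟨1, [], by simp, Or.inr (Or.inl (by simp))⟩
      rcases ih hw' fun b hb => h b (by simp [hb]) with h0 | ⟨c, l, hl, h1⟩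
      · left; rw [h0, zero_mul]
      have app : ∀ g ∈ S, ∀ b ∈ l ++ [g], b ∈ S := by
        intro g hg b hb
        rcases List.mem_append.1 hb with hb | hb
        · exact hl b hb
        · simp at hb; rw [hb]; exact hg
      rcases ha with ha | rfl | rfl
      · rcases h1 with ⟨h2, h1⟩ | h1 | h1 | h1 <;> rw [h1]
        · right; exact ⟨c, l ++ [a], app a ha, Or.inl ⟨by simp, by simp⟩⟩
        · right; exact ⟨c, l ++ [a], app a ha, Or.inr (Or.inl (by simp [mul_assoc]))⟩
        · left; rw [smul_mul_assoc, mul_assoc, pS a ha]; simp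
        · left; rw [smul_mul_assoc, mul_assoc, pS a ha]; simp
      · rcases h1 with ⟨h2, h1⟩ | h1 | h1 | h1 <;> rw [h1]
        · right; exact ⟨c, l, hl, Or.inr (Or.inr (Or.inl (by simp)))⟩
        · right; exact ⟨c, l, hl, Or.inr (Or.inr (Or.inr (by simp)))⟩
        · left; rw [smul_mul_assoc, mul_assoc, pp]; simp
        · left; rw [smul_mul_assoc, mul_assoc, pp]; simp
      · rcases h1 with ⟨h2, h1⟩ | h1 | h1 | h1 <;> rw [h1]
        · left; rw [smul_mul_assoc, lq l h2 hl, smul_zero]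
        · left
          by_cases h2 : l = []
          · subst h2; simp [qq]
          · rw [smul_mul_assoc, mul_assoc, lq l h2 hl]; simp
        · right
          refine ⟨c * c0, l ++ [y0], app y0 hy0, Or.inl ⟨by simp, ?_⟩⟩
          rw [smul_mul_assoc, mul_assoc, hpq]; simp [smul_smul]
        · right
          refine ⟨c * c0, l ++ [y0], app y0 hy0, Or.inr (Or.inl ?_)⟩
          rw [smul_mul_assoc, mul_assoc, hpq]; simp [smul_smul, mul_assoc]
  intro w hw h
  rcases form w hw h with h0 | ⟨c, l, hl, h1⟩
  · rw [h0, map_zero]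
  rcases h1 with ⟨h2, h1⟩ | h1 | h1 | h1 <;> rw [h1, map_smul]
  · rw [fS l h2 hl, smul_zero]
  · by_cases h2 : l = []
    · subst h2; simp [fq]
    · rw [hf, lq l h2 hl]; simp
  · by_cases h2 : l = []
    · subst h2; simp [fp]
    · rw [hf, pl l h2 hl]; simp
  · rw [mul_assoc, hf, mul_assoc, hpq, mul_smul_comm, map_smul]
    have := fS (l ++ [y0]) (by simp) (by
        intro b hb
        rcases List.mem_append.1 hb with hb | hb
        · exact hl b hb
        · simp at hb; rw [hb]; exact hy0)
    rw [List.prod_append, List.prod_singleton] at this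
    rw [this]; simp

end center


/-- Abstract data for the elimination argument. -/
structure PD (K B V D : Type*) [Field K] [Ring B] [Algebra K B] [Fintype D] [DecidableEq V] where
  hd : D → V
  rev : D → D
  X : D → B
  eps : D → K
  δ : V → ℕ
  f : B →ₗ[K] K
  v0 : V
  rev_rev : ∀ d, rev (rev d) = d
  rev_ne : ∀ d, rev d ≠ d
  eps_sq : ∀ d, eps d * eps d = 1
  eps_rev : ∀ d, eps (rev d) = -eps d
  XX : ∀ a b, hd (rev a) ≠ hd b → X a * X b = 0
  rel : ∀ i, ∑ d with hd d = i, eps d • (X d * X (rev d)) = 0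
  X0 : ∀ d, hd d = v0 → X d = 0
  X0' : ∀ d, hd (rev d) = v0 → X d = 0
  fX : ∀ d, hd d ≠ hd (rev d) → f (X d) = 0
  fcyc : ∀ a b, f (a * b) = f (b * a)
  δ_pos : ∀ i, 0 < δ i
  δ_sum : ∀ i, ∑ d with hd d = i, δ (hd (rev d)) = 2 * δ i
  δ_v0 : δ v0 = 1
  conn : ∀ T : Set V, T.Nonempty → (∀ d, hd d ∈ T → hd (rev d) ∈ T) → v0 ∈ T

namespace PD
variable {K B V D : Type*} [Field K] [CharZero K] [Ring B] [Algebra K B] [Fintype D] [DecidableEq V]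
  (P : PD K B V D)

def tl (d : D) : V := P.hd (P.rev d)
def y (d : D) : B := P.eps d • (P.X d * P.X (P.rev d))

lemma tl_rev (d : D) : P.tl (P.rev d) = P.hd d := by rw [tl, P.rev_rev]
lemma hd_rev (d : D) : P.hd (P.rev d) = P.tl d := rfl

def G (A : Finset V) : Set B :=
  {b | ∃ d, P.hd d ∈ A ∧ ((P.tl d ∈ A ∧ b = P.X d) ∨ (P.tl d ∉ A ∧ b = P.y d))}

def W (A : Finset V) : Prop := ∀ b ∈ NonUnitalAlgebra.adjoin K (P.G A), P.f b = 0

def LabR (d : D) : Prop :=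
  ∃ p e, 2 ≤ p ∧ P.δ (P.hd d) = p * e ∧ P.δ (P.tl d) + e = P.δ (P.hd d) ∧ P.y d ^ p = 0

def LabZ (d : D) : Prop :=
  (P.δ (P.hd d) = P.δ (P.tl d) + 1 ∧ P.y d ^ (P.δ (P.tl d)) = 0) ∨
  (P.δ (P.hd d) = 1 ∧ P.δ (P.tl d) = 1) ∨ (P.δ (P.hd d) = 2 ∧ P.δ (P.tl d) = 2)

structure Inv (A : Finset V) (Z : Set D) : Prop where
  fy : ∀ d, P.hd d ∈ A → P.tl d ∉ A → ∀ k, 1 ≤ k → P.f (P.y d ^ k) = 0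
  labR : ∀ d, P.hd d ∈ A → P.tl d ∉ A → d ∉ Z → P.LabR d
  labZ : ∀ d, P.hd d ∈ A → P.tl d ∉ A → d ∈ Z → P.LabZ d
  uniq : ∀ d d', P.hd d ∈ A → P.tl d ∉ A → d ∈ Z → P.hd d' ∈ A → P.tl d' ∉ A → d' ∈ Z →
    2 ≤ P.δ (P.hd d) → d' = d
  cov : ∀ T : Finset V, T ⊆ A → T.Nonempty → (∀ d, P.hd d ∈ T → P.tl d ∈ A → P.tl d ∈ T) →
    ∃ d, P.hd d ∈ T ∧ P.tl d ∉ A ∧ d ∈ Z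

def act (A : Finset V) (i : V) : Finset D := Finset.univ.filter fun d => P.hd d = i ∧ P.tl d ∈ A
def bd (A : Finset V) (i : V) : Finset D := Finset.univ.filter fun d => P.hd d = i ∧ P.tl d ∉ A
def FZ (Z : Set D) (d : D) : Prop := d ∈ Z ∧ P.δ (P.hd d) = 2 ∧ P.δ (P.tl d) = 1

@[simp] lemma mem_act {A : Finset V} {i : V} {d : D} :
    d ∈ P.act A i ↔ P.hd d = i ∧ P.tl d ∈ A := by simp [act]
@[simp] lemma mem_bd {A : Finset V} {i : V} {d : D} :
    d ∈ P.bd A i ↔ P.hd d = i ∧ P.tl d ∉ A := by simp [bd]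

lemma sum_split {M : Type*} [AddCommMonoid M] (A : Finset V) (i : V) (g : D → M) :
    ∑ d with P.hd d = i, g d = ∑ d ∈ P.act A i, g d + ∑ d ∈ P.bd A i, g d := by
  classical
  rw [← Finset.sum_filter_add_sum_filter_not _ (fun d => P.tl d ∈ A)]
  simp only [Finset.filter_filter]
  rfl

lemma δ_split (A : Finset V) (i : V) :
    ∑ d ∈ P.act A i, P.δ (P.tl d) + ∑ d ∈ P.bd A i, P.δ (P.tl d) = 2 * P.δ i := by
  rw [← P.sum_split A i (fun d => P.δ (P.tl d))]; exact P.δ_sum i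

lemma y_split (A : Finset V) (i : V) :
    ∑ d ∈ P.act A i, P.y d + ∑ d ∈ P.bd A i, P.y d = 0 := by
  rw [← P.sum_split A i (fun d => P.y d)]; exact P.rel i

lemma labR_facts {d : D} (h : P.LabR d) : P.δ (P.hd d) ≤ 2 * P.δ (P.tl d) ∧
    P.δ (P.tl d) + 1 ≤ P.δ (P.hd d) ∧ 2 ≤ P.δ (P.hd d) := by
  obtain ⟨p, e, hp, h1, h2, -⟩ := h
  have hpos := P.δ_pos (P.hd d)
  have he : 0 < e := by
    rcases Nat.eq_zero_or_pos e with rfl | h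
    · simp at h1; omega
    · exact h
  have : 2 * e ≤ p * e := Nat.mul_le_mul_right _ hp
  omega

open Classical in
lemma exists_vertex (A : Finset V) (Z : Set D) (hA : A.Nonempty) (hI : P.Inv A Z) :
    ∃ i ∈ A, P.act A i = ∅ ∨
      ((P.act A i).card = 1 ∧ ((P.bd A i).filter fun d => ¬ P.FZ Z d).card ≤ 1) := by
  by_contra! hcon
  obtain ⟨z, hz1, hz2, hz3⟩ := hI.cov A (Finset.Subset.refl _) hA (fun d _ h => h)
  have half : ∀ i ∈ A, ∀ d ∈ P.bd A i, ¬ P.FZ Z d → P.δ i ≤ 2 * P.δ (P.tl d) ∧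
      (d ∈ Z → P.δ i < 2 * P.δ (P.tl d)) := by
    intro i hi d hd hF
    obtain ⟨rfl, ht⟩ := P.mem_bd.1 hd
    have hp := P.δ_pos (P.tl d)
    by_cases hZ : d ∈ Z
    · rcases hI.labZ d hi ht hZ with ⟨h1, -⟩ | h | h
      · have : P.δ (P.tl d) ≠ 1 := fun h => hF ⟨hZ, by omega, h⟩
        omega
      · omega
      · omega
    · exact ⟨(P.labR_facts (hI.labR d hi ht hZ)).1, fun h => absurd h hZ⟩
  have loc : ∀ i ∈ A, 2 * P.δ i ≤ (P.act A i).card * P.δ i + ∑ d ∈ P.bd A i, P.δ (P.tl d) ∧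
      (P.hd z = i → 2 * P.δ i < (P.act A i).card * P.δ i + ∑ d ∈ P.bd A i, P.δ (P.tl d)) := by
    intro i hi
    obtain ⟨h0, h1⟩ := hcon i hi
    have hc : 0 < (P.act A i).card := Finset.card_pos.2 h0
    by_cases h2 : (P.act A i).card = 1
    · have h3 := h1 h2
      obtain ⟨d1, hd1, d2, hd2, hne⟩ := Finset.one_lt_card.1 h3
      rw [Finset.mem_filter] at hd1 hd2
      have k1 := half i hi d1 hd1.1 hd1.2
      have k2 := half i hi d2 hd2.1 hd2.2
      have s : P.δ (P.tl d1) + P.δ (P.tl d2) ≤ ∑ d ∈ P.bd A i, P.δ (P.tl d) := by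
        rw [← Finset.sum_pair (f := fun d => P.δ (P.tl d)) hne]
        refine Finset.sum_le_sum_of_subset ?_
        intro d hd; simp only [Finset.mem_insert, Finset.mem_singleton] at hd
        rcases hd with rfl | rfl
        exacts [hd1.1, hd2.1]
      rw [h2]
      refine ⟨by omega, fun hzi => ?_⟩
      have hzb : z ∈ P.bd A i := P.mem_bd.2 ⟨hzi, hz2⟩
      by_cases e1 : z = d1
      · subst e1; have := k1.2 hz3; omega
      by_cases e2 : z = d2
      · subst e2; have := k2.2 hz3; omega
      have s : P.δ (P.tl z) + (P.δ (P.tl d1) + P.δ (P.tl d2)) ≤ ∑ d ∈ P.bd A i, P.δ (P.tl d) := by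
        rw [← Finset.sum_pair (f := fun d => P.δ (P.tl d)) hne,
          ← Finset.sum_insert (f := fun d => P.δ (P.tl d)) (by simp [e1, e2])]
        refine Finset.sum_le_sum_of_subset ?_
        intro d hd; simp only [Finset.mem_insert, Finset.mem_singleton] at hd
        rcases hd with rfl | rfl | rfl
        exacts [hzb, hd1.1, hd2.1]
      have := P.δ_pos (P.tl z)
      omega
    · have h3 : 2 * P.δ i ≤ (P.act A i).card * P.δ i := Nat.mul_le_mul_right _ (by omega)
      refine ⟨by omega, fun hzi => ?_⟩
      have hzb : z ∈ P.bd A i := P.mem_bd.2 ⟨hzi, hz2⟩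
      have := Finset.single_le_sum (f := fun d => P.δ (P.tl d)) (fun _ _ => Nat.zero_le _) hzb
      have := P.δ_pos (P.tl z)
      omega
  have lt : ∑ i ∈ A, 2 * P.δ i <
      ∑ i ∈ A, ((P.act A i).card * P.δ i + ∑ d ∈ P.bd A i, P.δ (P.tl d)) :=
    Finset.sum_lt_sum (fun i hi => (loc i hi).1) ⟨P.hd z, hz1, (loc _ hz1).2 rfl⟩
  have e1 : ∀ i, (P.act A i).card * P.δ i = ∑ d ∈ P.act A i, P.δ (P.hd d) := by
    intro i
    rw [Finset.card_eq_sum_ones, Finset.sum_mul]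
    refine Finset.sum_congr rfl fun d hd => ?_
    rw [(P.mem_act.1 hd).1, one_mul]
  have fib : ∀ g : D → ℕ, ∑ i ∈ A, ∑ d ∈ P.act A i, g d =
      ∑ d with P.hd d ∈ A ∧ P.tl d ∈ A, g d := by
    intro g
    rw [← Finset.sum_fiberwise_of_maps_to (t := A) (g := P.hd) (by simp +contextual)]
    refine Finset.sum_congr rfl fun i hi => Finset.sum_congr ?_ fun _ _ => rfl
    ext d
    simp only [mem_act, Finset.mem_filter, Finset.mem_univ, true_and]
    constructor
    · rintro ⟨rfl, h⟩; exact ⟨⟨hi, h⟩, rfl⟩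
    · rintro ⟨⟨_, h⟩, rfl⟩; exact ⟨rfl, h⟩
  have sym : ∑ d with P.hd d ∈ A ∧ P.tl d ∈ A, P.δ (P.hd d) =
      ∑ d with P.hd d ∈ A ∧ P.tl d ∈ A, P.δ (P.tl d) := by
    refine Finset.sum_nbij' P.rev P.rev ?_ ?_ ?_ ?_ ?_
    · intro d; simp only [Finset.mem_filter, Finset.mem_univ, true_and, P.tl_rev, P.hd_rev]; tauto
    · intro d; simp only [Finset.mem_filter, Finset.mem_univ, true_and, P.tl_rev, P.hd_rev]; tauto
    · intro d _; exact P.rev_rev d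
    · intro d _; exact P.rev_rev d
    · intro d _; rw [P.tl_rev]
  rw [Finset.sum_add_distrib, Finset.sum_congr rfl (fun i _ => e1 i), fib, sym, ← fib,
    ← Finset.sum_add_distrib, Finset.sum_congr rfl (fun i _ => P.δ_split A i)] at lt
  exact lt_irrefl _ lt

end PD


lemma van_union {K B : Type*} [Field K] [CharZero K] [Ring B] [Algebra K B] (f : B →ₗ[K] K) (S T : Set B)
    (hS : ∀ b ∈ NonUnitalAlgebra.adjoin K S, f b = 0)
    (hT : ∀ b ∈ NonUnitalAlgebra.adjoin K T, f b = 0)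
    (hST : ∀ s ∈ S, ∀ t ∈ T, s * t = 0) (hTS : ∀ t ∈ T, ∀ s ∈ S, t * s = 0) :
    ∀ b ∈ NonUnitalAlgebra.adjoin K (S ∪ T), f b = 0 := by
  refine van_of_words f ?_
  intro l hl h
  have key : l.prod = 0 ∨ (∀ b ∈ l, b ∈ S) ∨ (∀ b ∈ l, b ∈ T) := by
    induction l with
    | nil => exact absurd rfl hl
    | cons a l ih =>
      by_cases hl' : l = []
      · subst hl'; right; simpa using h
      rcases ih hl' fun b hb => h b (by simp [hb]) with h0 | h0 | h0
      · left; rw [List.prod_cons, h0, mul_zero]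
      · rcases h a (by simp) with ha | ha
        · right; left; simpa using ⟨ha, h0⟩
        · left
          obtain ⟨c, m, rfl⟩ := List.exists_cons_of_ne_nil hl'
          rw [List.prod_cons, List.prod_cons, ← mul_assoc, hTS a ha c (h0 c (by simp)), zero_mul]
      · rcases h a (by simp) with ha | ha
        · left
          obtain ⟨c, m, rfl⟩ := List.exists_cons_of_ne_nil hl'
          rw [List.prod_cons, List.prod_cons, ← mul_assoc, hST a ha c (h0 c (by simp)), zero_mul]
        · right; right; simpa using ⟨ha, h0⟩
  rcases key with h0 | h0 | h0
  · rw [h0, map_zero]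
  · exact hS _ (prod_mem_adjoin _ (NonUnitalAlgebra.subset_adjoin K) l hl h0)
  · exact hT _ (prod_mem_adjoin _ (NonUnitalAlgebra.subset_adjoin K) l hl h0)

lemma center_arith {m p p' e e' : ℕ} (hp : 2 ≤ p) (hp' : 2 ≤ p') (h3 : m = p * e) (h3' : m = p' * e')
    (hsum : e + e' + 1 = m) (h2 : 2 ≤ m) :
    (m = 3 ∧ p = 3 ∧ p' = 3) ∨ (m = 4 ∧ p = 2 ∧ p' = 4) ∨
          (m = 4 ∧ p = 4 ∧ p' = 2) ∨ (m = 6 ∧ p = 2 ∧ p' = 3) ∨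
          (m = 6 ∧ p = 3 ∧ p' = 2) := by
  have he : 0 < e := by
    rcases Nat.eq_zero_or_pos e with rfl | h
    · simp at h3; omega
    · exact h
  have he' : 0 < e' := by
    rcases Nat.eq_zero_or_pos e' with rfl | h
    · simp at h3'; omega
    · exact h
  have q : ∀ p : ℕ, 2 ≤ p → p = 2 ∨ p = 3 ∨ 4 ≤ p := by omega
  have hm : m ≤ 6 := by
    rcases q p hp with rfl | rfl | h
    · rcases q p' hp' with rfl | rfl | h'
      · omega
      · omega
      · have : 4 * e' ≤ p' * e' := Nat.mul_le_mul_right _ h'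
        omega
    · rcases q p' hp' with rfl | rfl | h'
      · omega
      · omega
      · have : 4 * e' ≤ p' * e' := Nat.mul_le_mul_right _ h'
        omega
    · have : 4 * e ≤ p * e := Nat.mul_le_mul_right _ h
      have : 2 * e' ≤ p' * e' := Nat.mul_le_mul_right _ hp'
      omega
  have b1 : e ≤ 5 := by omega
  have b2 : e' ≤ 5 := by omega
  interval_cases e <;> interval_cases e' <;> omega

namespace PD
variable {K B V D : Type*} [Field K] [CharZero K] [Ring B] [Algebra K B] [Fintype D] [DecidableEq V]
  (P : PD K B V D)

lemma X_mul_G {A : Finset V} {d : D} (hd : P.tl d ∉ A) {g : B} (hg : g ∈ P.G A) : P.X d * g = 0 := by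
  obtain ⟨e, he, ⟨_, rfl⟩ | ⟨_, rfl⟩⟩ := hg
  · exact P.XX _ _ fun h => hd (by rw [tl, h]; exact he)
  · rw [y, mul_smul_comm, ← mul_assoc, P.XX _ _ fun h => hd (by rw [tl, h]; exact he)]; simp

lemma G_mul_X {A : Finset V} {d : D} (hd : P.hd d ∉ A) {g : B} (hg : g ∈ P.G A) : g * P.X d = 0 := by
  obtain ⟨e, he, ⟨h1, rfl⟩ | ⟨_, rfl⟩⟩ := hg
  · exact P.XX _ _ fun h => hd (by rw [← h]; exact h1)
  · rw [y, smul_mul_assoc, mul_assoc, P.XX _ _ fun h => hd (by rw [← h, P.rev_rev]; exact he)]; simp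

set_option maxHeartbeats 1600000 in
/-- the center lemma. -/
lemma center (A : Finset V) (Z : Set D) (hI : P.Inv A Z) (i : V) (hi : i ∈ A) (h0 : P.act A i = ∅) :
    ∀ b ∈ NonUnitalAlgebra.adjoin K {b | ∃ d ∈ P.bd A i, b = P.y d}, P.f b = 0 := by
  classical
  have hδ := P.δ_split A i
  have hy := P.y_split A i
  rw [h0, Finset.sum_empty, zero_add] at hδ hy
  have hpos := P.δ_pos i
  have hfy : ∀ d ∈ P.bd A i, ∀ k, 1 ≤ k → P.f (P.y d ^ k) = 0 := by
    intro d hd; obtain ⟨rfl, ht⟩ := P.mem_bd.1 hd; exact hI.fy d hi ht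
  obtain ⟨z, hz1, hz2, hz3⟩ := hI.cov {i} (by simpa using hi) (by simp) (by
    intro d hd ht
    have : d ∈ P.act A i := P.mem_act.2 ⟨by simpa using hd, ht⟩
    rw [h0] at this; simp at this)
  rw [Finset.mem_singleton] at hz1
  have hzb : z ∈ P.bd A i := P.mem_bd.2 ⟨hz1, hz2⟩
  have hzL := hI.labZ z (hz1 ▸ hi) hz2 hz3
  rw [LabZ, hz1] at hzL
  -- vertex of dimension one
  by_cases h1 : P.δ i = 1
  · have hone : ∀ d ∈ P.bd A i, P.δ (P.tl d) = 1 := by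
      intro d hd
      obtain ⟨rfl, ht⟩ := P.mem_bd.1 hd
      have := P.δ_pos (P.tl d)
      by_cases hZ : d ∈ Z
      · rcases hI.labZ d hi ht hZ with ⟨h, -⟩ | h | h <;> omega
      · have := P.labR_facts (hI.labR d hi ht hZ); omega
    rw [Finset.sum_congr rfl hone, Finset.sum_const, smul_eq_mul, mul_one, h1] at hδ
    obtain ⟨a, b, hab, hbd⟩ := Finset.card_eq_two.1 hδ
    rw [hbd, Finset.sum_pair hab] at hy
    intro c hc
    refine center_A P.f P.fcyc (P.y a) (P.y b) hy (hfy a (by simp [hbd])) c ?_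
    refine NonUnitalAlgebra.adjoin_mono ?_ hc
    rintro _ ⟨d, hd, rfl⟩
    rw [hbd] at hd; simp at hd; rcases hd with rfl | rfl <;> simp
  have h2 : 2 ≤ P.δ i := by omega
  have hR : ∀ d ∈ (P.bd A i).erase z, P.LabR d ∧ P.hd d = i := by
    intro d hd
    obtain ⟨hne, hd⟩ := Finset.mem_erase.1 hd
    obtain ⟨e, ht⟩ := P.mem_bd.1 hd
    refine ⟨hI.labR d (e ▸ hi) ht fun hZ => hne ?_, e⟩
    exact hI.uniq z d (hz1 ▸ hi) hz2 hz3 (e ▸ hi) ht hZ (hz1 ▸ h2)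
  rw [← Finset.add_sum_erase _ _ hzb] at hδ hy
  have hins : P.bd A i = insert z ((P.bd A i).erase z) := (Finset.insert_erase hzb).symm
  set E := (P.bd A i).erase z with hE
  have hlow : E.card * P.δ i ≤ 2 * ∑ d ∈ E, P.δ (P.tl d) := by
    rw [Finset.mul_sum, ← smul_eq_mul, ← Finset.sum_const]
    refine Finset.sum_le_sum fun d hd => ?_
    have := P.labR_facts (hR d hd).1
    rw [(hR d hd).2] at this; exact this.1
  have hup : ∑ d ∈ E, P.δ (P.tl d) + E.card ≤ E.card * P.δ i := by
    rw [Finset.card_eq_sum_ones, ← Finset.sum_add_distrib, Finset.sum_mul]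
    refine Finset.sum_le_sum fun d hd => ?_
    have := P.labR_facts (hR d hd).1
    rw [(hR d hd).2] at this; omega
  have hsub : ∀ a b : D, E = {a, b} →
      ({b | ∃ d ∈ P.bd A i, b = P.y d} : Set B) ⊆ {P.y a, P.y b, P.y z} := by
    rintro a b hab _ ⟨d, hd, rfl⟩
    rw [hins, hab] at hd; simp at hd; rcases hd with rfl | rfl | rfl <;> simp
  have hEbd : ∀ d ∈ E, d ∈ P.bd A i := fun d hd => Finset.mem_of_mem_erase hd
  have hyz : P.δ i = 2 → ∀ d ∈ E, P.y d ^ 2 = 0 := by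
    intro h d hd
    obtain ⟨⟨p, e, hp, h3, h4, h5⟩, h6⟩ := hR d hd
    rw [h6, h] at h3 h4
    have : p ≤ 2 := Nat.le_of_dvd (by norm_num) ⟨e, h3⟩
    have : p = 2 := by omega
    rw [← this]; exact h5
  rcases hzL with ⟨hz, hzp⟩ | hz | ⟨hz, hz'⟩
  · -- type alpha
    have hc3 : E.card = 2 ∨ E.card = 3 ∧ P.δ i = 2 := by
      have k1 : 2 ≤ E.card := by
        by_contra hlt
        have : E.card = 0 ∨ E.card = 1 := by omega
        rcases this with h | h <;> rw [h] at hup <;> omega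
      have k2 : E.card ≤ 3 := by
        by_contra hlt
        have : 4 * P.δ i ≤ E.card * P.δ i := Nat.mul_le_mul_right _ (by omega)
        omega
      have : E.card = 2 ∨ E.card = 3 := by omega
      rcases this with h | h
      · exact Or.inl h
      · rw [h] at hlow; exact Or.inr ⟨h, by omega⟩
    rcases hc3 with hc | ⟨hc, hd2⟩
    · obtain ⟨a, b, hab, hEab⟩ := Finset.card_eq_two.1 hc
      have haE : a ∈ E := by simp [hEab]
      have hbE : b ∈ E := by simp [hEab]
      rw [hEab, Finset.sum_pair hab] at hδ hy
      obtain ⟨⟨p, e, hp, h3, h4, h5⟩, h6⟩ := hR a haE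
      obtain ⟨⟨p', e', hp', h3', h4', h5'⟩, h6'⟩ := hR b hbE
      rw [h6] at h3 h4
      rw [h6'] at h3' h4'
      have hsum : e + e' + 1 = P.δ i := by omega
      have hcases : (P.δ i = 3 ∧ p = 3 ∧ p' = 3) ∨ (P.δ i = 4 ∧ p = 2 ∧ p' = 4) ∨
          (P.δ i = 4 ∧ p = 4 ∧ p' = 2) ∨ (P.δ i = 6 ∧ p = 2 ∧ p' = 3) ∨
          (P.δ i = 6 ∧ p = 3 ∧ p' = 2) :=
        center_arith hp hp' h3 h3' hsum h2
      have ca := hfy a (hEbd a haE)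
      have cb := hfy b (hEbd b hbE)
      have cz := hfy z hzb
      intro c hc'
      have hc' := NonUnitalAlgebra.adjoin_mono (R := K) (hsub a b hEab) hc'
      rcases hcases with ⟨hm, rfl, rfl⟩ | ⟨hm, rfl, rfl⟩ | ⟨hm, rfl, rfl⟩ | ⟨hm, rfl, rfl⟩ |
        ⟨hm, rfl, rfl⟩
      · have hz2 : P.δ (P.tl z) = 2 := by omega
        rw [hz2] at hzp
        refine center_E P.f P.fcyc (P.y z) (P.y a) (P.y b) (by rw [← hy]; abel) 3 (by simp)
          hzp h5 h5' cz ca cb c ?_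
        rwa [show ({P.y a, P.y b, P.y z} : Set B) = {P.y z, P.y a, P.y b} by
          ext; simp; tauto] at hc'
      · have hz2 : P.δ (P.tl z) = 3 := by omega
        rw [hz2] at hzp
        refine center_E P.f P.fcyc (P.y a) (P.y z) (P.y b) (by rw [← hy]; abel) 4 (by simp)
          h5 hzp h5' ca cz cb c ?_
        rwa [show ({P.y a, P.y b, P.y z} : Set B) = {P.y a, P.y z, P.y b} by
          ext; simp; tauto] at hc'
      · have hz2 : P.δ (P.tl z) = 3 := by omega
        rw [hz2] at hzp
        refine center_E P.f P.fcyc (P.y b) (P.y z) (P.y a) (by rw [← hy]; abel) 4 (by simp)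
          h5' hzp h5 cb cz ca c ?_
        rwa [show ({P.y a, P.y b, P.y z} : Set B) = {P.y b, P.y z, P.y a} by
          ext; simp; tauto] at hc'
      · have hz2 : P.δ (P.tl z) = 5 := by omega
        rw [hz2] at hzp
        exact center_E P.f P.fcyc (P.y a) (P.y b) (P.y z) (by rw [← hy]; abel) 5 (by simp)
          h5 h5' hzp ca cb cz c hc'
      · have hz2 : P.δ (P.tl z) = 5 := by omega
        rw [hz2] at hzp
        refine center_E P.f P.fcyc (P.y b) (P.y a) (P.y z) (by rw [← hy]; abel) 5 (by simp)
          h5' h5 hzp cb ca cz c ?_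
        rwa [show ({P.y a, P.y b, P.y z} : Set B) = {P.y b, P.y a, P.y z} by
          ext; simp; tauto] at hc'
    · obtain ⟨a, b, e, hab, hae, hbe, hEab⟩ := Finset.card_eq_three.1 hc
      have hz1 : P.δ (P.tl z) = 1 := by omega
      rw [hz1, pow_one] at hzp
      rw [hEab, Finset.sum_insert (by simp [hab, hae]), Finset.sum_pair hbe, hzp, zero_add,
        ← add_assoc] at hy
      intro c hc'
      refine center_D P.f P.fcyc (P.y a) (P.y b) (P.y e) hy (hyz hd2 a (by simp [hEab]))
        (hyz hd2 b (by simp [hEab])) (hfy a (hEbd a (by simp [hEab])))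
        (hfy b (hEbd b (by simp [hEab]))) (hfy e (hEbd e (by simp [hEab]))) c ?_
      refine NonUnitalAlgebra.adjoin_le ?_ hc'
      rintro _ ⟨d, hd, rfl⟩
      rw [hins, hEab] at hd; simp at hd
      rcases hd with rfl | rfl | rfl | rfl
      · rw [hzp]; exact zero_mem _
      all_goals exact NonUnitalAlgebra.subset_adjoin K (by simp)
  · omega
  · -- type gamma
    rw [hz] at hlow hup
    have hc : E.card = 2 := by omega
    obtain ⟨a, b, hab, hEab⟩ := Finset.card_eq_two.1 hc
    rw [hEab, Finset.sum_pair hab] at hy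
    intro c hc'
    exact center_D P.f P.fcyc (P.y a) (P.y b) (P.y z) (by rw [← hy]; abel)
      (hyz hz a (by simp [hEab])) (hyz hz b (by simp [hEab])) (hfy a (hEbd a (by simp [hEab])))
      (hfy b (hEbd b (by simp [hEab]))) (hfy z hzb) c
      (NonUnitalAlgebra.adjoin_mono (hsub a b hEab) hc')

end PD


namespace PD
variable {K B V D : Type*} [Field K] [CharZero K] [Ring B] [Algebra K B] [Fintype D] [DecidableEq V]
  (P : PD K B V D)

lemma tl_eq_of_rev {d e : D} (h : P.rev d = e) : d = P.rev e := by rw [← h, P.rev_rev]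

lemma step_empty_inv (A : Finset V) (Z : Set D) (hI : P.Inv A Z) (i : V)
    (h0 : P.act A i = ∅) : P.Inv (A.erase i) Z := by
  have hb : ∀ d, P.hd d ∈ A.erase i → P.tl d ∉ A.erase i → P.hd d ∈ A ∧ P.tl d ∉ A := by
    intro d h1 h2
    refine ⟨Finset.mem_of_mem_erase h1, fun h3 => ?_⟩
    have h4 : P.tl d = i := by
      by_contra hne; exact h2 (Finset.mem_erase.2 ⟨hne, h3⟩)
    have : P.rev d ∈ P.act A i := P.mem_act.2 ⟨h4, by rw [tl_rev]; exact Finset.mem_of_mem_erase h1⟩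
    rw [h0] at this; simp at this
  refine ⟨?_, ?_, ?_, ?_, ?_⟩
  · intro d h1 h2; obtain ⟨h1, h2⟩ := hb d h1 h2; exact hI.fy d h1 h2
  · intro d h1 h2; obtain ⟨h1, h2⟩ := hb d h1 h2; exact hI.labR d h1 h2
  · intro d h1 h2; obtain ⟨h1, h2⟩ := hb d h1 h2; exact hI.labZ d h1 h2
  · intro d d' h1 h2 hz h3 h4
    obtain ⟨h1, h2⟩ := hb d h1 h2
    obtain ⟨h3, h4⟩ := hb d' h3 h4
    exact hI.uniq d d' h1 h2 hz h3 h4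
  · intro T hT hne hcl
    obtain ⟨d, h1, h2, h3⟩ := hI.cov T (hT.trans (Finset.erase_subset _ _)) hne (by
      intro d hd ht
      refine hcl d hd (Finset.mem_erase.2 ⟨fun h => ?_, ht⟩)
      have : P.rev d ∈ P.act A i :=
        P.mem_act.2 ⟨h, by rw [tl_rev]; exact Finset.mem_of_mem_erase (hT hd)⟩
      rw [h0] at this; simp at this)
    exact ⟨d, h1, fun h => h2 (Finset.mem_of_mem_erase h), h3⟩

lemma step_empty_W (A : Finset V) (Z : Set D) (hI : P.Inv A Z) (i : V) (hi : i ∈ A)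
    (h0 : P.act A i = ∅) (hW : P.W (A.erase i)) : P.W A := by
  have hni : i ∉ A.erase i := Finset.notMem_erase _ _
  intro b hb
  refine van_union P.f (P.G (A.erase i)) {b | ∃ d ∈ P.bd A i, b = P.y d} hW
    (P.center A Z hI i hi h0) ?_ ?_ b ?_
  · rintro s hs _ ⟨d, hd, rfl⟩
    rw [y, mul_smul_comm, ← mul_assoc, P.G_mul_X (by rw [(P.mem_bd.1 hd).1]; exact hni) hs]; simp
  · rintro _ ⟨d, hd, rfl⟩ s hs
    rw [y, smul_mul_assoc, mul_assoc,
      P.X_mul_G (by rw [tl_rev, (P.mem_bd.1 hd).1]; exact hni) hs]; simp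
  · refine NonUnitalAlgebra.adjoin_mono ?_ hb
    rintro c ⟨d, h1, h2⟩
    by_cases hdi : P.hd d = i
    · rcases h2 with ⟨h2, rfl⟩ | ⟨h2, rfl⟩
      · have : d ∈ P.act A i := P.mem_act.2 ⟨hdi, h2⟩
        rw [h0] at this; simp at this
      · right; exact ⟨d, P.mem_bd.2 ⟨hdi, h2⟩, rfl⟩
    · left
      refine ⟨d, Finset.mem_erase.2 ⟨hdi, h1⟩, ?_⟩
      rcases h2 with ⟨h2, rfl⟩ | ⟨h2, rfl⟩
      · left
        refine ⟨Finset.mem_erase.2 ⟨fun h => ?_, h2⟩, rfl⟩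
        have : P.rev d ∈ P.act A i := P.mem_act.2 ⟨h, by rw [tl_rev]; exact h1⟩
        rw [h0] at this; simp at this
      · right; exact ⟨fun h => h2 (Finset.mem_of_mem_erase h), rfl⟩

lemma pow_swap (a b : B) (m : ℕ) : (a * b) ^ (m + 1) = a * (b * a) ^ m * b := by
  induction m with
  | zero => simp
  | succ m ih => rw [pow_succ, ih, pow_succ]; noncomm_ring

lemma y_rev_pow (d : D) (m : ℕ) : P.y (P.rev d) ^ (m + 1) =
    (P.eps (P.rev d) ^ (m + 1) * P.eps d ^ m) • (P.X (P.rev d) * P.y d ^ m * P.X d) := by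
  rw [y, y, P.rev_rev, smul_pow, smul_pow, pow_swap, mul_smul_comm, smul_mul_assoc, smul_smul,
    mul_assoc (P.eps (P.rev d) ^ (m + 1)), ← mul_pow, P.eps_sq, one_pow, mul_one]

lemma f_y_rev_pow (d : D) (m : ℕ) (h : P.f (P.y d ^ (m + 1)) = 0) :
    P.f (P.y (P.rev d) ^ (m + 1)) = 0 := by
  rw [y_rev_pow, map_smul, mul_assoc, P.fcyc, mul_assoc]
  have : P.X d * P.X (P.rev d) = P.eps d • P.y d := by rw [y, smul_smul, P.eps_sq, one_smul]
  rw [this, mul_smul_comm, ← pow_succ, map_smul, h]; simp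

open Classical in
lemma step_local (A : Finset V) (Z : Set D) (hI : P.Inv A Z) (i : V) (hi : i ∈ A) (d' : D)
    (h0 : P.act A i = {d'}) (h1 : ((P.bd A i).filter fun d => ¬ P.FZ Z d).card ≤ 1) :
    (∀ e ∈ P.bd A i, P.y e = 0 ∨ P.y e = - P.y d') ∧
    (∀ k, 1 ≤ k → P.f (P.y d' ^ k) = 0) ∧
    ((∀ e ∈ P.bd A i, e ∉ Z) → P.LabR (P.rev d')) ∧
    ((∃ e ∈ P.bd A i, e ∈ Z) → P.LabZ (P.rev d')) ∧
    ((∃ e ∈ P.bd A i, e ∈ Z) → 2 ≤ P.δ (P.tl d') → 2 ≤ P.δ i) := by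
  have hy := P.y_split A i
  have hδ := P.δ_split A i
  rw [h0, Finset.sum_singleton] at hy hδ
  have hd' : P.hd d' = i := (P.mem_act.1 (by rw [h0]; simp : d' ∈ P.act A i)).1
  have e1 : P.tl (P.rev d') = i := by rw [tl_rev, hd']
  have e2 : P.hd (P.rev d') = P.tl d' := rfl
  have hpow : ∀ p, P.y d' ^ p = 0 → P.y (P.rev d') ^ (p + 1) = 0 := by
    intro p h; rw [y_rev_pow, h]; simp
  have hpos := P.δ_pos i
  rw [LabR, LabZ, e1, e2]
  -- case split on the set
  have hcase : P.bd A i = ∅ ∨ (∃ e, P.bd A i = {e} ∧ ¬ P.FZ Z e) ∨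
      (∃ z, P.FZ Z z ∧ (P.bd A i = {z} ∨ ∃ e, e ∉ Z ∧ e ≠ z ∧ P.bd A i = {z, e})) := by
    by_cases hz : ∃ z ∈ P.bd A i, P.FZ Z z
    · obtain ⟨z, hz, hF⟩ := hz
      obtain ⟨z1, z2⟩ := P.mem_bd.1 hz
      right; right
      refine ⟨z, hF, ?_⟩
      have hNZ : ∀ e ∈ P.bd A i, e ≠ z → e ∉ Z := by
        intro e he hne heZ
        obtain ⟨w1, w2⟩ := P.mem_bd.1 he
        exact hne (hI.uniq z e (z1 ▸ hi) z2 hF.1 (w1 ▸ hi) w2 heZ (by rw [hF.2.1]))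
      have hsub : (P.bd A i).erase z ⊆ (P.bd A i).filter fun d => ¬ P.FZ Z d := by
        intro e he
        obtain ⟨hne, he⟩ := Finset.mem_erase.1 he
        exact Finset.mem_filter.2 ⟨he, fun h => hNZ e he hne h.1⟩
      have hc := (Finset.card_le_card hsub).trans h1
      rcases Nat.le_one_iff_eq_zero_or_eq_one.1 hc with h | h
      · left
        rw [← Finset.insert_erase hz, Finset.card_eq_zero.1 h]; rfl
      · obtain ⟨e, he⟩ := Finset.card_eq_one.1 h
        have hee : e ∈ (P.bd A i).erase z := by simp [he]
        obtain ⟨hne, he'⟩ := Finset.mem_erase.1 hee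
        right
        exact ⟨e, hNZ e he' hne, hne, by rw [← he, Finset.insert_erase hz]⟩
    · push Not at hz
      rw [Finset.filter_true_of_mem hz] at h1
      rcases Nat.le_one_iff_eq_zero_or_eq_one.1 h1 with h | h
      · left; exact Finset.card_eq_zero.1 h
      · obtain ⟨e, he⟩ := Finset.card_eq_one.1 h
        right; left; exact ⟨e, he, hz e (by simp [he])⟩
  have hbd : ∀ e ∈ P.bd A i, P.hd e = i ∧ P.tl e ∉ A := fun e he => P.mem_bd.1 he
  rcases hcase with hb | ⟨e, hb, hF⟩ | ⟨z, hF, hb⟩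
  · rw [hb, Finset.sum_empty, add_zero] at hy hδ
    rw [hb, hy]
    refine ⟨by simp, ?_, ?_, by simp, by simp⟩
    · intro k hk; rw [zero_pow (by omega), map_zero]
    · intro _
      exact ⟨2, P.δ i, le_refl _, by omega, by omega, hpow 1 (by rw [pow_one]; exact hy)⟩
  · obtain ⟨k1, k2⟩ := hbd e (by simp [hb])
    rw [hb, Finset.sum_singleton] at hy hδ
    have hye : P.y e = - P.y d' := eq_neg_of_add_eq_zero_right hy
    have hye' : P.y d' = - P.y e := eq_neg_of_add_eq_zero_left hy
    have hpow' : ∀ p, P.y e ^ p = 0 → P.y (P.rev d') ^ (p + 1) = 0 := by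
      intro p h; apply hpow; rw [hye', neg_pow, h, mul_zero]
    have hfy := hI.fy e (k1 ▸ hi) k2
    simp only [hb, Finset.mem_singleton, forall_eq, exists_eq_left]
    refine ⟨Or.inr hye, ?_, ?_, ?_, ?_⟩
    · intro k hk
      rw [hye', neg_pow]
      rcases neg_one_pow_eq_or B k with h | h <;> rw [h] <;> simp [hfy k hk]
    · intro hZ
      obtain ⟨p, q, hp, l1, l2, l3⟩ := hI.labR e (k1 ▸ hi) k2 hZ
      rw [k1] at l1 l2
      refine ⟨p + 1, q, by omega, ?_, by omega, hpow' p l3⟩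
      rw [add_mul]; omega
    · intro hZ
      have hL := hI.labZ e (k1 ▸ hi) k2 hZ
      rw [LabZ, k1] at hL
      rcases hL with ⟨l1, l2⟩ | l | l
      · left
        refine ⟨by omega, ?_⟩
        rw [l1]; exact hpow' _ l2
      · right; left; omega
      · right; right; omega
    · intro hZ h2
      have hL := hI.labZ e (k1 ▸ hi) k2 hZ
      rw [LabZ, k1] at hL
      have := P.δ_pos (P.tl e)
      rcases hL with ⟨l1, l2⟩ | l | l <;> omega
  · obtain ⟨hF1, hF2, hF3⟩ := hF
    have hzb : z ∈ P.bd A i := by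
      rcases hb with hb | ⟨e, _, _, hb⟩ <;> simp [hb]
    obtain ⟨k1, k2⟩ := hbd z hzb
    have hz0 : P.y z = 0 := by
      rcases hI.labZ z (k1 ▸ hi) k2 hF1 with ⟨l1, l2⟩ | l | l
      · rw [hF3, pow_one] at l2; exact l2
      · omega
      · omega
    rw [k1] at hF2
    rcases hb with hb | ⟨e, heZ, hne, hb⟩
    · rw [hb, Finset.sum_singleton] at hy hδ
      rw [hz0, add_zero] at hy
      simp only [hb, Finset.mem_singleton, forall_eq, exists_eq_left]
      refine ⟨Or.inl hz0, ?_, fun h => absurd hF1 h, ?_, fun _ _ => by omega⟩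
      · intro k hk; rw [hy, zero_pow (by omega), map_zero]
      · intro _; left
        refine ⟨by omega, ?_⟩
        rw [hF2]; exact hpow 1 (by rw [pow_one]; exact hy)
    · obtain ⟨m1, m2⟩ := hbd e (by simp [hb])
      rw [hb, Finset.sum_pair hne.symm] at hy hδ
      rw [hz0, zero_add] at hy
      have hye : P.y e = - P.y d' := eq_neg_of_add_eq_zero_right hy
      have hye' : P.y d' = - P.y e := eq_neg_of_add_eq_zero_left hy
      have hfy := hI.fy e (m1 ▸ hi) m2
      have hL := P.labR_facts (hI.labR e (m1 ▸ hi) m2 heZ)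
      rw [m1] at hL
      refine ⟨?_, ?_, fun h => absurd hF1 (h z hzb), ?_, fun _ _ => by omega⟩
      · intro c hc
        rw [hb] at hc; simp only [Finset.mem_insert, Finset.mem_singleton] at hc
        rcases hc with rfl | rfl
        · exact Or.inl hz0
        · exact Or.inr hye
      · intro k hk
        rw [hye', neg_pow]
        rcases neg_one_pow_eq_or B k with h | h <;> rw [h] <;> simp [hfy k hk]
      · intro _; right; right; omega

lemma step_one_inv (A : Finset V) (Z : Set D) (hI : P.Inv A Z) (i : V) (d' : D) (hi : i ∈ A)
    (h0 : P.act A i = {d'}) (hki : P.tl d' ≠ i)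
    (hf : ∀ k, 1 ≤ k → P.f (P.y d' ^ k) = 0)
    (hR : (∀ e ∈ P.bd A i, e ∉ Z) → P.LabR (P.rev d'))
    (hZ : (∃ e ∈ P.bd A i, e ∈ Z) → P.LabZ (P.rev d'))
    (hU : (∃ e ∈ P.bd A i, e ∈ Z) → 2 ≤ P.δ (P.tl d') → 2 ≤ P.δ i) :
    P.Inv (A.erase i) {d | (d ≠ P.rev d' ∧ d ∈ Z) ∨ (d = P.rev d' ∧ ∃ e ∈ P.bd A i, e ∈ Z)} := by
  obtain ⟨hd', hk⟩ := P.mem_act.1 (by rw [h0]; simp : d' ∈ P.act A i)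
  have hact : ∀ d, P.hd d = i → P.tl d ∈ A → d = d' := by
    intro d h1 h2
    have : d ∈ P.act A i := P.mem_act.2 ⟨h1, h2⟩
    rw [h0] at this; simpa using this
  have hact' : ∀ d, P.hd d ∈ A → P.tl d = i → d = P.rev d' := by
    intro d h1 h2
    rw [← hact (P.rev d) h2 (by rw [tl_rev]; exact h1), P.rev_rev]
  have e1 : P.tl (P.rev d') = i := by rw [tl_rev, hd']
  have e2 : P.hd (P.rev d') = P.tl d' := rfl
  have hb : ∀ d, P.hd d ∈ A.erase i → P.tl d ∉ A.erase i →
      d = P.rev d' ∨ (d ≠ P.rev d' ∧ P.hd d ∈ A ∧ P.tl d ∉ A) := by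
    intro d h1 h2
    have h1' := Finset.mem_of_mem_erase h1
    by_cases h : P.tl d = i
    · left; exact hact' d h1' h
    · right; exact ⟨fun h' => h (h' ▸ e1), h1', fun h3 => h2 (Finset.mem_erase.2 ⟨h, h3⟩)⟩
  refine ⟨?_, ?_, ?_, ?_, ?_⟩
  · intro d h1 h2 k hk
    rcases hb d h1 h2 with rfl | ⟨-, h1, h2⟩
    · obtain ⟨m, rfl⟩ : ∃ m, k = m + 1 := ⟨k - 1, by omega⟩
      exact P.f_y_rev_pow d' m (hf _ hk)
    · exact hI.fy d h1 h2 k hk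
  · intro d h1 h2 h3
    simp only [Set.mem_setOf_eq] at h3
    push Not at h3
    rcases hb d h1 h2 with rfl | ⟨h4, h1, h2⟩
    · exact hR (h3.2 rfl)
    · exact hI.labR d h1 h2 (h3.1 h4)
  · rintro d h1 h2 (⟨h4, h5⟩ | ⟨rfl, h5⟩)
    · rcases hb d h1 h2 with rfl | ⟨-, h1, h2⟩
      · exact absurd rfl h4
      · exact hI.labZ d h1 h2 h5
    · exact hZ h5
  · intro d c h1 h2 h3 h4 h5 h6 h7
    have hnoti : ∀ x, P.hd x ∈ A.erase i → P.hd x ≠ i := fun x h => (Finset.mem_erase.1 h).1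
    rcases h3 with ⟨h3, h3'⟩ | ⟨rfl, e, he, heZ⟩
    · obtain ⟨q1, q2⟩ := (hb d h1 h2).resolve_left h3 |>.2
      rcases h6 with ⟨h6, h6'⟩ | ⟨rfl, e, he, heZ⟩
      · obtain ⟨q3, q4⟩ := (hb c h4 h5).resolve_left h6 |>.2
        exact hI.uniq d c q1 q2 h3' q3 q4 h6' h7
      · obtain ⟨w1, w2⟩ := P.mem_bd.1 he
        have := hI.uniq d e q1 q2 h3' (w1 ▸ hi) w2 heZ h7
        exact absurd (this ▸ w1) (hnoti d h1)
    · rcases h6 with ⟨h6, h6'⟩ | ⟨rfl, _⟩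
      · obtain ⟨q3, q4⟩ := (hb c h4 h5).resolve_left h6 |>.2
        obtain ⟨w1, w2⟩ := P.mem_bd.1 he
        have := hI.uniq e c (w1 ▸ hi) w2 heZ q3 q4 h6' (by rw [w1]; exact hU ⟨e, he, heZ⟩ h7)
        exact absurd (this ▸ w1) (hnoti c h4)
      · rfl
  · intro T hT hne hcl
    by_cases hkT : P.tl d' ∈ T
    · obtain ⟨d, h1, h2, h3⟩ := hI.cov (insert i T) (by
        intro x hx
        rcases Finset.mem_insert.1 hx with rfl | hx
        · exact hi
        · exact Finset.mem_of_mem_erase (hT hx)) (by simp) (by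
        intro d hd ht
        rcases Finset.mem_insert.1 hd with hd | hd
        · rw [hact d hd ht]; exact Finset.mem_insert_of_mem hkT
        · by_cases h : P.tl d = i
          · rw [h]; exact Finset.mem_insert_self _ _
          · exact Finset.mem_insert_of_mem (hcl d hd (Finset.mem_erase.2 ⟨h, ht⟩)))
      rcases Finset.mem_insert.1 h1 with h1 | h1
      · refine ⟨P.rev d', hkT, by rw [e1]; exact Finset.notMem_erase _ _, Or.inr ⟨rfl, d, ?_, h3⟩⟩
        exact P.mem_bd.2 ⟨h1, h2⟩
      · refine ⟨d, h1, fun h => h2 (Finset.mem_of_mem_erase h), Or.inl ⟨?_, h3⟩⟩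
        rintro rfl
        exact h2 (e1 ▸ hi)
    · obtain ⟨d, h1, h2, h3⟩ := hI.cov T (hT.trans (Finset.erase_subset _ _)) hne (by
        intro d hd ht
        refine hcl d hd (Finset.mem_erase.2 ⟨fun h => hkT ?_, ht⟩)
        have := hact' d (Finset.mem_of_mem_erase (hT hd)) h
        rw [this] at hd; exact hd)
      refine ⟨d, h1, fun h => h2 (Finset.mem_of_mem_erase h), Or.inl ⟨?_, h3⟩⟩
      rintro rfl
      exact h2 (e1 ▸ hi)

lemma step_one_W (A : Finset V) (i : V) (d' : D)
    (h0 : P.act A i = {d'}) (hki : P.tl d' ≠ i)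
    (hy : ∀ e ∈ P.bd A i, P.y e = 0 ∨ P.y e = - P.y d') (hW : P.W (A.erase i)) : P.W A := by
  obtain ⟨hd', hk⟩ := P.mem_act.1 (by rw [h0]; simp : d' ∈ P.act A i)
  have e1 : P.tl (P.rev d') = i := by rw [tl_rev, hd']
  have e2 : P.hd (P.rev d') = P.tl d' := rfl
  have hact : ∀ d, P.hd d = i → P.tl d ∈ A → d = d' := by
    intro d h1 h2
    have : d ∈ P.act A i := P.mem_act.2 ⟨h1, h2⟩
    rw [h0] at this; simpa using this
  have hni : i ∉ A.erase i := Finset.notMem_erase _ _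
  intro b hb
  refine van_step P.f P.fcyc (P.G (A.erase i)) hW (P.X (P.rev d')) (P.X d') (P.y (P.rev d'))
    (P.eps (P.rev d')) ?_ ?_ ?_ ?_ ?_ ?_ ?_ ?_ b ?_
  · exact ⟨P.rev d', Finset.mem_erase.2 ⟨hki, hk⟩, Or.inr ⟨by rw [e1]; exact hni, rfl⟩⟩
  · rw [y, smul_smul, P.eps_sq, one_smul, P.rev_rev]
  · intro g hg; exact P.X_mul_G (by rw [e1]; exact hni) hg
  · intro g hg; exact P.G_mul_X (by rw [hd']; exact hni) hg
  · exact P.XX _ _ (by rw [P.rev_rev, hd']; exact hki.symm)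
  · exact P.XX _ _ (by rw [hd']; exact hki)
  · exact P.fX _ (by rw [P.rev_rev, hd']; exact hki)
  · exact P.fX _ (by rw [hd']; exact hki.symm)
  · refine NonUnitalAlgebra.adjoin_le ?_ hb
    have hsub := NonUnitalAlgebra.subset_adjoin K
      (s := P.G (A.erase i) ∪ {P.X (P.rev d'), P.X d'})
    rintro c ⟨d, h1, h2⟩
    by_cases hdi : P.hd d = i
    · rcases h2 with ⟨h2, rfl⟩ | ⟨h2, rfl⟩
      · rw [hact d hdi h2]; exact hsub (by simp)
      · rcases hy d (P.mem_bd.2 ⟨hdi, h2⟩) with h | h <;> rw [h]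
        · exact zero_mem _
        · rw [y]
          exact neg_mem (SMulMemClass.smul_mem _ (mul_mem (hsub (by simp)) (hsub (by simp))))
    · rcases h2 with ⟨h2, rfl⟩ | ⟨h2, rfl⟩
      · by_cases hti : P.tl d = i
        · have : d = P.rev d' := by
            rw [← hact (P.rev d) hti (by rw [tl_rev]; exact h1), P.rev_rev]
          rw [this]; exact hsub (by simp)
        · exact hsub (Or.inl ⟨d, Finset.mem_erase.2 ⟨hdi, h1⟩,
            Or.inl ⟨Finset.mem_erase.2 ⟨hti, h2⟩, rfl⟩⟩)
      · exact hsub (Or.inl ⟨d, Finset.mem_erase.2 ⟨hdi, h1⟩,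
            Or.inr ⟨fun h => h2 (Finset.mem_of_mem_erase h), rfl⟩⟩)

lemma W_of_inv (n : ℕ) : ∀ (A : Finset V) (Z : Set D), A.card = n → P.Inv A Z → P.W A := by
  induction n with
  | zero =>
    intro A Z hA _
    rw [Finset.card_eq_zero] at hA
    subst hA
    have : P.G ∅ = ∅ := by ext b; simp [G]
    intro b hb
    rw [this] at hb
    have hb' : b ∈ (⊥ : NonUnitalSubalgebra K B) := by simpa using hb
    rw [NonUnitalAlgebra.mem_bot] at hb'
    rw [hb', map_zero]
  | succ n ih =>
    intro A Z hA hI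
    obtain ⟨i, hi, h | ⟨h, h'⟩⟩ := P.exists_vertex A Z (Finset.card_pos.1 (by omega)) hI
    · exact P.step_empty_W A Z hI i hi h
        (ih _ Z (by rw [Finset.card_erase_of_mem hi]; omega) (P.step_empty_inv A Z hI i h))
    · obtain ⟨d', h0⟩ := Finset.card_eq_one.1 h
      obtain ⟨hd', hk⟩ := P.mem_act.1 (by rw [h0]; simp : d' ∈ P.act A i)
      have hki : P.tl d' ≠ i := by
        intro hk'
        have : P.rev d' ∈ P.act A i := P.mem_act.2 ⟨hk', by rw [tl_rev, hd']; exact hi⟩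
        rw [h0, Finset.mem_singleton] at this
        exact P.rev_ne d' this
      obtain ⟨l1, l2, l3, l4, l5⟩ := P.step_local A Z hI i hi d' h0 h'
      exact P.step_one_W A i d' h0 hki l1
        (ih _ _ (by rw [Finset.card_erase_of_mem hi]; omega)
          (P.step_one_inv A Z hI i d' hi h0 hki l2 l3 l4 l5))

theorem main [Fintype V] (l : List D) (hl : l ≠ []) : P.f (l.map P.X).prod = 0 := by
  classical
  by_cases hbad : ∃ d ∈ l, P.X d = 0
  · obtain ⟨d, hd, h⟩ := hbad
    rw [List.prod_eq_zero (by rw [← h]; exact List.mem_map_of_mem hd), map_zero]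
  push Not at hbad
  have hI : P.Inv (Finset.univ.erase P.v0) Set.univ := by
    have hb : ∀ d, P.tl d ∉ Finset.univ.erase P.v0 → P.tl d = P.v0 := by
      intro d h; simpa using h
    have hy : ∀ d, P.tl d ∉ Finset.univ.erase P.v0 → P.y d = 0 := by
      intro d h; rw [y, P.X0' d (hb d h)]; simp
    have hmem : ∀ d, P.tl d = P.v0 → P.rev d ∈ Finset.univ.filter (fun e => P.hd e = P.v0) := by
      intro d h; exact Finset.mem_filter.2 ⟨Finset.mem_univ _, h⟩
    have hs := P.δ_sum P.v0
    rw [P.δ_v0] at hs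
    refine ⟨?_, ?_, ?_, ?_, ?_⟩
    · intro d _ h k hk; rw [hy d h, zero_pow (by omega), map_zero]
    · intro d _ _ h; exact absurd (Set.mem_univ _) h
    · intro d _ h _
      have h1 := Finset.single_le_sum (f := fun e => P.δ (P.hd (P.rev e)))
        (fun _ _ => Nat.zero_le _) (hmem d (hb d h))
      simp only [P.rev_rev] at h1
      have := P.δ_pos (P.hd d)
      rw [LabZ, hb d h, P.δ_v0, pow_one, hy d h]
      have : P.δ (P.hd d) = 1 ∨ P.δ (P.hd d) = 2 := by omega
      rcases this with h | h
      · right; left; exact ⟨h, rfl⟩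
      · left; exact ⟨h, rfl⟩
    · intro d d' _ h _ _ h' _ h2
      by_contra hne
      have hne' : P.rev d' ≠ P.rev d := fun h => hne (by rw [← P.rev_rev d', h, P.rev_rev])
      have : P.δ (P.hd d') + P.δ (P.hd d) ≤ 2 * 1 := by
        rw [← hs]
        have := Finset.sum_pair (f := fun e => P.δ (P.hd (P.rev e))) hne'
        simp only [P.rev_rev] at this
        rw [← this]
        refine Finset.sum_le_sum_of_subset ?_
        intro e he
        simp only [Finset.mem_insert, Finset.mem_singleton] at he
        rcases he with rfl | rfl
        · exact hmem _ (hb _ h')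
        · exact hmem _ (hb _ h)
      have := P.δ_pos (P.hd d')
      omega
    · intro T hT hne hcl
      by_contra! hcon
      have := P.conn (T : Set V) (by simpa using hne) (by
        intro d hd
        by_contra h
        have h1 : P.tl d ∉ Finset.univ.erase P.v0 := fun h' => h (hcl d hd h')
        exact hcon d hd h1 (Set.mem_univ _))
      have := hT (Finset.mem_coe.1 this)
      simp at this
  refine P.W_of_inv _ _ _ rfl hI _ (prod_mem_adjoin _ (NonUnitalAlgebra.subset_adjoin K) _
    (by simpa using hl) ?_)
  intro b hb
  obtain ⟨d, hd, rfl⟩ := List.mem_map.1 hb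
  have h1 : P.hd d ≠ P.v0 := fun h => hbad d hd (P.X0 d h)
  have h2 : P.tl d ≠ P.v0 := fun h => hbad d hd (P.X0' d h)
  exact ⟨d, by simpa using h1, Or.inl ⟨by simpa using h2, rfl⟩⟩

end PD


lemma exists_quot {K A : Type*} [Field K] [Ring A] [Algebra K A] (f : A →ₗ[K] K)
    (hf : ∀ a b, f (a * b) = f (b * a)) :
    ∃ c : RingCon A, ∃ g : c.Quotient →ₗ[K] K,
      (∀ a : A, g (a : c.Quotient) = f a) ∧ (∀ a b, g (a * b) = g (b * a)) ∧
      ∀ a : A, (∀ u, f (u * a) = 0) → (a : c.Quotient) = 0 := by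
  let c : RingCon A :=
    { r := fun a b => ∀ u, f (u * a) = f (u * b)
      iseqv := ⟨fun _ _ => rfl, fun h u => (h u).symm, fun h1 h2 u => (h1 u).trans (h2 u)⟩
      mul' := by
        intro w x y z h1 h2 u
        calc f (u * (w * y)) = f ((y * u) * w) := by rw [← mul_assoc, hf, mul_assoc]
          _ = f ((y * u) * x) := h1 _
          _ = f ((u * x) * y) := by rw [mul_assoc, hf]
          _ = f ((u * x) * z) := h2 _
          _ = _ := by rw [mul_assoc]
      add' := by
        intro w x y z h1 h2 u
        rw [mul_add, mul_add, map_add, map_add, h1, h2] }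
  have hc : ∀ a b, c a b ↔ ∀ u, f (u * a) = f (u * b) := fun a b => Iff.rfl
  refine ⟨c, { toFun := Quotient.lift (fun a => f a) ?_, map_add' := ?_, map_smul' := ?_ }, ?_, ?_, ?_⟩
  · intro a b h
    have := (hc a b).1 h 1
    simpa using this
  · intro x y
    obtain ⟨a, rfl⟩ := Quotient.exists_rep x
    obtain ⟨b, rfl⟩ := Quotient.exists_rep y
    exact map_add f a b
  · intro k x
    obtain ⟨a, rfl⟩ := Quotient.exists_rep x
    exact map_smul f k a
  · intro a; rfl
  · intro x y
    obtain ⟨a, rfl⟩ := Quotient.exists_rep x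
    obtain ⟨b, rfl⟩ := Quotient.exists_rep y
    exact hf a b
  · intro a h
    exact (c.eq).2 fun u => by rw [h, mul_zero, map_zero]


lemma free_ext {K D : Type*} [Field K] (g : FreeAlgebra K D →ₗ[K] K)
    (h : ∀ l : List D, g ((l.map (FreeAlgebra.ι K)).prod) = 0) (u : FreeAlgebra K D) : g u = 0 := by
  have hu : u ∈ Subalgebra.toSubmodule (Algebra.adjoin K (Set.range (FreeAlgebra.ι K (X := D)))) := by
    rw [FreeAlgebra.adjoin_range_ι]; trivial
  rw [Algebra.adjoin_eq_span] at hu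
  induction hu using Submodule.span_induction with
  | mem x hx =>
    obtain ⟨l, hl, rfl⟩ := Submonoid.exists_list_of_mem_closure hx
    have : ∃ m : List D, l = m.map (FreeAlgebra.ι K) := by
      clear hx
      induction l with
      | nil => exact ⟨[], rfl⟩
      | cons a l ih =>
        obtain ⟨m, rfl⟩ := ih fun y hy => hl y (by simp [hy])
        obtain ⟨d, rfl⟩ := hl a (by simp)
        exact ⟨d :: m, rfl⟩
    obtain ⟨m, rfl⟩ := this
    exact h m
  | zero => simp
  | add x y _ _ hx hy => rw [map_add, hx, hy, add_zero]
  | smul c x _ hx => rw [map_smul, hx, smul_zero]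

open Polynomial in
lemma exists_word_functional {K R D J : Type*} [Field K] [CommRing R] [Algebra K R]
    [Fintype J] [DecidableEq J] (X : D → Matrix J J R) (φ : R →ₗ[K] K) (n : ℕ) :
    ∃ f : FreeAlgebra K D →ₗ[K] K, (∀ a b, f (a * b) = f (b * a)) ∧
      ∀ l : List D, f ((l.map (FreeAlgebra.ι K)).prod) =
        if l.length = n then φ (l.map X).prod.trace else 0 := by
  let Xt : D → Matrix J J R[X] := fun d => (Polynomial.X : R[X]) • (X d).map C
  let π : FreeAlgebra K D →ₐ[K] Matrix J J R[X] := FreeAlgebra.lift K Xt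
  let f : FreeAlgebra K D →ₗ[K] K := φ ∘ₗ ((Polynomial.lcoeff R n).restrictScalars K) ∘ₗ
    ((Matrix.traceLinearMap J K R[X]) ∘ₗ π.toLinearMap)
  have hf : ∀ a, f a = φ ((π a).trace.coeff n) := fun a => rfl
  have hw : ∀ l : List D, π ((l.map (FreeAlgebra.ι K)).prod) =
      (Polynomial.X ^ l.length : R[X]) • (l.map X).prod.map C := by
    intro l
    induction l with
    | nil => ext i j : 2; by_cases h : i = j <;> simp [Matrix.one_apply, h]
    | cons a l ih =>
      rw [List.map_cons, List.prod_cons, map_mul, ih, List.map_cons, List.prod_cons, Matrix.map_mul,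
        List.length_cons, pow_succ]
      simp only [π, FreeAlgebra.lift_ι_apply, Xt, Matrix.smul_mul, Matrix.mul_smul, smul_smul]
  refine ⟨f, fun a b => ?_, fun l => ?_⟩
  · rw [hf, hf, map_mul, map_mul, Matrix.trace_mul_comm]
  · rw [hf, hw, Matrix.trace_smul]
    have : ((l.map X).prod.map (C : R →+* R[X])).trace = C ((l.map X).prod.trace) := by
      simp [Matrix.trace, map_sum]
    rw [this, smul_eq_mul, mul_comm, Polynomial.coeff_C_mul_X_pow]
    by_cases h : l.length = n
    · simp [h]
    · simp [h, Ne.symm h]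

theorem trace_reduction {K R V D J : Type*} [Field K] [CharZero K] [CommRing R] [Algebra K R]
    [Fintype V] [DecidableEq V] [Fintype D] [Fintype J] [DecidableEq J]
    (hd : D → V) (rev : D → D) (eps : D → K) (δ : V → ℕ) (v0 : V)
    (X : D → Matrix J J R) (E : V → Matrix J J R) (lam : V → K) (S : Submodule K R)
    (rev_rev : ∀ d, rev (rev d) = d)
    (rev_ne : ∀ d, rev d ≠ d)
    (eps_sq : ∀ d, eps d * eps d = 1)
    (eps_rev : ∀ d, eps (rev d) = -eps d)
    (δ_pos : ∀ i, 0 < δ i)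
    (δ_sum : ∀ i, ∑ d with hd d = i, δ (hd (rev d)) = 2 * δ i)
    (δ_v0 : δ v0 = 1)
    (conn : ∀ T : Set V, T.Nonempty → (∀ d, hd d ∈ T → hd (rev d) ∈ T) → v0 ∈ T)
    (XX : ∀ a b, hd (rev a) ≠ hd b → X a * X b = 0)
    (rel : ∀ i, ∑ d with hd d = i, eps d • (X d * X (rev d)) = lam i • E i)
    (hEX : ∀ i d, E i * X d = if hd d = i then X d else 0)
    (trE : ∀ i, (E i).trace ∈ S)
    (trX : ∀ d, hd d ≠ hd (rev d) → (X d).trace = 0)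
    (hS : ∀ l : List D, (∃ d ∈ l, hd d = v0 ∨ hd (rev d) = v0) → (l.map X).prod.trace ∈ S) :
    ∀ n, ∀ l : List D, l ≠ [] → l.length = n → (l.map X).prod.trace ∈ S := by
  intro n
  induction n using Nat.strong_induction_on with
  | _ n IH =>
  intro l0 hl0 hn
  by_contra hcon
  obtain ⟨φ, hφ0, hφS⟩ := Submodule.exists_le_ker_of_notMem hcon
  have hφ : ∀ r ∈ S, φ r = 0 := fun r hr => by simpa using hφS hr
  obtain ⟨f, hcyc, hfw⟩ := exists_word_functional (K := K) X φ n
  obtain ⟨c, g, hg, hgc, hq⟩ := exists_quot f hcyc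
  let ι := FreeAlgebra.ι K (X := D)
  have hqz : ∀ b : FreeAlgebra K D, (∀ l : List D, f ((l.map ι).prod * b) = 0) →
      (b : c.Quotient) = 0 := by
    intro b hb
    apply hq
    intro u
    exact free_ext (f ∘ₗ LinearMap.mulRight K b) hb u
  have happ : ∀ (l m : List D), (l.map ι).prod * (m.map ι).prod = ((l ++ m).map ι).prod := by
    intro l m; simp
  let P : PD K c.Quotient V D :=
    { hd := hd, rev := rev, X := fun d => ((ι d : FreeAlgebra K D) : c.Quotient), eps := eps, δ := δ
      f := g, v0 := v0, rev_rev := rev_rev, rev_ne := rev_ne, eps_sq := eps_sq, eps_rev := eps_rev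
      δ_pos := δ_pos, δ_sum := δ_sum, δ_v0 := δ_v0, conn := conn, fcyc := hgc
      XX := by
        intro a b hab
        rw [← RingCon.coe_mul]
        apply hqz
        intro l
        have := happ l [a, b]
        simp only [List.map_cons, List.map_nil, List.prod_cons, List.prod_nil, mul_one] at this
        rw [this, hfw]
        simp [XX a b hab]
      rel := by
        intro i
        have : (∑ d with hd d = i, eps d • (((ι d : FreeAlgebra K D) : c.Quotient) *
            ((ι (rev d) : FreeAlgebra K D) : c.Quotient))) =
            ((∑ d with hd d = i, eps d • (ι d * ι (rev d)) : FreeAlgebra K D) : c.Quotient) := by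
          have hs := map_sum c.mk' (fun d => eps d • (ι d * ι (rev d)))
            (Finset.univ.filter fun d => hd d = i)
          exact hs.symm
        rw [this]
        apply hqz
        intro l
        rw [Finset.mul_sum, map_sum]
        have e : ∀ d, f ((l.map ι).prod * eps d • (ι d * ι (rev d))) = 
            if l.length + 2 = n then φ ((l.map X).prod * eps d • (X d * X (rev d))).trace else 0 := by
          intro d
          have := happ l [d, rev d]
          simp only [List.map_cons, List.map_nil, List.prod_cons, List.prod_nil, mul_one] at this
          rw [mul_smul_comm, map_smul, this, hfw]
          simp [mul_smul_comm, Matrix.trace_smul]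
        rw [Finset.sum_congr rfl fun d _ => e d]
        by_cases hl : l.length + 2 = n
        · simp only [hl, if_true]
          rw [← map_sum, ← Matrix.trace_sum, ← Finset.mul_sum, rel, mul_smul_comm, Matrix.trace_smul,
            map_smul]
          suffices h : φ ((l.map X).prod * E i).trace = 0 by rw [h, smul_zero]
          apply hφ
          rw [Matrix.trace_mul_comm]
          rcases l with _ | ⟨a, l⟩
          · simpa using trE i
          · rw [List.map_cons, List.prod_cons, ← mul_assoc, hEX]
            split_ifs
            · rw [← List.prod_cons, ← List.map_cons]
              exact IH (l.length + 1) (by rw [← hl]; simp) (a :: l) (by simp) (by simp)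
            · simp
        · simp [hl]
      X0 := by
        intro d h
        apply hqz
        intro l
        have := happ l [d]
        simp only [List.map_cons, List.map_nil, List.prod_cons, List.prod_nil, mul_one] at this
        rw [this, hfw, hφ _ (hS (l ++ [d]) ⟨d, by simp, Or.inl h⟩)]; simp
      X0' := by
        intro d h
        apply hqz
        intro l
        have := happ l [d]
        simp only [List.map_cons, List.map_nil, List.prod_cons, List.prod_nil, mul_one] at this
        rw [this, hfw, hφ _ (hS (l ++ [d]) ⟨d, by simp, Or.inr h⟩)]; simp
      fX := by
        intro d h
        rw [hg]
        have := hfw [d]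
        simp only [List.map_cons, List.map_nil, List.prod_cons, List.prod_nil, mul_one] at this
        rw [this, trX d h]; simp }
  have h1 := P.main l0 hl0
  have h2 : (l0.map P.X).prod = (((l0.map ι).prod : FreeAlgebra K D) : c.Quotient) := by
    clear hl0 hn hcon hφ0 h1
    induction l0 with
    | nil => rfl
    | cons a l ih => rw [List.map_cons, List.prod_cons, ih, List.map_cons, List.prod_cons]; rfl
  rw [h2] at h1
  have h3 := hg (l0.map ι).prod
  rw [hfw, if_pos hn] at h3
  exact hφ0 (h3.symm.trans h1)


namespace FFT

theorem zlemma {R J : Type*} [CommRing R] [Fintype J] (S : Submonoid R)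
    (L : Subsemigroup (Matrix J J R)) (hL : ∀ M ∈ L, M.trace ∈ S) (ι : Type) [Fintype ι] :
    ∀ [DecidableEq ι] (σ : Equiv.Perm ι) (M : ι → Matrix J J R), (∀ k, M k ∈ L) →
    ∑ q : ι → J, ∏ k, M k (q (σ k)) (q k) ∈ S := by
  classical
  refine Fintype.induction_empty_option (P := fun ι [Fintype ι] => ∀ [DecidableEq ι] (σ : Equiv.Perm ι)
    (M : ι → Matrix J J R), (∀ k, M k ∈ L) →
    ∑ q : ι → J, ∏ k, M k (q (σ k)) (q k) ∈ S) ?_ ?_ ?_ ι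
  · intro α β _ e h _ σ M hM
    classical
    letI := Fintype.ofEquiv β e.symm
    have := h ((e.trans σ).trans e.symm) (fun k => M (e k)) (fun k => hM _)
    convert this using 1
    refine Fintype.sum_equiv (Equiv.arrowCongr e.symm (Equiv.refl J)) _ _ ?_
    intro q
    refine Fintype.prod_equiv e.symm _ _ ?_
    intro k
    simp
  · intro _ σ M hM
    simp [S.one_mem]
  · intro ι _ ih _ σ M hM
    classical
    set σ' := Equiv.removeNone σ with hσ'
    rw [Fintype.sum_equiv (Equiv.piOptionEquivProd (β := fun _ => J)) _
      (fun q : J × (ι → J) => ∏ k, M k ((Equiv.piOptionEquivProd (β := fun _ => J)).symm q (σ k))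
        ((Equiv.piOptionEquivProd (β := fun _ => J)).symm q k)) (by intro x; simp only [Equiv.symm_apply_apply]),
      Fintype.sum_prod_type]
    have hp0 : ∀ (x : J) (q : ι → J),
        (Equiv.piOptionEquivProd (β := fun _ => J)).symm (x, q) none = x := fun _ _ => rfl
    have hp1 : ∀ (x : J) (q : ι → J) k,
        (Equiv.piOptionEquivProd (β := fun _ => J)).symm (x, q) (some k) = q k := fun _ _ _ => rfl
    simp only [Fintype.prod_option, hp0, hp1]
    rcases h0 : σ none with _ | a
    · have h1 : ∀ k, σ (some k) = some (σ' k) := by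
        intro k
        rcases h2 : σ (some k) with _ | b
        · exact absurd (σ.injective (h2.trans h0.symm)) (by simp)
        · rw [← h2, hσ', Equiv.removeNone_some σ ⟨b, h2⟩]
      simp only [h1, hp0, hp1, ← Finset.mul_sum]
      rw [← Finset.sum_mul]
      exact S.mul_mem (hL _ (hM none)) (ih σ' (fun k => M (some k)) (fun k => hM _))
    · obtain ⟨k0, hk0⟩ : ∃ k0, σ (some k0) = none := by
        rcases h2 : σ.symm none with _ | b
        · rw [Equiv.symm_apply_eq, h0] at h2; simp at h2
        · exact ⟨b, by rw [← h2]; simp⟩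
      have ha : σ' k0 = a := by
        have := Equiv.removeNone_none σ hk0
        rw [h0] at this
        simpa using this
      have h1 : ∀ k, k ≠ k0 → σ (some k) = some (σ' k) := by
        intro k hk
        rcases h2 : σ (some k) with _ | b
        · exact absurd (σ.injective (h2.trans hk0.symm)) (by simpa using hk)
        · rw [← h2, hσ', Equiv.removeNone_some σ ⟨b, h2⟩]
      have := ih σ' (fun k => if k = k0 then M none * M (some k0) else M (some k)) (by
        intro k
        split_ifs
        · exact L.mul_mem (hM _) (hM _)
        · exact hM _)
      convert this using 1
      rw [Finset.sum_comm]
      refine Finset.sum_congr rfl fun q _ => ?_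
      rw [Fintype.prod_eq_mul_prod_compl k0, if_pos rfl, Matrix.mul_apply, ha, Finset.sum_mul]
      refine Finset.sum_congr rfl fun x _ => ?_
      rw [Fintype.prod_eq_mul_prod_compl k0, hk0, hp0, hp1, mul_assoc]
      congr 2
      refine Finset.prod_congr rfl fun k hk => ?_
      have hk : k ≠ k0 := by simpa using hk
      rw [if_neg hk, h1 k hk, hp1]

theorem orthproj {Y : Type*} [Fintype Y] (D : Submodule ℚ (Y → ℚ)) :
    ∃ P : (Y → ℚ) →ₗ[ℚ] (Y → ℚ), (∀ v, P v ∈ D) ∧ ∀ v, ∀ u ∈ D, u ⬝ᵥ (v - P v) = 0 := by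
  classical
  let B : LinearMap.BilinForm ℚ (Y → ℚ) := dotProductBilin ℚ ℚ
  have hB : ∀ u v, B u v = u ⬝ᵥ v := fun u v => rfl
  have hnd : (B.restrict D).Nondegenerate := by
    constructor
    · intro x hx
      have := hx x
      simp only [LinearMap.BilinForm.restrict_apply, LinearMap.domRestrict_apply, hB,
        dotProduct_self_eq_zero] at this
      exact Subtype.ext this
    · intro x hx
      have := hx x
      simp only [LinearMap.BilinForm.restrict_apply, LinearMap.domRestrict_apply, hB,
        dotProduct_self_eq_zero] at this
      exact Subtype.ext this
  have hc := LinearMap.BilinForm.isCompl_orthogonal_of_restrict_nondegenerate (B := B) (W := D)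
    (fun x y h => by rw [hB, dotProduct_comm, ← hB]; exact h) hnd
  refine ⟨D.subtype ∘ₗ Submodule.projectionOnto _ _ hc, fun v => by simp, ?_⟩
  intro v u hu
  have : v - (D.subtype ∘ₗ Submodule.projectionOnto _ _ hc) v ∈ B.orthogonal D := by
    rw [← Submodule.projectionOnto_apply_eq_zero_iff hc, map_sub]
    simp [Submodule.projectionOnto_projection]
  exact this u hu

/-- Reynolds averaging vector for rational representations closed under adjoints -/
theorem rey {Γ Y : Type*} [Fintype Y] [Group Γ] (τ : Γ → Y → ℚ) (r : Γ → (Y → ℚ) →ₗ[ℚ] (Y → ℚ))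
    (hr : ∀ g h, τ (g * h) = r h (τ g))
    (hadj : ∀ h, ∃ h', ∀ u v, r h u ⬝ᵥ v = u ⬝ᵥ r h' v) :
    ∃ c : Γ →₀ ℚ, (c.sum fun _ a => a) = 1 ∧ ∀ h, r h (c.sum fun g a => a • τ g)
      = c.sum fun g a => a • τ g := by
  classical
  set D : Submodule ℚ (Y → ℚ) := Submodule.span ℚ (Set.range fun p : Γ × Γ => τ p.1 - τ p.2) with hD
  have hrD : ∀ h, ∀ u ∈ D, r h u ∈ D := by
    intro h u hu
    induction hu using Submodule.span_induction with
    | mem x hx =>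
      obtain ⟨⟨a, b⟩, rfl⟩ := hx
      rw [map_sub, ← hr, ← hr]
      exact Submodule.subset_span ⟨(a * h, b * h), rfl⟩
    | zero => simp
    | add x y _ _ hx hy => rw [map_add]; exact D.add_mem hx hy
    | smul a x _ hx => rw [map_smul]; exact D.smul_mem _ hx
  -- decomposition
  have hdec : ∃ d ∈ D, ∀ u ∈ D, u ⬝ᵥ (τ 1 - d) = 0 := by
    obtain ⟨P, h1, h2⟩ := orthproj D
    exact ⟨P (τ 1), h1 _, h2 _⟩
  obtain ⟨d, hd, horth⟩ := hdec
  have hfix : ∀ h, r h (τ 1 - d) = τ 1 - d := by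
    intro h
    have h1 : r h (τ 1 - d) - (τ 1 - d) ∈ D := by
      have : r h (τ 1 - d) - (τ 1 - d) = (τ (1 * h) - τ 1) - r h d + d := by
        rw [hr, map_sub]; abel
      rw [this]
      exact D.add_mem (D.sub_mem (Submodule.subset_span ⟨(1 * h, 1), rfl⟩) (hrD h d hd)) hd
    obtain ⟨h', hh⟩ := hadj h
    rw [← sub_eq_zero, ← dotProduct_self_eq_zero]
    rw [dotProduct_sub, horth _ h1, sub_zero, dotProduct_comm, hh, dotProduct_comm,
      horth _ (hrD h' _ h1)]
  have hc : ∀ d ∈ D, ∃ c : Γ →₀ ℚ, (c.sum fun _ a => a) = 0 ∧ (c.sum fun g a => a • τ g) = d := by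
    intro d hd
    induction hd using Submodule.span_induction with
    | mem x hx =>
      obtain ⟨⟨a, b⟩, rfl⟩ := hx
      refine ⟨Finsupp.single a 1 - Finsupp.single b 1, ?_, ?_⟩
      · rw [Finsupp.sum_sub_index (by intros; rfl)]; simp
      · rw [Finsupp.sum_sub_index (by intros; rw [sub_smul])]; simp
    | zero => exact ⟨0, by simp, by simp⟩
    | add x y _ _ hx hy =>
      obtain ⟨c, h1, h2⟩ := hx
      obtain ⟨c', h1', h2'⟩ := hy
      refine ⟨c + c', ?_, ?_⟩
      · rw [Finsupp.sum_add_index' (by intros; rfl) (by intros; rfl), h1, h1', add_zero]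
      · rw [Finsupp.sum_add_index' (by intros; rw [zero_smul]) (by intros; rw [add_smul]), h2, h2']
    | smul a x _ hx =>
      obtain ⟨c, h1, h2⟩ := hx
      refine ⟨a • c, ?_, ?_⟩
      · rw [Finsupp.sum_smul_index' (by intros; rfl), ← Finsupp.smul_sum, h1, smul_zero]
      · rw [Finsupp.sum_smul_index' (by intros; rw [zero_smul]), ← h2, Finsupp.smul_sum]
        simp [mul_smul]
  obtain ⟨c, h1, h2⟩ := hc d hd
  have h3 : ((Finsupp.single 1 1 - c).sum fun g a => a • τ g) = τ 1 - d := by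
    rw [Finsupp.sum_sub_index (by intros; rw [sub_smul]), h2]; simp
  refine ⟨Finsupp.single 1 1 - c, ?_, ?_⟩
  · rw [Finsupp.sum_sub_index (by intros; rfl), h1]; simp
  · rw [h3]; exact hfix
end FFT


namespace FFT

theorem exists_perm_of_sum {ι α : Type*} [Fintype ι] [DecidableEq α] (a b : ι → α)
    (h : (∑ k, Finsupp.single (a k) 1 : α →₀ ℕ) = ∑ k, Finsupp.single (b k) 1) :
    ∃ σ : Equiv.Perm ι, b = a ∘ σ := by
  classical
  have h1 : ∀ x, Fintype.card {k // b k = x} = Fintype.card {k // a k = x} := by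
    intro x
    have := DFunLike.congr_fun h x
    simp only [Finsupp.finsetSum_apply, Finsupp.single_apply] at this
    rw [Fintype.card_subtype, Fintype.card_subtype, Finset.card_filter, Finset.card_filter, this]
  refine ⟨Equiv.ofFiberEquiv (f := b) (g := a) fun x => Fintype.equivOfCardEq (h1 x), ?_⟩
  funext k
  exact (Equiv.ofFiberEquiv_map _ _).symm

section
variable {ι J V : Type*} [Fintype ι] [DecidableEq ι] [Fintype J] [DecidableEq J] [DecidableEq V]

theorem commute_all (color : J → V) (T : (ι → J) → (ι → J) → ℚ)
    (hT : ∀ h : Matrix J J ℚ, (∀ i j, color i ≠ color j → h i j = 0) → h.det ≠ 0 →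
      ∀ p q, ∑ r, (∏ k, h (p k) (r k)) * T r q = ∑ r, T p r * ∏ k, h (r k) (q k))
    (C : (ι → J) → (ι → J) → ℚ)
    (hC : ∀ (σ : Equiv.Perm ι) p q, C (p ∘ σ) (q ∘ σ) = C p q)
    (hC0 : ∀ p q, color ∘ p ≠ color ∘ q → C p q = 0) (p q : ι → J) :
    ∑ r, C p r * T r q = ∑ r, T p r * C r q := by
  let H : Matrix J J (MvPolynomial (J × J) ℚ) := Matrix.of fun i j =>
    if color i = color j then MvPolynomial.X (i, j) else 0
  let Φ : MvPolynomial (J × J) ℚ := ∑ r, (∏ k, H (p k) (r k)) * MvPolynomial.C (T r q) -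
    ∑ r, MvPolynomial.C (T p r) * ∏ k, H (r k) (q k)
  have hdet : H.det ≠ 0 := by
    intro h0
    have := congrArg (MvPolynomial.eval fun x : J × J => if x.1 = x.2 then (1 : ℚ) else 0) h0
    rw [RingHom.map_det, map_zero] at this
    have h1 : (MvPolynomial.eval fun x : J × J => if x.1 = x.2 then (1 : ℚ) else 0).mapMatrix H
        = 1 := by
      ext i j
      simp only [RingHom.mapMatrix_apply, Matrix.map_apply, H, Matrix.of_apply, Matrix.one_apply]
      by_cases h : i = j
      · subst h; simp
      · split_ifs <;> simp [h]
    rw [h1, Matrix.det_one] at this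
    exact one_ne_zero this
  have hΦ : Φ * H.det = 0 := by
    apply MvPolynomial.funext
    intro x
    rw [map_mul, map_zero, mul_eq_zero, or_iff_not_imp_right]
    intro hx
    rw [RingHom.map_det] at hx
    have := hT _ (by
      intro i j hij
      simp [H, hij]) hx p q
    simp only [Φ, map_sub, map_sum, map_mul, map_prod, MvPolynomial.eval_C]
    rw [sub_eq_zero]
    exact this
  have hΦ0 : Φ = 0 := (mul_eq_zero.1 hΦ).resolve_right hdet
  classical
  let mon : (ι → J) → (ι → J) → (J × J →₀ ℕ) := fun p r => ∑ k, Finsupp.single (p k, r k) 1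
  have hmon : ∀ p r p' r', mon p r = mon p' r' → C p r = C p' r' := by
    intro p r p' r' h
    obtain ⟨σ, hσ⟩ := exists_perm_of_sum (fun k => (p k, r k)) (fun k => (p' k, r' k)) h
    have h1 : p' = p ∘ σ := by funext k; exact congrArg Prod.fst (congrFun hσ k)
    have h2 : r' = r ∘ σ := by funext k; exact congrArg Prod.snd (congrFun hσ k)
    rw [h1, h2, hC]
  let f : (J × J →₀ ℕ) → ℚ := fun m =>
    if h : ∃ x : (ι → J) × (ι → J), mon x.1 x.2 = m then C h.choose.1 h.choose.2 else 0
  have hf : ∀ p r, f (mon p r) = C p r := by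
    intro p r
    have h : ∃ x : (ι → J) × (ι → J), mon x.1 x.2 = mon p r := ⟨(p, r), rfl⟩
    simp only [f, dif_pos h]
    exact hmon _ _ _ _ h.choose_spec
  let L : MvPolynomial (J × J) ℚ →ₗ[ℚ] ℚ := (MvPolynomial.basisMonomials (J × J) ℚ).constr ℚ f
  have hL : ∀ p r, L (∏ k, H (p k) (r k)) = C p r := by
    intro p r
    by_cases h : color ∘ p = color ∘ r
    · have h1 : ∏ k, H (p k) (r k) = MvPolynomial.basisMonomials (J × J) ℚ (mon p r) := by
        rw [MvPolynomial.coe_basisMonomials]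
        refine Eq.trans ?_ (MvPolynomial.monomial_sum_one _ _).symm
        refine Finset.prod_congr rfl fun k _ => ?_
        have : color (p k) = color (r k) := congrFun h k
        simp [H, this, MvPolynomial.X]
      rw [h1, Module.Basis.constr_basis, hf]
    · obtain ⟨k, hk⟩ := Function.ne_iff.1 h
      rw [hC0 _ _ h, Finset.prod_eq_zero (Finset.mem_univ k), map_zero]
      have : color (p k) ≠ color (r k) := hk
      simp [H, this]
  have := congrArg L hΦ0
  simp only [Φ, map_sub, map_sum, map_zero, sub_eq_zero] at this
  rw [← sub_eq_zero, ← sub_eq_zero.2 this]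
  congr 1
  · refine Finset.sum_congr rfl fun r _ => ?_
    rw [mul_comm (∏ k, _), ← MvPolynomial.smul_eq_C_mul, map_smul, hL, smul_eq_mul, mul_comm]
  · refine Finset.sum_congr rfl fun r _ => ?_
    rw [← MvPolynomial.smul_eq_C_mul, map_smul, hL, smul_eq_mul]

def Del (color : J → V) (σ : Equiv.Perm ι) (γ : ι → V) : (ι → J) × (ι → J) → ℚ :=
  fun x => if x.1 = x.2 ∘ σ ∧ color ∘ x.2 = γ then 1 else 0

theorem bicomm [Fintype V] (color : J → V) (T : (ι → J) → (ι → J) → ℚ)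
    (hT : ∀ C : (ι → J) → (ι → J) → ℚ,
    (∀ (σ : Equiv.Perm ι) p q, C (p ∘ σ) (q ∘ σ) = C p q) →
    (∀ p q, color ∘ p ≠ color ∘ q → C p q = 0) → ∀ (p q : ι → J),
    ∑ r, C p r * T r q = ∑ r, T p r * C r q) :
    (fun x : (ι → J) × (ι → J) => T x.1 x.2) ∈
      Submodule.span ℚ (Set.range fun y : Equiv.Perm ι × (ι → V) => Del color y.1 y.2) := by
  set S := Submodule.span ℚ (Set.range fun y : Equiv.Perm ι × (ι → V) => Del color y.1 y.2)
    with hS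
  obtain ⟨P, hP1, hP2⟩ := orthproj S
  have huniq : ∀ v w, w ∈ S → (∀ u ∈ S, u ⬝ᵥ (v - w) = 0) → P v = w := by
    intro v w hw h
    have h1 := h _ (S.sub_mem (hP1 v) hw)
    have h2 := hP2 v _ (S.sub_mem (hP1 v) hw)
    rw [← sub_eq_zero, ← dotProduct_self_eq_zero]
    have : P v - w = (v - w) - (v - P v) := by abel
    calc (P v - w) ⬝ᵥ (P v - w) = (P v - w) ⬝ᵥ ((v - w) - (v - P v)) := by rw [← this]
      _ = 0 := by rw [dotProduct_sub, h1, h2, sub_zero]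
  have hcomm : ∀ U U' : ((ι → J) × (ι → J) → ℚ) →ₗ[ℚ] ((ι → J) × (ι → J) → ℚ),
      (∀ u v, u ⬝ᵥ U v = U' u ⬝ᵥ v) → (∀ v ∈ S, U v ∈ S) → (∀ v ∈ S, U' v ∈ S) →
      ∀ v, P (U v) = U (P v) := by
    intro U U' h h1 h2 v
    apply huniq _ _ (h1 _ (hP1 _))
    intro u hu
    rw [← map_sub, h, hP2 _ _ (h2 _ hu)]
  let ρ : Equiv.Perm ι → ((ι → J) × (ι → J) → ℚ) →ₗ[ℚ] ((ι → J) × (ι → J) → ℚ) := fun τ =>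
    LinearMap.funLeft ℚ ℚ fun x => (x.1 ∘ τ, x.2)
  have hρ : ∀ τ v x, ρ τ v x = v (x.1 ∘ τ, x.2) := fun _ _ _ => rfl
  have hρS : ∀ τ, ∀ v ∈ S, ρ τ v ∈ S := by
    intro τ v hv
    induction hv using Submodule.span_induction with
    | mem x hx =>
      obtain ⟨⟨σ, γ⟩, rfl⟩ := hx
      have : ρ τ (Del color σ γ) = Del color (σ * τ⁻¹) γ := by
        funext x
        rw [hρ]
        simp only [Del]
        have : x.1 ∘ τ = x.2 ∘ σ ↔ x.1 = x.2 ∘ (σ * τ⁻¹ : Equiv.Perm ι) := by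
          constructor
          · intro h
            funext k
            have := congrFun h (τ⁻¹ k)
            simpa using this
          · intro h; rw [h]; funext k; simp
        simp only [this]
      rw [this]
      exact Submodule.subset_span ⟨(_, _), rfl⟩
    | zero => simp
    | add x y _ _ hx hy => rw [map_add]; exact S.add_mem hx hy
    | smul a x _ hx => rw [map_smul]; exact S.smul_mem _ hx
  have hPρ : ∀ τ v, P (ρ τ v) = ρ τ (P v) := by
    intro τ
    apply hcomm (ρ τ) (ρ τ⁻¹) _ (hρS _) (hρS _)
    intro u v
    simp only [dotProduct, hρ]
    refine Fintype.sum_equiv ⟨fun x => (x.1 ∘ τ, x.2), fun x => (x.1 ∘ (τ⁻¹ : Equiv.Perm ι), x.2),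
      ?_, ?_⟩ _ _ ?_
    · intro x; ext <;> simp
    · intro x; ext <;> simp
    · intro x
      simp only [Equiv.coe_fn_mk]
      congr 2
      ext <;> simp
  let m : (ι → V) → ((ι → J) × (ι → J) → ℚ) →ₗ[ℚ] ((ι → J) × (ι → J) → ℚ) := fun γ =>
    LinearMap.mulLeft ℚ fun x => if color ∘ x.1 = γ then (1 : ℚ) else 0
  have hm : ∀ γ v x, m γ v x = (if color ∘ x.1 = γ then 1 else 0) * v x := fun _ _ _ => rfl
  have hmS : ∀ γ, ∀ v ∈ S, m γ v ∈ S := by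
    intro γ v hv
    induction hv using Submodule.span_induction with
    | mem x hx =>
      obtain ⟨⟨σ, γ'⟩, rfl⟩ := hx
      by_cases hg : γ' ∘ σ = γ
      · have : m γ (Del color σ γ') = Del color σ γ' := by
          funext x
          rw [hm]
          simp only [Del]
          split_ifs with h1 h2 h3 <;> simp
          apply h1
          rw [h3.1, ← hg, ← h3.2]; rfl
        rw [this]
        exact Submodule.subset_span ⟨(_, _), rfl⟩
      · have : m γ (Del color σ γ') = 0 := by
          funext x
          rw [hm]
          simp only [Del]
          split_ifs with h1 h2 h3 <;> simp
          apply hg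
          rw [← h1, h2.1, ← h2.2]; rfl
        rw [this]
        exact S.zero_mem
    | zero => simp
    | add x y _ _ hx hy => rw [map_add]; exact S.add_mem hx hy
    | smul a x _ hx => rw [map_smul]; exact S.smul_mem _ hx
  have hPm : ∀ γ v, P (m γ v) = m γ (P v) := by
    intro γ
    apply hcomm (m γ) (m γ) _ (hmS _) (hmS _)
    intro u v
    simp only [dotProduct, hm]
    refine Finset.sum_congr rfl fun x _ => by ring
  have key : P (fun x => T x.1 x.2) = fun x => T x.1 x.2 := by
    have h1 : ∀ p q z y, ∑ r, P (Pi.single (r, y) 1) (p, z) * T r q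
        = ∑ r, T p r * P (Pi.single (q, y) 1) (r, z) := by
      intro p q z y
      refine hT (fun p e => P (Pi.single (e, y) 1) (p, z)) ?_ ?_ p q
      · intro σ p e
        have h2 : ρ σ (Pi.single (e ∘ σ, y) 1) = Pi.single (e, y) 1 := by
          funext x
          rw [hρ]
          simp only [Pi.single_apply, Prod.ext_iff]
          have : x.1 ∘ σ = e ∘ σ ↔ x.1 = e := σ.surjective.injective_comp_right.eq_iff
          simp only [this]
        rw [← h2, hPρ, hρ]
      · intro p e hpe
        have h2 : m (color ∘ e) (Pi.single (e, y) 1) = Pi.single (e, y) 1 := by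
          funext x
          rw [hm]
          simp only [Pi.single_apply]
          split_ifs with h1 h2 h3 <;> simp
          apply h1
          rw [h3]
        rw [← h2, hPm, hm, if_neg hpe, zero_mul]
    have hone : P (∑ q : ι → J, Pi.single (q, q) 1) = ∑ q : ι → J, Pi.single (q, q) 1 := by
      apply huniq
      · have : (∑ q : ι → J, Pi.single (q, q) 1 : (ι → J) × (ι → J) → ℚ)
            = ∑ γ : ι → V, Del color 1 γ := by
          funext x
          simp only [Finset.sum_apply, Pi.single_apply, Del, Prod.ext_iff]
          by_cases h : x.1 = x.2
          · rw [Finset.sum_eq_single x.2, Finset.sum_eq_single (color ∘ x.2)]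
            · simp [h]
            · intro b _ hb; simp [Ne.symm hb]
            · simp
            · intro b _ hb; simp [Ne.symm hb]
            · simp
          · rw [Finset.sum_eq_zero, Finset.sum_eq_zero]
            · intro b _; simp [h]
            · intro b _
              rw [if_neg]
              rintro ⟨h1, h2⟩
              exact h (h1.trans h2.symm)
        rw [this]
        exact S.sum_mem fun γ _ => Submodule.subset_span ⟨(_, _), rfl⟩
      · intro u _; simp
    funext ⟨p, z⟩
    have h2 : (fun x : (ι → J) × (ι → J) => T x.1 x.2)
        = ∑ q, ∑ r, T r q • (Pi.single (r, q) 1 : (ι → J) × (ι → J) → ℚ) := by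
      funext ⟨a, b⟩
      simp only [Finset.sum_apply, Pi.smul_apply, Pi.single_apply, smul_eq_mul, Prod.mk.injEq]
      rw [Finset.sum_eq_single b, Finset.sum_eq_single a]
      · simp
      · intro c _ hc; simp [Ne.symm hc]
      · simp
      · intro c _ hc; simp [Ne.symm hc]
      · simp
    have h3 : P (fun x => T x.1 x.2) (p, z) = ∑ q, ∑ r, P (Pi.single (r, q) 1) (p, z) * T r q := by
      rw [h2]
      simp only [map_sum, map_smul, Finset.sum_apply, Pi.smul_apply, smul_eq_mul, mul_comm]
    rw [h3]
    simp only [h1]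
    rw [Finset.sum_comm]
    have h4 : ∀ r, ∑ q, T p r * P (Pi.single (q, q) 1) (r, z) = T p r * if r = z then 1 else 0 := by
      intro r
      rw [← Finset.mul_sum, ← Finset.sum_apply, ← map_sum, hone]
      congr 1
      simp only [Finset.sum_apply, Pi.single_apply, Prod.mk.injEq]
      by_cases h : r = z
      · rw [Finset.sum_eq_single z]
        · simp
        · intro b _ hb; simp [Ne.symm hb]
        · simp
      · rw [Finset.sum_eq_zero, if_neg h]
        intro b _
        rw [if_neg]
        rintro ⟨h1, h2⟩
        exact h (h1.trans h2.symm)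
    simp [h4]
  rw [← key]
  exact hP1 _

end
end FFT


namespace FFT

section kron
variable {ι J : Type*} [Fintype ι] [DecidableEq ι] [Fintype J] [DecidableEq J]

def kr {R : Type*} [CommRing R] (ι : Type*) [Fintype ι] (A : Matrix J J R) :
    Matrix (ι → J) (ι → J) R :=
  Matrix.of fun p q => ∏ k, A (p k) (q k)

theorem kr_apply {R : Type*} [CommRing R] (A : Matrix J J R) (p q : ι → J) :
    kr ι A p q = ∏ k, A (p k) (q k) := rfl

theorem kr_mul {R : Type*} [CommRing R] (A B : Matrix J J R) :
    kr ι (A * B) = kr ι A * kr ι B := by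
  ext p q
  rw [Matrix.mul_apply]
  simp only [kr_apply, Matrix.mul_apply]
  rw [Finset.prod_univ_sum, Fintype.piFinset_univ]
  simp only [Finset.prod_mul_distrib]

theorem kr_one {R : Type*} [CommRing R] : kr ι (1 : Matrix J J R) = 1 := by
  ext p q
  rw [kr_apply, Matrix.one_apply]
  split_ifs with h
  · subst h; simp
  · obtain ⟨k, hk⟩ := Function.ne_iff.1 h
    rw [Finset.prod_eq_zero (Finset.mem_univ k)]
    simp [hk]

theorem kr_transpose {R : Type*} [CommRing R] (A : Matrix J J R) :
    kr ι A.transpose = (kr ι A).transpose := rfl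

theorem term_mem {R V : Type*} [CommRing R] [Algebra ℚ R] [DecidableEq V]
    {D : Type*} (X : D → Matrix J J R) (color : J → V) {ι : Type} [Fintype ι] [DecidableEq ι]
    (S : Subalgebra ℚ R) (L : Subsemigroup (Matrix J J R)) (hL : ∀ M ∈ L, M.trace ∈ S)
    (hX : ∀ d v, (Matrix.of fun i j => if color i = v then X d i j else 0) ∈ L)
    (a : ι → D) (T : (ι → J) × (ι → J) → ℚ)
    (hT : T ∈ Submodule.span ℚ (Set.range fun y : Equiv.Perm ι × (ι → V) => Del color y.1 y.2)) :
    ∑ x : (ι → J) × (ι → J), T x • ∏ k, X (a k) (x.2 k) (x.1 k) ∈ S := by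
  induction hT using Submodule.span_induction with
  | zero => simp
  | add x y _ _ hx hy =>
    simp only [Pi.add_apply, add_smul, Finset.sum_add_distrib]
    exact S.add_mem hx hy
  | smul c x _ hx =>
    simp only [Pi.smul_apply, smul_assoc, ← Finset.smul_sum]
    exact S.smul_mem hx c
  | mem x hx =>
    obtain ⟨⟨σ, γ⟩, rfl⟩ := hx
    have := zlemma S.toSubmonoid L hL ι σ⁻¹
      (fun k => Matrix.of fun i j => if color i = γ k then X (a k) i j else 0) (fun k => hX _ _)
    have h2 : ∑ x : (ι → J) × (ι → J), Del color σ γ x • ∏ k, X (a k) (x.2 k) (x.1 k) =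
        ∑ q : ι → J, ∏ k, (Matrix.of fun i j => if color i = γ k then X (a k) i j else 0)
          (q (σ⁻¹ k)) (q k) := by
      rw [Fintype.sum_prod_type_right]
      refine Fintype.sum_equiv ⟨fun u => u ∘ σ, fun u => u ∘ (σ⁻¹ : Equiv.Perm ι), ?_, ?_⟩ _ _ ?_
      · intro u; funext k; simp
      · intro u; funext k; simp
      intro u
      rw [Finset.sum_eq_single (u ∘ σ)]
      · have hinv : ∀ k, σ (σ⁻¹ k) = k := fun k => by simp
        simp only [Del, Equiv.coe_fn_mk, Matrix.of_apply, Function.comp_apply, true_and, hinv]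
        by_cases h : color ∘ u = γ
        · subst h; simp
        · obtain ⟨k, hk⟩ := Function.ne_iff.1 h
          have hk : color (u k) ≠ γ k := hk
          rw [if_neg h, zero_smul, Finset.prod_eq_zero (Finset.mem_univ k)]
          rw [if_neg hk]
      · intro v _ hv
        simp [Del, hv]
      · simp
    rw [h2]
    exact this

theorem poly_form {σ K : Type*} [Field K] (F : MvPolynomial σ K) :
    ∃ (N : ℕ) (n : Fin N → ℕ) (c : Fin N → K) (e : ∀ t, Fin (n t) → σ),
      F = ∑ t, MvPolynomial.C (c t) * ∏ k, MvPolynomial.X (e t k) := by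
  classical
  induction F using MvPolynomial.induction_on' with
  | monomial m c =>
    refine ⟨1, fun _ => m.toMultiset.toList.length, fun _ => c, fun _ => m.toMultiset.toList.get, ?_⟩
    rw [Fin.sum_univ_one, MvPolynomial.monomial_eq]
    congr 1
    have h1 : ∏ k, (MvPolynomial.X (m.toMultiset.toList.get k) : MvPolynomial σ K) =
        (m.toMultiset.toList.map MvPolynomial.X).prod := by
      rw [← List.prod_ofFn]
      congr 1
      apply List.ext_get <;> simp
    rw [h1, ← Multiset.prod_coe, ← Multiset.map_coe, Multiset.coe_toList, Finsupp.toMultiset_map,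
      Finsupp.prod_toMultiset, Finsupp.prod_mapDomain_index] <;> simp [pow_add]
  | add p q hp hq =>
    obtain ⟨N, n, c, e, h⟩ := hp
    obtain ⟨N', n', c', e', h'⟩ := hq
    refine ⟨N + N', Fin.addCases n n', Fin.addCases c c',
      fun t => Fin.addCases (motive := fun t => Fin ((Fin.addCases n n' t : ℕ)) → σ)
        (fun t k => e t (Fin.cast (by simp) k)) (fun t k => e' t (Fin.cast (by simp) k)) t, ?_⟩
    rw [Fin.sum_univ_add, h, h']
    congr 1
    · refine Finset.sum_congr rfl fun t _ => ?_
      simp only [Fin.addCases_left]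
      congr 1
      exact Fintype.prod_equiv (finCongr (by simp)) _ _ (fun k => rfl)
    · refine Finset.sum_congr rfl fun t _ => ?_
      simp only [Fin.addCases_right]
      congr 1
      exact Fintype.prod_equiv (finCongr (by simp)) _ _ (fun k => rfl)
end kron

theorem fft_main {K R Γ D J V : Type*} [Field K] [CharZero K] [CommRing R] [Algebra K R]
    [Algebra ℚ R] [Group Γ] [Fintype J] [DecidableEq J] [Fintype V] [DecidableEq V]
    (X : D → Matrix J J R) (color : J → V) (ρ : Γ →* Matrix J J ℚ)
    (hcol : ∀ g i j, color i ≠ color j → ρ g i j = 0)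
    (hsurj : ∀ M : Matrix J J ℚ, (∀ i j, color i ≠ color j → M i j = 0) → M.det ≠ 0 →
      ∃ g, ρ g = M)
    (S : Subalgebra K R) (L : Subsemigroup (Matrix J J R)) (hL : ∀ M ∈ L, M.trace ∈ S)
    (hX : ∀ d v, (Matrix.of fun i j => if color i = v then X d i j else 0) ∈ L)
    (F : MvPolynomial (D × J × J) K)
    (hF : ∀ g, MvPolynomial.aeval (fun c : D × J × J => X c.1 c.2.1 c.2.2) F =
      MvPolynomial.aeval (fun c : D × J × J => ((ρ g).map (algebraMap ℚ R) * X c.1 *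
        (ρ g⁻¹).map (algebraMap ℚ R)) c.2.1 c.2.2) F) :
    MvPolynomial.aeval (fun c : D × J × J => X c.1 c.2.1 c.2.2) F ∈ S := by
  classical
  have hqK : ∀ q : ℚ, algebraMap ℚ R q = algebraMap K R (q : K) := by
    intro q
    have : (algebraMap ℚ R) = (algebraMap K R).comp (Rat.castHom K) := Subsingleton.elim _ _
    rw [this]; rfl
  let S' : Subalgebra ℚ R :=
    { S.toSubsemiring with
      algebraMap_mem' := by
        intro q
        rw [hqK]
        exact S.algebraMap_mem _ }
  obtain ⟨N, n, c, e, rfl⟩ := poly_form F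
  let Y := Σ t : Fin N, (Fin (n t) → J) × (Fin (n t) → J)
  let τ : Γ → Y → ℚ := fun g y => kr (Fin (n y.1)) (ρ g⁻¹) y.2.1 (fun k => (e y.1 k).2.2) *
    kr (Fin (n y.1)) (ρ g) (fun k => (e y.1 k).2.1) y.2.2
  let W : (Y → ℚ) → ∀ t, Matrix (Fin (n t) → J) (Fin (n t) → J) ℚ := fun w t =>
    Matrix.of fun v u => w ⟨t, (v, u)⟩
  let r : Γ → (Y → ℚ) →ₗ[ℚ] (Y → ℚ) := fun h =>
    { toFun := fun w y => (kr (Fin (n y.1)) (ρ h⁻¹) * W w y.1 * kr (Fin (n y.1)) (ρ h)) y.2.1 y.2.2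
      map_add' := by
        intro w w'
        funext y
        have : W (w + w') y.1 = W w y.1 + W w' y.1 := rfl
        rw [this]
        simp [mul_add, add_mul]
      map_smul' := by
        intro a w
        funext y
        have : W (a • w) y.1 = a • W w y.1 := rfl
        rw [this]
        simp }
  have hrr : ∀ h w y, r h w y =
    (kr (Fin (n y.1)) (ρ h⁻¹) * W w y.1 * kr (Fin (n y.1)) (ρ h)) y.2.1 y.2.2 := fun _ _ _ => rfl
  have hr : ∀ g h, τ (g * h) = r h (τ g) := by
    intro g h
    funext ⟨t, v, u⟩
    have hW : W (τ g) t = Matrix.vecMulVec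
      (fun v => kr (Fin (n t)) (ρ g⁻¹) v (fun k => (e t k).2.2))
      (fun u => kr (Fin (n t)) (ρ g) (fun k => (e t k).2.1) u) := rfl
    rw [hrr]
    simp only
    rw [hW, Matrix.mul_vecMulVec, Matrix.vecMulVec_mul, Matrix.vecMulVec_apply]
    simp only [τ]
    rw [mul_inv_rev, map_mul, map_mul, kr_mul, kr_mul]
    rfl
  have hadj : ∀ h, ∃ h', ∀ u v, r h u ⬝ᵥ v = u ⬝ᵥ r h' v := by
    intro h
    have hinv : ρ h * ρ h⁻¹ = 1 := by rw [← map_mul, mul_inv_cancel, map_one]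
    have hdet : (ρ h).det ≠ 0 := by
      intro h0
      have := congrArg Matrix.det hinv
      rw [Matrix.det_mul, h0] at this
      simp at this
    obtain ⟨h', hh'⟩ := hsurj (ρ h).transpose (fun i j hij => hcol h j i (Ne.symm hij))
      (by rwa [Matrix.det_transpose])
    have hh'' : ρ h'⁻¹ = (ρ h⁻¹).transpose := by
      have h1 : ρ h'⁻¹ * ρ h' = 1 := by rw [← map_mul, inv_mul_cancel, map_one]
      have h2 : ρ h' * (ρ h⁻¹).transpose = 1 := by
        rw [hh', ← Matrix.transpose_mul, ← map_mul, inv_mul_cancel, map_one, Matrix.transpose_one]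
      calc ρ h'⁻¹ = ρ h'⁻¹ * (ρ h' * (ρ h⁻¹).transpose) := by rw [h2, mul_one]
        _ = _ := by rw [← mul_assoc, h1, one_mul]
    refine ⟨h', fun u v => ?_⟩
    have hdot : ∀ u v : Y → ℚ, u ⬝ᵥ v = ∑ t, ((W u t) * (W v t).transpose).trace := by
      intro u v
      simp only [dotProduct, Fintype.sum_sigma, Fintype.sum_prod_type, Matrix.trace,
        Matrix.diag_apply, Matrix.mul_apply, Matrix.transpose_apply, W, Matrix.of_apply, Y]
    have hWr : ∀ h w t, W (r h w) t = kr (Fin (n t)) (ρ h⁻¹) * W w t * kr (Fin (n t)) (ρ h) :=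
      fun _ _ _ => rfl
    rw [hdot, hdot]
    refine Finset.sum_congr rfl fun t _ => ?_
    rw [hWr, hWr, hh', hh'', kr_transpose, kr_transpose, Matrix.transpose_mul, Matrix.transpose_mul,
      Matrix.transpose_transpose, Matrix.transpose_transpose, mul_assoc, mul_assoc,
      Matrix.trace_mul_comm]
    simp only [mul_assoc]
  obtain ⟨cc, hc1, hc2⟩ := rey τ r hr hadj
  set w := cc.sum fun g a => a • τ g with hw
  have hTt : ∀ t, (fun x : (Fin (n t) → J) × (Fin (n t) → J) => W w t x.1 x.2) ∈
      Submodule.span ℚ (Set.range fun y : Equiv.Perm (Fin (n t)) × (Fin (n t) → V) =>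
        Del color y.1 y.2) := by
    intro t
    apply bicomm
    intro C hC hC0 p q
    refine commute_all color (W w t) ?_ C hC hC0 p q
    intro h hh hdet p q
    obtain ⟨g, rfl⟩ := hsurj h hh hdet
    have h1 : W w t = kr (Fin (n t)) (ρ g⁻¹) * W w t * kr (Fin (n t)) (ρ g) := by
      conv_lhs => rw [← hc2 g]
      rfl
    have h2 : kr (Fin (n t)) (ρ g) * W w t = W w t * kr (Fin (n t)) (ρ g) := by
      conv_lhs => rw [h1]
      rw [← mul_assoc, ← mul_assoc, ← kr_mul, ← map_mul, mul_inv_cancel, map_one, kr_one, one_mul]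
    exact congrFun (congrFun h2 p) q
  have hsum : MvPolynomial.aeval (fun c : D × J × J => X c.1 c.2.1 c.2.2)
      (∑ t, MvPolynomial.C (c t) * ∏ k, MvPolynomial.X (e t k)) =
      ∑ t, algebraMap K R (c t) * ∑ x : (Fin (n t) → J) × (Fin (n t) → J),
        W w t x.1 x.2 • ∏ k, X (e t k).1 (x.2 k) (x.1 k) := by
    set F := ∑ t, MvPolynomial.C (c t) * ∏ k, MvPolynomial.X (e t k) with hFd
    have h1 : MvPolynomial.aeval (fun c : D × J × J => X c.1 c.2.1 c.2.2) F =
        cc.sum fun g a => a • MvPolynomial.aeval (fun c : D × J × J => ((ρ g).map (algebraMap ℚ R) *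
          X c.1 * (ρ g⁻¹).map (algebraMap ℚ R)) c.2.1 c.2.2) F := by
      simp only [← hF]
      rw [Finsupp.sum, ← Finset.sum_smul]
      have : ∑ g ∈ cc.support, cc g = 1 := hc1
      rw [this, one_smul]
    rw [h1]
    have h2 : ∀ g, MvPolynomial.aeval (fun c : D × J × J => ((ρ g).map (algebraMap ℚ R) *
          X c.1 * (ρ g⁻¹).map (algebraMap ℚ R)) c.2.1 c.2.2) F =
        ∑ t, algebraMap K R (c t) * ∑ x : (Fin (n t) → J) × (Fin (n t) → J),
        W (τ g) t x.1 x.2 • ∏ k, X (e t k).1 (x.2 k) (x.1 k) := by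
      intro g
      rw [hFd, map_sum]
      refine Finset.sum_congr rfl fun t _ => ?_
      rw [map_mul, map_prod, MvPolynomial.algHom_C]
      congr 1
      simp only [MvPolynomial.aeval_X, Matrix.mul_apply, Finset.sum_mul]
      rw [Finset.prod_univ_sum, Fintype.piFinset_univ]
      simp only [Finset.prod_univ_sum, Fintype.piFinset_univ]
      rw [Fintype.sum_prod_type]
      refine Finset.sum_congr rfl fun v _ => Finset.sum_congr rfl fun u _ => ?_
      simp only [Finset.prod_mul_distrib, Matrix.map_apply, W, τ, Matrix.of_apply, kr_apply]
      rw [Algebra.smul_def, map_mul, map_prod, map_prod]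
      ring
    simp only [h2]
    rw [Finsupp.sum]
    simp only [Finset.smul_sum]
    rw [Finset.sum_comm]
    refine Finset.sum_congr rfl fun t _ => ?_
    simp only [Finset.mul_sum, Finset.smul_sum]
    rw [Finset.sum_comm]
    refine Finset.sum_congr rfl fun x _ => ?_
    have hWw : W w t x.1 x.2 = ∑ g ∈ cc.support, cc g * W (τ g) t x.1 x.2 := by
      simp only [W, hw, Finsupp.sum, Matrix.of_apply, Finset.sum_apply, Pi.smul_apply, smul_eq_mul]
    rw [hWw, Finset.sum_smul, Finset.mul_sum]
    simp only [mul_smul, mul_smul_comm]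
  rw [hsum]
  refine S.sum_mem fun t _ => S.mul_mem (S.algebraMap_mem _) ?_
  exact term_mem X color S' L hL hX (fun k => (e t k).1) _ (hTt t)

end FFT


namespace FinQuiver

section words

theorem path_entry {R J : Type*} [CommRing R] [Fintype J] [DecidableEq J] : ∀ (n : ℕ)
    (f : Fin (n + 1) → Matrix J J R) (p q : J),
    (List.ofFn f).prod p q = ∑ c : Fin n → J, ∏ k : Fin (n + 1),
      f k ((Fin.cons p c : Fin (n + 1) → J) k) ((Fin.snoc c q : Fin (n + 1) → J) k)
  | 0, f, p, q => by
    simp [Fin.snoc]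
  | n + 1, f, p, q => by
    rw [List.ofFn_succ, List.prod_cons, Matrix.mul_apply,
      ← (Fin.consEquiv (fun _ : Fin (n + 1) => J)).sum_comp, Fintype.sum_prod_type]
    refine Finset.sum_congr rfl fun r _ => ?_
    rw [path_entry n, Finset.mul_sum]
    refine Finset.sum_congr rfl fun c _ => ?_
    have h : (Fin.snoc ((Fin.consEquiv (fun _ : Fin (n + 1) => J)) (r, c)) q : Fin (n + 2) → J)
        = Fin.cons r (Fin.snoc c q : Fin (n + 1) → J) := by
      rw [Fin.cons_snoc_eq_snoc_cons]; rfl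
    rw [h]
    conv_rhs => rw [Fin.prod_univ_succ]
    rfl

theorem trace_ofFn {R J : Type*} [CommRing R] [Fintype J] [DecidableEq J] (n : ℕ)
    (f : Fin (n + 1) → Matrix J J R) :
    (List.ofFn f).prod.trace = ∑ c : Fin (n + 1) → J, ∏ k, f k (c k) (c (k + 1)) := by
  rw [← (Fin.consEquiv (fun _ : Fin (n + 1) => J)).sum_comp, Fintype.sum_prod_type, Matrix.trace]
  refine Finset.sum_congr rfl fun p _ => ?_
  rw [Matrix.diag_apply, path_entry]
  refine Finset.sum_congr rfl fun c _ => Finset.prod_congr rfl fun k _ => ?_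
  rw [Fin.snoc_eq_cons_rotate]
  beta_reduce
  rw [finRotate_apply]
  rfl

theorem list_eq_ofFn {D : Type*} (l : List D) (hl : l ≠ []) :
    ∃ (n : ℕ) (f : Fin (n + 1) → D), l = List.ofFn f := by
  rcases l with _ | ⟨a, l⟩
  · exact absurd rfl hl
  · exact ⟨l.length, (a :: l).get, (List.ofFn_get (a :: l)).symm⟩

theorem prod_conj {R J D : Type*} [CommRing R] [Fintype J] [DecidableEq J]
    (X : D → Matrix J J R) (G G' : Matrix J J R) (h : G' * G = 1) (l : List D) :
    (l.map fun a => G * X a * G').prod.trace = (l.map X).prod.trace := by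
  have h' : G * G' = 1 := mul_eq_one_comm.1 h
  have : (l.map fun a => G * X a * G').prod = G * (l.map X).prod * G' := by
    induction l with
    | nil => simp [h']
    | cons a l ih =>
      rw [List.map_cons, List.prod_cons, ih, List.map_cons, List.prod_cons]
      calc G * X a * G' * (G * (l.map X).prod * G') = G * X a * (G' * G) * (l.map X).prod * G' := by
            simp only [mul_assoc]
        _ = _ := by rw [h, mul_one]; simp only [mul_assoc]
  rw [this, Matrix.trace_mul_comm, ← mul_assoc, h, one_mul]

end words

variable (Q : FinQuiver) (K : Type) [Field K] (α : Q.I → ℕ)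

abbrev JJ : Type := Σ i : Q.I, Fin (α i)

theorem dh_swap (a : Q.DA) : Q.dh a.swap = Q.dt a := by cases a <;> rfl
theorem dt_swap (a : Q.DA) : Q.dt a.swap = Q.dh a := by cases a <;> rfl

def eps : Q.DA → K := fun a => match a with
  | Sum.inl _ => 1
  | Sum.inr _ => -1

variable {K}

def blk (x : Q.Rep K α) (a : Q.DA) : Matrix (Q.JJ α) (Q.JJ α) K := Matrix.of fun p q =>
  if h : p.1 = Q.dh a ∧ q.1 = Q.dt a then
    x a (Fin.cast (congrArg α h.1) p.2) (Fin.cast (congrArg α h.2) q.2) else 0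

def Eb (R : Type*) [CommRing R] (i : Q.I) : Matrix (Q.JJ α) (Q.JJ α) R :=
  Matrix.diagonal fun p => if p.1 = i then 1 else 0

def bd {R : Type*} [CommRing R] (g : ∀ i, Matrix (Fin (α i)) (Fin (α i)) R) :
    Matrix (Q.JJ α) (Q.JJ α) R := Matrix.blockDiagonal' g

variable {α}

theorem blk_self (x : Q.Rep K α) (a : Q.DA) (u v) : Q.blk α x a ⟨Q.dh a, u⟩ ⟨Q.dt a, v⟩ = x a u v := by
  simp [blk]

theorem blk_ne (x : Q.Rep K α) (a : Q.DA) (p q : Q.JJ α) (h : ¬ (p.1 = Q.dh a ∧ q.1 = Q.dt a)) :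
    Q.blk α x a p q = 0 := by
  simp only [blk, Matrix.of_apply, dif_neg h]

theorem blk_mul_zero (x : Q.Rep K α) (a b : Q.DA) (h : Q.dt a ≠ Q.dh b) :
    Q.blk α x a * Q.blk α x b = 0 := by
  ext p q
  rw [Matrix.mul_apply, Matrix.zero_apply]
  refine Finset.sum_eq_zero fun r _ => ?_
  by_cases h1 : r.1 = Q.dt a
  · rw [Q.blk_ne x b r q, mul_zero]
    rintro ⟨h2, -⟩
    exact h (h1.symm.trans h2)
  · rw [Q.blk_ne x a p r, zero_mul]
    rintro ⟨-, h2⟩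
    exact h1 h2

theorem Eb_mul (x : Q.Rep K α) (i : Q.I) (a : Q.DA) :
    Q.Eb α K i * Q.blk α x a = if Q.dh a = i then Q.blk α x a else 0 := by
  ext p q
  rw [Eb, Matrix.diagonal_mul]
  by_cases h : p.1 = Q.dh a
  · rw [h]
    split_ifs <;> simp
  · rw [Q.blk_ne x a p q (fun h' => h h'.1)]
    split_ifs
    · rw [Q.blk_ne x a p q (fun h' => h h'.1)]; simp
    · simp
    · rw [Q.blk_ne x a p q (fun h' => h h'.1)]; simp
    · simp

theorem trace_blk (x : Q.Rep K α) (a : Q.DA) (h : Q.dh a ≠ Q.dt a) : (Q.blk α x a).trace = 0 := by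
  refine Finset.sum_eq_zero fun p _ => ?_
  rw [Matrix.diag_apply, Q.blk_ne]
  rintro ⟨h1, h2⟩
  exact h (h1.symm.trans h2)

theorem trace_Eb (R : Type*) [CommRing R] (i : Q.I) : (Q.Eb α R i).trace = (α i : R) := by
  rw [Eb, Matrix.trace_diagonal, Fintype.sum_sigma, Finset.sum_eq_single i]
  · simp
  · intro b _ hb; simp [hb]
  · simp

theorem blk_mul (x : Q.Rep K α) (a b : Q.DA) (h : Q.dt a = Q.dh b) (u v) :
    (Q.blk α x a * Q.blk α x b) ⟨Q.dh a, u⟩ ⟨Q.dt b, v⟩ =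
      ∑ w, x a u w * x b (Fin.cast (congrArg α h) w) v := by
  rw [Matrix.mul_apply, Fintype.sum_sigma, Finset.sum_eq_single (Q.dt a)]
  · refine Finset.sum_congr rfl fun w _ => ?_
    rw [blk_self]
    congr 1
    simp [blk, h]
  · intro i _ hi
    refine Finset.sum_eq_zero fun w _ => ?_
    rw [Q.blk_ne x a, zero_mul]
    rintro ⟨-, h2⟩
    exact hi h2
  · simp

theorem blk_mul_ne (x : Q.Rep K α) (a b : Q.DA) (p q : Q.JJ α)
    (h : ¬ (p.1 = Q.dh a ∧ q.1 = Q.dt b)) : (Q.blk α x a * Q.blk α x b) p q = 0 := by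
  rw [Matrix.mul_apply]
  refine Finset.sum_eq_zero fun r _ => ?_
  by_cases h1 : p.1 = Q.dh a
  · rw [Q.blk_ne x b, mul_zero]
    rintro ⟨-, h2⟩
    exact h ⟨h1, h2⟩
  · rw [Q.blk_ne x a, zero_mul]
    rintro ⟨h2, -⟩
    exact h1 h2

def bmom (x : Q.Rep K α) (i : Q.I) : Matrix (Q.JJ α) (Q.JJ α) K :=
  ∑ d : Q.DA with Q.dh d = i, Q.eps K d • (Q.blk α x d * Q.blk α x d.swap)

theorem bmom_self (x : Q.Rep K α) (i : Q.I) (u v : Fin (α i)) :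
    Q.bmom x i ⟨i, u⟩ ⟨i, v⟩ = Q.moment K α x i u v := by
  rw [bmom, Finset.sum_filter, Fintype.sum_sum_type, moment, sub_eq_add_neg, Matrix.add_apply,
    Matrix.add_apply, Matrix.neg_apply, Matrix.sum_apply, Matrix.sum_apply, Matrix.sum_apply,
    Matrix.sum_apply, ← Finset.sum_neg_distrib]
  congr 1
  · refine Finset.sum_congr rfl fun a _ => ?_
    by_cases h : Q.h a = i
    · subst h
      have := Q.blk_mul x (Sum.inl a) (Sum.inr a) rfl u v
      simp only [dh, dt] at this
      simp [eps, this, Matrix.mul_apply]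
    · simp [h]
  · refine Finset.sum_congr rfl fun a _ => ?_
    by_cases h : Q.t a = i
    · subst h
      have := Q.blk_mul x (Sum.inr a) (Sum.inl a) rfl u v
      simp only [dh, dt] at this
      simp [eps, this, Matrix.mul_apply]
    · simp [h]

theorem bmom_ne (x : Q.Rep K α) (i : Q.I) (p q : Q.JJ α) (h : ¬ (p.1 = i ∧ q.1 = i)) :
    Q.bmom x i p q = 0 := by
  rw [bmom, Matrix.sum_apply]
  refine Finset.sum_eq_zero fun d hd => ?_
  have hd : Q.dh d = i := by simpa using hd
  rw [Matrix.smul_apply, Q.blk_mul_ne, smul_zero]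
  rwa [dt_swap, hd]

theorem mem_fiber_iff (l : Q.I → K) (x : Q.Rep K α) :
    x ∈ Q.MomentFiber K l α ↔ ∀ i, Q.bmom x i = l i • Q.Eb α K i := by
  constructor
  · intro h i
    ext ⟨p, u⟩ ⟨q, v⟩
    by_cases hpq : p = i ∧ q = i
    · obtain ⟨rfl, rfl⟩ := hpq
      rw [bmom_self, h q]
      simp [Eb, Matrix.diagonal_apply, Matrix.one_apply]
    · rw [bmom_ne _ _ _ _ _ hpq]
      rw [Matrix.smul_apply, Eb, Matrix.diagonal_apply]
      split_ifs with h1 h2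
      · exact absurd ⟨h2, by rw [← h2]; exact (congrArg Sigma.fst h1).symm⟩ hpq
      · simp
      · simp
  · intro h i
    ext u v
    rw [← bmom_self, h i]
    simp [Eb, Matrix.diagonal_apply, Matrix.one_apply]

theorem sigma_cast (p : Q.JJ α) (i : Q.I) (h : p.1 = i) :
    (⟨i, Fin.cast (congrArg α h) p.2⟩ : Q.JJ α) = p := by
  subst h; rfl

theorem cycTr_eq (x : Q.Rep K α) (p : Q.Cyc) :
    Q.cycTr K α p x = (List.ofFn fun k => Q.blk α x (p.ar k)).prod.trace := by
  rw [trace_ofFn, cycTr]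
  refine Fintype.sum_of_injective (fun c k => (⟨Q.dh (p.ar k), c k⟩ : Q.JJ α)) ?_ _ _ ?_ ?_
  · intro c c' h
    funext k
    have := congrFun h k
    simpa using this
  · intro c hc
    by_contra hne
    apply hc
    have h1 : ∀ k, (c k).1 = Q.dh (p.ar k) := by
      intro k
      by_contra hk
      apply hne
      apply Finset.prod_eq_zero (Finset.mem_univ k)
      apply Q.blk_ne
      rintro ⟨h, -⟩
      exact hk h
    refine ⟨fun k => Fin.cast (congrArg α (h1 k)) (c k).2, ?_⟩
    funext k
    exact Q.sigma_cast (c k) _ (h1 k)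
  · intro c
    refine Finset.prod_congr rfl fun k _ => ?_
    simp [blk, p.compat k]

theorem trace_ne (x : Q.Rep K α) (n : ℕ) (f : Fin (n + 1) → Q.DA)
    (h : ¬ ∀ k, Q.dt (f k) = Q.dh (f (k + 1))) :
    (List.ofFn fun k => Q.blk α x (f k)).prod.trace = 0 := by
  push Not at h
  obtain ⟨k, hk⟩ := h
  rw [trace_ofFn]
  refine Finset.sum_eq_zero fun c _ => ?_
  by_contra hne
  have h1 : ∀ k, (c k).1 = Q.dh (f k) ∧ (c (k + 1)).1 = Q.dt (f k) := by
    intro k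
    by_contra hk
    apply hne
    apply Finset.prod_eq_zero (Finset.mem_univ k)
    exact Q.blk_ne _ _ _ _ hk
  exact hk ((h1 k).2.symm.trans (h1 (k + 1)).1)

theorem trace_rot {R J : Type*} [CommRing R] [Fintype J] [DecidableEq J] (n : ℕ)
    (f : Fin (n + 1) → Matrix J J R) (m : Fin (n + 1)) :
    (List.ofFn fun k => f (k + m)).prod.trace = (List.ofFn f).prod.trace := by
  rw [trace_ofFn, trace_ofFn]
  refine Fintype.sum_equiv (Equiv.arrowCongr (Equiv.addRight m) (Equiv.refl J)) _ _ ?_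
  intro c
  refine Fintype.prod_equiv (Equiv.addRight m) _ _ ?_
  intro k
  simp [Equiv.arrowCongr, add_sub_assoc, add_right_comm]

theorem bd_mul {R : Type*} [CommRing R] (g h : ∀ i, Matrix (Fin (α i)) (Fin (α i)) R) :
    Q.bd α g * Q.bd α h = Q.bd α fun i => g i * h i :=
  (Matrix.blockDiagonal'_mul _ _).symm

theorem bd_one {R : Type*} [CommRing R] : Q.bd α (fun i => (1 : Matrix (Fin (α i)) (Fin (α i)) R)) = 1 :=
  Matrix.blockDiagonal'_one

theorem bd_blk (g h : ∀ i, Matrix (Fin (α i)) (Fin (α i)) K) (x : Q.Rep K α) (a : Q.DA) :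
    Q.bd α g * Q.blk α x a * Q.bd α h =
      Q.blk α (fun a => g (Q.dh a) * x a * h (Q.dt a) : Q.Rep K α) a := by
  ext ⟨i, u⟩ ⟨j, v⟩
  have hL : (Q.bd α g * Q.blk α x a * Q.bd α h) ⟨i, u⟩ ⟨j, v⟩ =
      ∑ w', (∑ w, g i u w * Q.blk α x a ⟨i, w⟩ ⟨j, w'⟩) * h j w' v := by
    rw [Matrix.mul_apply, Fintype.sum_sigma, Finset.sum_eq_single j]
    · refine Finset.sum_congr rfl fun w' _ => ?_
      rw [bd, bd, Matrix.blockDiagonal'_apply_eq, Matrix.mul_apply, Fintype.sum_sigma,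
        Finset.sum_eq_single i]
      · refine congrArg₂ _ (Finset.sum_congr rfl fun w _ => ?_) rfl
        rw [Matrix.blockDiagonal'_apply_eq]
      · intro b _ hb
        refine Finset.sum_eq_zero fun w _ => ?_
        rw [Matrix.blockDiagonal'_apply_ne _ _ _ (Ne.symm hb), zero_mul]
      · simp
    · intro b _ hb
      refine Finset.sum_eq_zero fun w _ => ?_
      rw [bd, bd, Matrix.blockDiagonal'_apply_ne _ _ _ hb, mul_zero]
    · simp
  rw [hL]
  by_cases hij : i = Q.dh a ∧ j = Q.dt a
  · obtain ⟨rfl, rfl⟩ := hij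
    refine Eq.trans ?_ (Q.blk_self _ a u v).symm
    simp only [blk_self, Matrix.mul_apply]
  · refine Eq.trans ?_ (Q.blk_ne _ a ⟨i, u⟩ ⟨j, v⟩ hij).symm
    refine Finset.sum_eq_zero fun w' _ => ?_
    rw [Finset.sum_eq_zero, zero_mul]
    intro w _
    rw [Q.blk_ne x a ⟨i, w⟩ ⟨j, w'⟩ hij, mul_zero]

theorem blk_glAct (g : Q.Gl K α) (x : Q.Rep K α) (a : Q.DA) :
    Q.blk α (Q.glAct K α g x) a = Q.bd α (fun i => (g i).1) * Q.blk α x a *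
      Q.bd α (fun i => ((g i)⁻¹).1) := by
  rw [bd_blk]; rfl

theorem bd_inv (g : Q.Gl K α) :
    Q.bd α (fun i => ((g i)⁻¹).1) * Q.bd α (fun i => (g i).1) = 1 := by
  rw [bd_mul, ← bd_one]
  congr 1
  funext i
  rw [← Units.val_mul, inv_mul_cancel, Units.val_one]

theorem bd_Eb (g : ∀ i, Matrix (Fin (α i)) (Fin (α i)) K) (i : Q.I) :
    Q.bd α g * Q.Eb α K i = Q.Eb α K i * Q.bd α g := by
  ext p q
  rw [Eb, Matrix.mul_diagonal, Matrix.diagonal_mul]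
  by_cases h : p.1 = q.1
  · rw [h, mul_comm]
  · rw [bd, Matrix.blockDiagonal'_apply, dif_neg h]; simp

theorem glAct_mem (l : Q.I → K) (g : Q.Gl K α) (x : Q.Rep K α) (hx : x ∈ Q.MomentFiber K l α) :
    Q.glAct K α g x ∈ Q.MomentFiber K l α := by
  rw [mem_fiber_iff] at hx ⊢
  intro i
  have h1 : Q.bmom (Q.glAct K α g x) i = Q.bd α (fun i => (g i).1) * Q.bmom x i *
      Q.bd α (fun i => ((g i)⁻¹).1) := by
    rw [bmom, bmom, Finset.mul_sum, Finset.sum_mul]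
    refine Finset.sum_congr rfl fun d _ => ?_
    rw [blk_glAct, blk_glAct, Matrix.mul_smul, Matrix.smul_mul]
    congr 1
    set G := Q.bd α (fun i => (g i).1)
    set G' := Q.bd α (fun i => ((g i)⁻¹).1)
    calc G * Q.blk α x d * G' * (G * Q.blk α x d.swap * G') =
          G * Q.blk α x d * (G' * G) * Q.blk α x d.swap * G' := by simp only [mul_assoc]
      _ = _ := by rw [Q.bd_inv g, mul_one]; simp only [mul_assoc]
  rw [h1, hx i, Matrix.mul_smul, Matrix.smul_mul, bd_Eb, mul_assoc,
    mul_eq_one_comm.1 (Q.bd_inv g), mul_one]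

end FinQuiver


namespace FinQuiver

variable (Q : FinQuiver) {K : Type} [Field K] {α : Q.I → ℕ}

section pts
variable {W : Set (Q.Rep K α)}

def BX (W : Set (Q.Rep K α)) (a : Q.DA) : Matrix (Q.JJ α) (Q.JJ α) (↥W → K) :=
  Matrix.of fun p q v => Q.blk α v.1 a p q

def evm (v : ↥W) : Matrix (Q.JJ α) (Q.JJ α) (↥W → K) →+* Matrix (Q.JJ α) (Q.JJ α) K :=
  (Pi.evalRingHom (fun _ : ↥W => K) v).mapMatrix

theorem evm_ext (M N : Matrix (Q.JJ α) (Q.JJ α) (↥W → K)) (h : ∀ v, Q.evm v M = Q.evm v N) :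
    M = N := by
  ext p q v
  exact congrFun (congrFun (h v) p) q

theorem evm_BX (v : ↥W) (a : Q.DA) : Q.evm v (Q.BX W a) = Q.blk α v.1 a := rfl

theorem evm_Eb (v : ↥W) (i : Q.I) : Q.evm v (Q.Eb α (↥W → K) i) = Q.Eb α K i := by
  ext p q
  simp only [evm, RingHom.mapMatrix_apply, Matrix.map_apply, Eb, Matrix.diagonal_apply]
  split_ifs <;> simp

theorem evm_smul (v : ↥W) (c : K) (M : Matrix (Q.JJ α) (Q.JJ α) (↥W → K)) :
    Q.evm v (c • M) = c • Q.evm v M := rfl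

theorem evm_trace (v : ↥W) (M : Matrix (Q.JJ α) (Q.JJ α) (↥W → K)) :
    (Q.evm v M).trace = M.trace v := by
  simp only [Matrix.trace, Finset.sum_apply]
  rfl

theorem trace_word (l : List Q.DA) :
    (l.map (Q.BX W)).prod.trace = fun v => (l.map (Q.blk α v.1)).prod.trace := by
  funext v
  rw [← evm_trace, map_list_prod, List.map_map]
  rfl

end pts

theorem cyc_word (W : Set (Q.Rep K α)) (p : Q.Cyc) :
    (fun x : ↥W => Q.cycTr K α p x.1) = ((List.ofFn p.ar).map (Q.BX W)).prod.trace := by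
  rw [trace_word]
  funext v
  rw [cycTr_eq, List.map_ofFn]
  rfl

theorem word_v0 (W : Set (Q.Rep K α)) (v0 : Q.I) (l : List Q.DA)
    (hl : ∃ d ∈ l, Q.dh d = v0 ∨ Q.dt d = v0) :
    (l.map (Q.BX W)).prod.trace ∈ Algebra.adjoin K {f : ↥W → K |
        ∃ p : Q.Cyc, Q.dh (p.ar 0) = v0 ∧ f = fun x => Q.cycTr K α p x.1} := by
  obtain ⟨n, f, rfl⟩ := list_eq_ofFn l (by rintro rfl; simp at hl)
  by_cases hc : ∀ k, Q.dt (f k) = Q.dh (f (k + 1))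
  · obtain ⟨m, hm⟩ : ∃ m, Q.dh (f m) = v0 := by
      obtain ⟨d, hd, h⟩ := hl
      obtain ⟨k, rfl⟩ := (List.mem_ofFn' _ _).1 hd
      rcases h with h | h
      · exact ⟨k, h⟩
      · exact ⟨k + 1, by rw [← hc, h]⟩
    apply Algebra.subset_adjoin
    refine ⟨⟨n, fun k => f (k + m), fun k => by rw [hc, add_right_comm]⟩, by simpa using hm, ?_⟩
    rw [cyc_word]
    simp only [List.map_ofFn]
    exact (trace_rot n (Q.BX W ∘ f) m).symm
  · have : ((List.ofFn f).map (Q.BX W)).prod.trace = 0 := by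
      rw [trace_word]
      funext v
      rw [List.map_ofFn]
      exact Q.trace_ne v.1 n f hc
    rw [this]
    exact Subalgebra.zero_mem _

theorem cyc_mem_inv (l : Q.I → K) (p : Q.Cyc) :
    (fun x : ↥(Q.MomentFiber K l α) => Q.cycTr K α p x.1) ∈ Q.InvRing K l α := by
  refine ⟨?_, ?_⟩
  · have : (fun x : ↥(Q.MomentFiber K l α) => Q.cycTr K α p x.1) =
        ∑ c : ∀ i : Fin (p.n + 1), Fin (α (Q.dh (p.ar i))),
          ∏ i : Fin (p.n + 1), fun x : ↥(Q.MomentFiber K l α) => x.1 (p.ar i) (c i)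
            (Fin.cast (congrArg α (p.compat i)).symm (c (i + 1))) := by
      funext x
      simp only [cycTr, Finset.sum_apply, Finset.prod_apply]
    rw [this]
    refine Subalgebra.sum_mem _ fun c _ => Subalgebra.prod_mem _ fun i _ => ?_
    refine ⟨MvPolynomial.X (⟨p.ar i, c i, Fin.cast (congrArg α (p.compat i)).symm (c (i + 1))⟩ :
      Q.Coords α), ?_⟩
    exact MvPolynomial.aeval_X _ _
  · rintro x y ⟨g, hg⟩
    simp only
    rw [hg, cycTr_eq, cycTr_eq]
    have := prod_conj (Q.blk α x.1) _ _ (Q.bd_inv g) (List.ofFn p.ar)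
    simp only [List.map_ofFn] at this
    rw [← Function.comp_def (Q.blk α x.1), ← this]
    congr 3
    funext k
    exact (Q.blk_glAct g x.1 (p.ar k)).symm

def ratRho (α : Q.I → ℕ) : (∀ i, Matrix.GeneralLinearGroup (Fin (α i)) ℚ) →*
    Matrix (Q.JJ α) (Q.JJ α) ℚ where
  toFun g := Q.bd α fun i => (g i).1
  map_one' := Q.bd_one
  map_mul' g h := by rw [bd_mul]; rfl

theorem ratRho_surj (M : Matrix (Q.JJ α) (Q.JJ α) ℚ)
    (hM : ∀ i j : Q.JJ α, i.1 ≠ j.1 → M i j = 0) (hdet : M.det ≠ 0) : ∃ g, Q.ratRho α g = M := by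
  let B : ∀ i, Matrix (Fin (α i)) (Fin (α i)) ℚ := fun i => Matrix.of fun a b => M ⟨i, a⟩ ⟨i, b⟩
  have hB : Q.bd α B = M := by
    ext ⟨i, a⟩ ⟨j, b⟩
    by_cases h : i = j
    · subst h
      rw [bd, Matrix.blockDiagonal'_apply_eq]; rfl
    · rw [bd, Matrix.blockDiagonal'_apply_ne _ _ _ h, hM _ _ h]
  have hinv : M * M⁻¹ = 1 := Matrix.mul_nonsing_inv _ (isUnit_iff_ne_zero.2 hdet)
  have hBi : ∀ i, (B i).det ≠ 0 := by
    intro i h0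
    have h1 : B i * (Matrix.of fun a b => M⁻¹ ⟨i, a⟩ ⟨i, b⟩) = 1 := by
      ext a b
      have := congrFun (congrFun hinv ⟨i, a⟩) ⟨i, b⟩
      rw [Matrix.mul_apply, Fintype.sum_sigma, Finset.sum_eq_single i] at this
      · rw [Matrix.mul_apply]
        simp only [Matrix.of_apply, B]
        rw [this]
        simp [Matrix.one_apply]
      · intro j _ hj
        refine Finset.sum_eq_zero fun c _ => ?_
        rw [hM _ _ (Ne.symm hj), zero_mul]
      · simp
    have := congrArg Matrix.det h1
    rw [Matrix.det_mul, h0] at this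
    simp at this
  refine ⟨fun i => Matrix.GeneralLinearGroup.mkOfDetNeZero (B i) (hBi i), ?_⟩
  exact hB

theorem pi_aeval {σ V : Type} (φ : σ → V → K) (v : V) (F : MvPolynomial σ K) :
    (MvPolynomial.aeval φ F) v = MvPolynomial.aeval (fun c => φ c v) F :=
  MvPolynomial.comp_aeval_apply φ (Pi.evalAlgHom K (fun _ => K) v) F

set_option maxHeartbeats 1000000 in
theorem inv_mem [CharZero K] (l : Q.I → K) (S : Subalgebra K (↥(Q.MomentFiber K l α) → K))
    (hS : ∀ w : List Q.DA, w ≠ [] → (w.map (Q.BX (Q.MomentFiber K l α))).prod.trace ∈ S)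
    (f : ↥(Q.MomentFiber K l α) → K) (hf : f ∈ Q.InvRing K l α) : f ∈ S := by
  obtain ⟨⟨F, hF⟩, hinv⟩ := hf
  have hF : MvPolynomial.aeval (fun c : Q.Coords α => fun v : ↥(Q.MomentFiber K l α) =>
    v.1 c.1 c.2.1 c.2.2) F = f := hF
  let e : Q.Coords α → Q.DA × Q.JJ α × Q.JJ α := fun c => (c.1, ⟨Q.dh c.1, c.2.1⟩, ⟨Q.dt c.1, c.2.2⟩)
  have hval : ∀ (x : Q.Rep K α) (c : Q.Coords α),
      Q.blk α x (e c).1 (e c).2.1 (e c).2.2 = x c.1 c.2.1 c.2.2 := fun x c => Q.blk_self x _ _ _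
  have hpt : ∀ v : ↥(Q.MomentFiber K l α), f v =
      MvPolynomial.aeval (fun c : Q.Coords α => v.1 c.1 c.2.1 c.2.2) F := by
    intro v
    rw [← hF]
    exact pi_aeval _ v F
  have hfF : f = MvPolynomial.aeval (fun c : Q.DA × Q.JJ α × Q.JJ α =>
      Q.BX (Q.MomentFiber K l α) c.1 c.2.1 c.2.2) (MvPolynomial.rename e F) := by
    rw [MvPolynomial.aeval_rename, ← hF]
    congr 2
    funext c v
    exact (hval v.1 c).symm
  rw [hfF]
  let L : Subsemigroup (Matrix (Q.JJ α) (Q.JJ α) (↥(Q.MomentFiber K l α) → K)) :=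
    { carrier := {M | M = 0 ∨ ∃ w : List Q.DA, w ≠ [] ∧
        M = (w.map (Q.BX (Q.MomentFiber K l α))).prod}
      mul_mem' := by
        rintro M N (rfl | ⟨w, hw, rfl⟩) hN
        · left; simp
        · rcases hN with rfl | ⟨w', hw', rfl⟩
          · left; simp
          · right
            exact ⟨w ++ w', by simp [hw], by rw [List.map_append, List.prod_append]⟩ }
  refine FFT.fft_main (Q.BX (Q.MomentFiber K l α)) (fun p : Q.JJ α => p.1) (Q.ratRho α) ?_ ?_ S L
    ?_ ?_ _ ?_
  · intro g i j hij
    exact Matrix.blockDiagonal'_apply_ne (fun k => (g k).1) i.2 j.2 hij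
  · exact Q.ratRho_surj
  · rintro M (rfl | ⟨w, hw, rfl⟩)
    · simp
    · exact hS w hw
  · intro d i
    by_cases hdi : Q.dh d = i
    · right
      refine ⟨[d], by simp, ?_⟩
      ext p q v
      simp only [Matrix.of_apply, List.map_cons, List.map_nil, List.prod_cons, List.prod_nil, mul_one]
      split_ifs with h
      · rfl
      · exact (Q.blk_ne v.1 d p q fun h' => h (h'.1.trans hdi)).symm
    · left
      ext p q v
      simp only [Matrix.of_apply]
      split_ifs with h
      · exact Q.blk_ne v.1 d p q fun h' => hdi (h'.1.symm.trans h)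
      · rfl
  · intro g
    rw [← hfF]
    funext v
    let gK : Q.Gl K α := fun i => Matrix.GeneralLinearGroup.map (algebraMap ℚ K) (g i)
    have h1 := hinv v ⟨_, Q.glAct_mem l gK v.1 v.2⟩ ⟨gK, rfl⟩
    rw [h1, hpt, MvPolynomial.aeval_rename]
    rw [pi_aeval]
    congr 2
    funext c
    refine (hval _ c).symm.trans ?_
    rw [blk_glAct]
    have h3 : ∀ g : ∀ i, Matrix.GeneralLinearGroup (Fin (α i)) ℚ,
        Q.evm v ((Q.ratRho α g).map (algebraMap ℚ (↥(Q.MomentFiber K l α) → K))) =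
        Q.bd α (fun i => (Matrix.GeneralLinearGroup.map (algebraMap ℚ K) (g i)).1) := by
      intro g
      ext p q
      simp only [evm, RingHom.mapMatrix_apply, Matrix.map_apply, ratRho, MonoidHom.coe_mk,
        OneHom.coe_mk, bd, Matrix.blockDiagonal'_apply]
      split_ifs with h
      · rfl
      · simp
    have h4 : ∀ i, (gK i)⁻¹ = Matrix.GeneralLinearGroup.map (algebraMap ℚ K) (g⁻¹ i) := by
      intro i
      simp [gK]
    simp only [h4]
    rw [← h3, ← h3, ← evm_BX, ← map_mul, ← map_mul]
    rfl

end FinQuiver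


namespace FinQuiver

variable (Q : FinQuiver)

theorem dsum (δ : Q.I → ℕ) (h : ∀ i, Q.bil (Q.toZ δ) (Q.ev i) = 0) (i : Q.I) :
    ∑ d : Q.DA with Q.dh d = i, δ (Q.dh d.swap) = 2 * δ i := by
  have h1 := h i
  have h2 : ∑ j, 2 * Q.toZ δ j * Q.ev i j = 2 * (δ i : ℤ) := by
    simp [ev, toZ]
  have h3 : ∑ a : Q.DA, Q.toZ δ (Q.dh a) * Q.ev i (Q.dt a) =
      ((∑ d : Q.DA with Q.dh d = i, δ (Q.dh d.swap) : ℕ) : ℤ) := by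
    rw [Finset.sum_filter, ← (Equiv.sumComm Q.A Q.A).sum_comp]
    push_cast
    refine Finset.sum_congr rfl fun a _ => ?_
    simp only [Equiv.sumComm_apply, dt_swap, ev, toZ]
    split_ifs <;> simp
  rw [bil, h2, h3] at h1
  omega

theorem conn_all (hQ : Q.Connected) (T : Set Q.I) (hT : T.Nonempty)
    (h : ∀ d : Q.DA, Q.dh d ∈ T → Q.dh d.swap ∈ T) (v : Q.I) : v ∈ T := by
  obtain ⟨u, hu⟩ := hT
  have := hQ u v
  induction this with
  | refl => exact hu
  | tail _ hab ih =>
    obtain ⟨a, ⟨rfl, rfl⟩ | ⟨rfl, rfl⟩⟩ := hab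
    · exact h (Sum.inl a) ih
    · exact h (Sum.inr a) ih

theorem dpos (hQ : Q.Connected) (δ : Q.I → ℕ) (h : ∀ i, Q.bil (Q.toZ δ) (Q.ev i) = 0)
    (h0 : Q.toZ δ ≠ 0) (i : Q.I) : 0 < δ i := by
  by_contra hi
  apply h0
  funext v
  have : v ∈ {j | δ j = 0} := by
    refine Q.conn_all hQ _ ⟨i, by simpa using hi⟩ ?_ v
    intro d hd
    have hs := Q.dsum δ h (Q.dh d)
    have hd' : δ (Q.dh d) = 0 := hd
    rw [hd', mul_zero, Finset.sum_eq_zero_iff] at hs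
    exact hs d (by simp)
  have hv : δ v = 0 := this
  simp [toZ, hv]

end FinQuiver


/-- for an extended Dynkin quiver with minimal positive imaginary
root `δ`, extending vertex `0` (i.e. `δ_0 = 1`) and `λ·δ = 0`, the invariant ring
`K[μ_δ^{-1}(λ)]^{G(δ)}` is generated as a `K`-algebra by the trace functions of
oriented cycles in `Q̄` which start and end at the extending vertex. -/
theorem stmt13 (Q : FinQuiver) (K : Type) [Field K] [CharZero K] [IsAlgClosed K]
    (l : Q.I → K) (δ : Q.I → ℕ) (v0 : Q.I)
    (hQ : Q.IsExtDynkin) (hδ : Q.IsMinImag (Q.toZ δ)) (hext : δ v0 = 1)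
    (hl : Q.pair K l (Q.toZ δ) = 0) :
    Q.InvRing K l δ = Algebra.adjoin K
      {f : ↥(Q.MomentFiber K l δ) → K |
        ∃ p : Q.Cyc, Q.dh (p.ar 0) = v0 ∧ f = fun x => Q.cycTr K δ p x.1} := by
  apply le_antisymm
  · intro f hf
    refine Q.inv_mem l _ ?_ f hf
    intro w hw
    refine trace_reduction Q.dh Sum.swap (Q.eps K) δ v0 (Q.BX (Q.MomentFiber K l δ))
      (Q.Eb δ (↥(Q.MomentFiber K l δ) → K)) l (Subalgebra.toSubmodule (Algebra.adjoin K
      {f : ↥(Q.MomentFiber K l δ) → K |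
        ∃ p : Q.Cyc, Q.dh (p.ar 0) = v0 ∧ f = fun x => Q.cycTr K δ p x.1}))
      Sum.swap_swap ?_ ?_ ?_ (Q.dpos hQ.1 δ hδ.2.2.1 hδ.2.1) (Q.dsum δ hδ.2.2.1) hext
      (fun T hT h => Q.conn_all hQ.1 T hT h v0) ?_ ?_ ?_ ?_ ?_ ?_ _ w hw rfl
    · rintro (a | a) <;> simp
    · rintro (a | a) <;> simp [FinQuiver.eps]
    · rintro (a | a) <;> simp [FinQuiver.eps]
    · intro a b hab
      rw [FinQuiver.dh_swap] at hab
      apply Q.evm_ext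
      intro v
      rw [map_mul, map_zero, Q.evm_BX, Q.evm_BX, Q.blk_mul_zero _ _ _ hab]
    · intro i
      apply Q.evm_ext
      intro v
      rw [map_sum, Q.evm_smul, Q.evm_Eb, ← (Q.mem_fiber_iff l v.1).1 v.2 i, FinQuiver.bmom]
      refine Finset.sum_congr rfl fun d _ => ?_
      rw [Q.evm_smul, map_mul, Q.evm_BX, Q.evm_BX]
    · intro i d
      apply Q.evm_ext
      intro v
      rw [map_mul, Q.evm_BX, Q.evm_Eb, Q.Eb_mul]
      split_ifs
      · rfl
      · rw [map_zero]
    · intro i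
      rw [Q.trace_Eb]
      exact natCast_mem (Algebra.adjoin K _) (δ i)
    · intro d hd
      rw [FinQuiver.dh_swap] at hd
      funext v
      rw [← Q.evm_trace, Q.evm_BX, Q.trace_blk _ _ hd]
      rfl
    · intro w hw
      simp only [FinQuiver.dh_swap] at hw
      exact Q.word_v0 _ v0 w hw
  · apply Algebra.adjoin_le
    rintro f ⟨p, _, rfl⟩
    exact Q.cyc_mem_inv l p

end
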